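/- arXiv:2301.09101 — 4 statements merged into one kernel-verified Lean document; each statement's English description precedes it below -/
import Mathlib

section
/- Let p be a prime and G a non-abelian finite p-group of order p^n and nilpotency class c, with derived subgroup of order p^k and minimal number of generators d. Then the order of the Schur multiplier M(G) satisfies |M(G)| ≤ p^{(1/2)(d-1)(n+k) − Σ_{i=2}^{min(d,c)} (d−i)}. -/
/-- The Schur multiplier of a group `G`: the second cohomology group `H²(G, ℂˣ)`
of `G` with coefficients in `ℂˣ` (with trivial `G`-action), as in the paper. -/
noncomputable def schurMultiplier (G : Type) [Group G] : Type :=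
  groupCohomology (Rep.trivial ℤ G (Additive ℂˣ)) 2

/-!
Evaluation of cocycles is itself a 2-cocycle of `G`, with values in the characters of `Z²(G, ℂˣ)`.
Let `E` be the corresponding central extension, with kernel `A`. A character of `A` that is trivial
on `A ∩ E'` extends to `E` because `ℂˣ` is divisible, and its restriction to a section of `E → G`
trivializes the associated cocycle. Hence `M(G)` embeds in the character group of `A ∩ E'`, and
`|M(G)| |G'| ≤ |E'|`.

To bound `|E'|`, choose `d` elements `x i` that generate `E` together with `A`. The quotient
`γ_{m+1} / γ_{m+2}` is generated by the images of the homomorphisms `w ↦ ⁅w, x i⁆` on `γ_m`, whose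
kernels contain `γ_{m+1}` and `γ_m ∩ A`. For `m = 1` the kernel, modulo the images for the smaller
indices, also contains every `x j` with `j ≤ i`. Multiplying the bounds obtained from an ordering of
the generators and from the reversed one gives `|γ_2 / γ_3|² ∣ |G / G'| ^ (d - 1)`. For
`2 ≤ m ≤ c` choose a left-normed commutator `u` of weight `m` outside `γ_{m+1} A`. By the Hall–Witt
identity `u` lies in the kernel for every generator that does not occur in it, modulo the images
for those that do. There are at least `d - m` such generators, and each of them gains a factor `p`.
-/

section CommutatorModulo

open Subgroup
open scoped commutatorElement

variable {E : Type*} [Group E] {D H K L : Subgroup E}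

theorem commutator_le_iff_le_comap_centralizer [D.Normal] :
    ⁅H, L⁆ ≤ D ↔ H ≤
      (centralizer (L.map (QuotientGroup.mk' D) : Set (E ⧸ D))).comap (QuotientGroup.mk' D) := by
  rw [← map_le_iff_le_comap, ← commutator_eq_bot_iff_le_centralizer, ← map_commutator,
    Subgroup.map_eq_bot_iff, QuotientGroup.ker_mk']

theorem sup_commutator_le_iff [D.Normal] : ⁅H ⊔ K, L⁆ ≤ D ↔ ⁅H, L⁆ ≤ D ∧ ⁅K, L⁆ ≤ D := by
  simp only [commutator_le_iff_le_comap_centralizer, sup_le_iff]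

theorem closure_commutator_closure_le_iff [D.Normal] {S T : Set E} :
    ⁅closure S, closure T⁆ ≤ D ↔ ∀ x ∈ S, ∀ y ∈ T, ⁅x, y⁆ ∈ D := by
  refine ⟨fun h x hx y hy =>
    h (commutator_mem_commutator (subset_closure hx) (subset_closure hy)), fun h => ?_⟩
  rw [commutator_le_iff_le_comap_centralizer, MonoidHom.map_closure, centralizer_closure,
    closure_le]
  intro x hx
  rw [SetLike.mem_coe, mem_comap, mem_centralizer_iff_commutator_eq_one]
  rintro _ ⟨y, hy, rfl⟩
  rw [← map_commutatorElement, ← MonoidHom.mem_ker, QuotientGroup.ker_mk', ← inv_mem_iff,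
    commutatorElement_inv]
  exact h x hx y hy

theorem commutator_le_of_le_center (h : H ≤ center E) : ⁅H, L⁆ ≤ D :=
  (commutator_mono h le_rfl).trans_eq (commutator_center_left L) |>.trans bot_le

theorem commutator_commutator_le_of_rotate [D.Normal] (h₁ : ⁅⁅K, L⁆, H⁆ ≤ D)
    (h₂ : ⁅⁅L, H⁆, K⁆ ≤ D) : ⁅⁅H, K⁆, L⁆ ≤ D := by
  rw [← QuotientGroup.ker_mk' D, ← Subgroup.map_eq_bot_iff, map_commutator, map_commutator]
    at h₁ h₂ ⊢
  exact commutator_commutator_eq_bot_of_rotate h₁ h₂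

theorem normal_sup_of_commutator_top_le [D.Normal] (h : ⁅K, (⊤ : Subgroup E)⁆ ≤ D) :
    (D ⊔ K).Normal := by
  rw [← commutator_top_right_le_iff]
  exact (sup_commutator_le_iff.2 ⟨commutator_le_left D ⊤, h⟩).trans le_sup_left

theorem sup_commutator_sup [D.Normal] (h : ⁅⁅H, (⊤ : Subgroup E)⁆, (⊤ : Subgroup E)⁆ ≤ D) :
    D ⊔ ⁅H, K ⊔ L⁆ = D ⊔ ⁅H, K⁆ ⊔ ⁅H, L⁆ := by
  have hKL : ⁅⁅H, K⁆ ⊔ ⁅H, L⁆, ⊤⁆ ≤ D :=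
    (commutator_mono (sup_le (commutator_mono le_rfl le_top) (commutator_mono le_rfl le_top))
      le_rfl).trans h
  have := normal_sup_of_commutator_top_le hKL
  rw [sup_assoc]
  refine le_antisymm (sup_le le_sup_left ?_) (sup_le_sup_left (sup_le ?_ ?_) _)
  · rw [commutator_comm, sup_commutator_le_iff, commutator_comm K, commutator_comm L]
    exact ⟨le_sup_left.trans le_sup_right, le_sup_right.trans le_sup_right⟩
  · exact commutator_mono le_rfl le_sup_left
  · exact commutator_mono le_rfl le_sup_right

theorem map_mk'_le_center_iff [D.Normal] :
    K.map (QuotientGroup.mk' D) ≤ center (E ⧸ D) ↔ ⁅K, (⊤ : Subgroup E)⁆ ≤ D := by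
  rw [← commutator_top_right_eq_bot_iff_le_center,
    ← map_top_of_surjective _ (QuotientGroup.mk'_surjective D), ← map_commutator,
    Subgroup.map_eq_bot_iff, QuotientGroup.ker_mk']

theorem commute_mk_of_mem_commutator_zpowers [D.Normal] {x w : E} (g : E ⧸ D)
    (h : ⁅⁅H, zpowers x⁆, (⊤ : Subgroup E)⁆ ≤ D) (hw : w ∈ H) : Commute g (⁅w, x⁆ : E) :=
  mem_center_iff.1 (map_mk'_le_center_iff.2 h <|
    mem_map_of_mem _ <| commutator_mem_commutator hw <| mem_zpowers x) g

/-- The homomorphism `w ↦ ⁅w, x⁆` from `H` to `E ⧸ D`, for `x` such that `⁅H, zpowers x⁆` is central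
modulo `D`. -/
def commutatorHom [D.Normal] {x : E} (h : ⁅⁅H, zpowers x⁆, (⊤ : Subgroup E)⁆ ≤ D) : H →* E ⧸ D where
  toFun w := (⁅(w : E), x⁆ : E)
  map_one' := by simp
  map_mul' w w' := by
    have hcomm (g : E ⧸ D) : Commute g (⁅(w' : E), x⁆ : E) :=
      commute_mk_of_mem_commutator_zpowers g h w'.2
    rw [coe_mul, commutatorElement_mul_left_eq_conj_mul]
    simp only [QuotientGroup.mk_mul, QuotientGroup.mk_inv]
    rw [(hcomm w).eq, mul_inv_cancel_right, (hcomm _).eq]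

theorem relIndex_sup_commutator_zpowers_dvd [D.Normal] {x : E}
    (h : ⁅⁅H, zpowers x⁆, (⊤ : Subgroup E)⁆ ≤ D) {W : Subgroup E} (hW : ∀ w ∈ W, ⁅w, x⁆ ∈ D) :
    D.relIndex (D ⊔ ⁅H, zpowers x⁆) ∣ W.relIndex H := by
  have : (commutatorHom h).range.Normal := by
    constructor
    rintro _ ⟨w, rfl⟩ g
    exact ⟨w, (commute_mk_of_mem_commutator_zpowers g h w.2).mul_inv_cancel.symm⟩
  have hle : D ⊔ ⁅H, zpowers x⁆ ≤ (commutatorHom h).range.comap (QuotientGroup.mk' D) := by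
    refine sup_le (QuotientGroup.le_comap_mk' D _) ?_
    have hclosure : ⁅closure (H : Set E), closure {x}⁆ ≤
        (commutatorHom h).range.comap (QuotientGroup.mk' D) := by
      rw [closure_commutator_closure_le_iff]
      rintro w hw _ rfl
      exact ⟨⟨w, hw⟩, rfl⟩
    rwa [closure_eq, ← zpowers_eq_closure] at hclosure
  calc D.relIndex (D ⊔ ⁅H, zpowers x⁆)
      = Nat.card ((D ⊔ ⁅H, zpowers x⁆).map (QuotientGroup.mk' D)) := by
        rw [← relIndex_ker, QuotientGroup.ker_mk']
    _ ∣ Nat.card (commutatorHom h).range := card_dvd_of_le (map_le_iff_le_comap.2 hle)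
    _ = (commutatorHom h).ker.index := (index_ker _).symm
    _ ∣ W.relIndex H := index_dvd_of_le fun w hw => (QuotientGroup.eq_one_iff _).2 (hW _ hw)

theorem relIndex_sup_commutator_closure_dvd {ι : Type*} [LinearOrder ι] [D.Normal]
    (h : ⁅⁅H, (⊤ : Subgroup E)⁆, (⊤ : Subgroup E)⁆ ≤ D) (x : ι → E) (W : ι → Subgroup E)
    (s : Finset ι)
    (hW : ∀ i ∈ s, ∀ w ∈ W i, ⁅w, x i⁆ ∈ D ⊔ ⁅H, closure (x '' {j | j ∈ s ∧ j < i})⁆) :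
    D.relIndex (D ⊔ ⁅H, closure (x '' s)⁆) ∣ ∏ i ∈ s, (W i).relIndex H := by
  induction s using Finset.induction_on_max with
  | empty => simp
  | insert i s hi ih =>
    have his : i ∉ s := fun hmem => lt_irrefl i (hi i hmem)
    set D' := D ⊔ ⁅H, closure (x '' s)⁆
    have : D'.Normal := normal_sup_of_commutator_top_le <|
      (commutator_mono (commutator_mono le_rfl le_top) le_rfl).trans h
    have hsplit : D ⊔ ⁅H, closure (x '' (insert i s : Finset ι))⁆ = D' ⊔ ⁅H, zpowers (x i)⁆ := by
      rw [Finset.coe_insert, Set.insert_eq, Set.union_comm, Set.image_union, Subgroup.closure_union,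
        sup_commutator_sup h, Set.image_singleton, zpowers_eq_closure]
    have hx : ⁅⁅H, zpowers (x i)⁆, (⊤ : Subgroup E)⁆ ≤ D' :=
      ((commutator_mono (commutator_mono le_rfl le_top) le_rfl).trans h).trans le_sup_left
    rw [Finset.prod_insert his, hsplit, mul_comm,
      ← relIndex_mul_relIndex D D' _ le_sup_left le_sup_left]
    refine mul_dvd_mul (ih fun j hj w hw => ?_)
      (relIndex_sup_commutator_zpowers_dvd hx fun w hw => ?_)
    · convert hW j (Finset.mem_insert_of_mem hj) w hw using 6
      ext k
      simp only [Finset.mem_insert]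
      exact and_congr_left fun hkj => ⟨Or.inr, fun h => h.resolve_left (hkj.trans (hi j hj)).ne⟩
    · convert hW i (Finset.mem_insert_self i s) w hw using 6
      ext k
      simp only [Finset.mem_coe, Finset.mem_insert]
      exact ⟨fun hk => ⟨Or.inr hk, hi k hk⟩, fun hk => hk.1.resolve_left hk.2.ne⟩

end CommutatorModulo

section LowerCentralSeries

open Subgroup
open scoped commutatorElement

/-- The lower central series, indexed from `0`: `γ[G] m` is the group usually written
`γ_{m+1}(G)`. -/
local notation "γ[" G "]" => Subgroup.lowerCentralSeries (⊤ : Subgroup G)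

variable {E : Type*} [Group E] {L Z : Subgroup E}

theorem commutator_lowerCentralSeries_le (m n : ℕ) :
    ⁅γ[E] m, γ[E] n⁆ ≤ γ[E] (m + n + 1) := by
  induction n generalizing m with
  | zero => exact le_rfl
  | succ n ih =>
    rw [commutator_comm, Subgroup.lowerCentralSeries_succ _ n]
    refine commutator_commutator_le_of_rotate ?_ ?_
    · rw [commutator_comm ⊤, show m + (n + 1) + 1 = m + 1 + n + 1 by ring]
      exact ih (m + 1)
    · exact commutator_mono (ih m) le_rfl

theorem normal_lowerCentralSeries_sup_commutator (m : ℕ) (K : Subgroup E) :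
    (γ[E] (m + 2) ⊔ ⁅γ[E] m, K⁆).Normal :=
  normal_sup_of_commutator_top_le <| commutator_mono (commutator_mono le_rfl le_top) le_rfl

theorem lowerCentralSeries_succ_eq_sup_commutator (hZ : Z ≤ center E) (hL : L ⊔ Z = ⊤) (m : ℕ) :
    γ[E] (m + 1) = γ[E] (m + 2) ⊔ ⁅γ[E] m, L⁆ := by
  have hle : γ[E] (m + 2) ⊔ ⁅γ[E] m, L⁆ ≤ γ[E] (m + 1) :=
    sup_le (Subgroup.lowerCentralSeries_antitone _ (Nat.le_succ _)) (commutator_mono le_rfl le_top)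
  have := normal_lowerCentralSeries_sup_commutator m L
  refine le_antisymm ?_ hle
  rw [Subgroup.lowerCentralSeries_succ _ m]
  nth_rw 2 [← hL]
  rw [commutator_comm, sup_commutator_le_iff, commutator_comm L]
  exact ⟨le_sup_right, commutator_le_of_le_center hZ⟩

theorem relIndex_lowerCentralSeries_two_one_dvd_prod {ι : Type*} [Fintype ι] [LinearOrder ι]
    (hZ : Z ≤ center E) {x : ι → E} (hx : closure (Set.range x) ⊔ Z = ⊤) :
    (γ[E] 2).relIndex (γ[E] 1) ∣ ∏ i, (γ[E] 1 ⊔ Z ⊔ closure (x '' Set.Iic i)).index := by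
  have hγ : γ[E] 1 = γ[E] 2 ⊔ ⁅γ[E] 0, closure (x '' (Finset.univ : Finset ι))⁆ := by
    rw [Finset.coe_univ, Set.image_univ]
    exact lowerCentralSeries_succ_eq_sup_commutator hZ hx 0
  simp only [← relIndex_top_right]
  refine (congrArg (relIndex _) hγ).dvd.trans <|
    relIndex_sup_commutator_closure_dvd le_rfl x _ _ fun i _ w hw => ?_
  set D := γ[E] 2 ⊔ ⁅γ[E] 0, closure (x '' {j | j ∈ Finset.univ ∧ j < i})⁆
  have : D.Normal := normal_lowerCentralSeries_sup_commutator _ _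
  suffices h : ⁅γ[E] 1 ⊔ Z ⊔ closure (x '' Set.Iic i), closure {x i}⁆ ≤ D from
    h (commutator_mem_commutator hw (subset_closure rfl))
  refine sup_commutator_le_iff.2 ⟨sup_commutator_le_iff.2 ⟨?_, ?_⟩, ?_⟩
  · exact (commutator_mono le_rfl le_top).trans le_sup_left
  · exact commutator_le_of_le_center hZ
  · rw [closure_commutator_closure_le_iff]
    rintro _ ⟨j, hj, rfl⟩ _ rfl
    obtain rfl | hj := (Set.mem_Iic.1 hj).eq_or_lt
    · simp
    · rw [← commutatorElement_inv, inv_mem_iff]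
      refine le_sup_right (α := Subgroup E) (commutator_mem_commutator (mem_top _) ?_)
      exact subset_closure ⟨j, ⟨Finset.mem_univ j, hj⟩, rfl⟩

theorem index_mul_index_dvd_index {H K N : Subgroup E} [H.Normal] (hHK : H ⊔ K = ⊤) (hH : N ≤ H)
    (hK : N ≤ K) : H.index * K.index ∣ N.index := by
  rw [← relIndex_top_right H, ← hHK, relIndex_sup_left, ← inf_relIndex_right,
    relIndex_mul_index inf_le_right]
  exact index_dvd_of_le (le_inf hH hK)

theorem relIndex_lowerCentralSeries_two_one_sq_dvd {d : ℕ} (hZ : Z ≤ center E) {x : Fin d → E}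
    (hx : closure (Set.range x) ⊔ Z = ⊤) :
    (γ[E] 2).relIndex (γ[E] 1) ^ 2 ∣ (γ[E] 1 ⊔ Z).index ^ (d - 1) := by
  obtain _ | d := d
  · simpa using relIndex_lowerCentralSeries_two_one_dvd_prod hZ hx
  set A : Set (Fin (d + 1)) → Subgroup E := fun s => γ[E] 1 ⊔ Z ⊔ closure (x '' s)
  have hA (s : Set (Fin (d + 1))) : γ[E] 1 ⊔ Z ≤ A s := le_sup_left
  have hA_sup {s t : Set (Fin (d + 1))} (hst : s ∪ t = Set.univ) : A s ⊔ A t = ⊤ := by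
    rw [← sup_sup_distrib_left, ← Subgroup.closure_union, ← Set.image_union, hst, Set.image_univ,
      sup_assoc, sup_comm Z, hx, sup_top_eq]
  have hA_univ : (A Set.univ).index = 1 := by
    rw [← sup_idem (A Set.univ), hA_sup (Set.union_univ _), index_top]
  have hlower : (γ[E] 2).relIndex (γ[E] 1) ∣ ∏ i : Fin d, (A (Set.Iic i.castSucc)).index := by
    have h := relIndex_lowerCentralSeries_two_one_dvd_prod hZ hx
    rwa [Fin.prod_univ_castSucc, show Set.Iic (Fin.last d) = Set.univ from Set.Iic_top, hA_univ,
      mul_one] at h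
  have hupper : (γ[E] 2).relIndex (γ[E] 1) ∣ ∏ i : Fin d, (A (Set.Ici i.succ)).index := by
    have h : (γ[E] 2).relIndex (γ[E] 1) ∣ ∏ i : Fin (d + 1), (A (Set.Ici i)).index :=
      relIndex_lowerCentralSeries_two_one_dvd_prod (ι := (Fin (d + 1))ᵒᵈ) hZ hx
    rwa [Fin.prod_univ_succ, show Set.Ici (0 : Fin (d + 1)) = Set.univ from Set.Ici_bot, hA_univ,
      one_mul] at h
  rw [sq, Nat.add_sub_cancel, ← Fin.prod_const]
  refine (mul_dvd_mul hlower hupper).trans ?_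
  rw [← Finset.prod_mul_distrib]
  refine Finset.prod_dvd_prod_of_dvd _ _ fun i _ => ?_
  have : (A (Set.Iic i.castSucc)).Normal :=
    Normal.of_commutator_le _ <| (le_sup_left (b := Z)).trans (hA _)
  refine index_mul_index_dvd_index (hA_sup ?_) (hA _) (hA _)
  ext j
  simpa [Fin.le_def] using le_or_gt (j : ℕ) i

section LeftNormed

variable {ι : Type*} {x : ι → E}

/-- `IsLeftNormedCommutator x m J u` states that `u` is a left-normed commutator
`⁅⁅⁅x i₀, x i₁⁆, …⁆, x iₘ⁆` of weight `m + 1` with `J = {i₀, …, iₘ}`. -/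
inductive IsLeftNormedCommutator [DecidableEq ι] (x : ι → E) : ℕ → Finset ι → E → Prop
  | generator (i : ι) : IsLeftNormedCommutator x 0 {i} (x i)
  | commutator {m : ℕ} {J : Finset ι} {u : E} (i : ι) (hu : IsLeftNormedCommutator x m J u) :
      IsLeftNormedCommutator x (m + 1) (insert i J) ⁅u, x i⁆

namespace IsLeftNormedCommutator

variable [DecidableEq ι] {m : ℕ} {J : Finset ι} {u : E}

theorem mem_lowerCentralSeries (h : IsLeftNormedCommutator x m J u) : u ∈ γ[E] m := by
  induction h with
  | generator i => exact mem_top _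
  | commutator i _ ih => exact commutator_mem_commutator ih (mem_top _)

theorem card_le (h : IsLeftNormedCommutator x m J u) : J.card ≤ m + 1 := by
  induction h with
  | generator i => exact le_rfl
  | commutator i _ ih => exact (Finset.card_insert_le _ _).trans (by gcongr)

theorem commutator_zpowers_le (h : IsLeftNormedCommutator x m J u) (n : ℕ) :
    ⁅zpowers u, γ[E] n⁆ ≤ γ[E] (m + n + 2) ⊔ ⁅γ[E] (m + n), closure (x '' J)⁆ := by
  induction h generalizing n with
  | generator i =>
    rw [Finset.coe_singleton, Set.image_singleton, ← zpowers_eq_closure, commutator_comm, zero_add]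
    exact le_sup_right
  | @commutator m J u i hu ih =>
    set D := γ[E] (m + 1 + n + 2) ⊔ ⁅γ[E] (m + 1 + n), closure (x '' ↑(insert i J))⁆
    have : D.Normal := normal_lowerCentralSeries_sup_commutator _ _
    have hi : zpowers (x i) ≤ closure (x '' ↑(insert i J)) :=
      zpowers_le.2 <| subset_closure ⟨i, Finset.mem_insert_self i J, rfl⟩
    have hu' : zpowers u ≤ γ[E] m := zpowers_le.2 hu.mem_lowerCentralSeries
    have hD : ⁅⁅zpowers u, zpowers (x i)⁆, γ[E] n⁆ ≤ D := by
      refine commutator_commutator_le_of_rotate ?_ ?_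
      · have hn : ⁅zpowers (x i), γ[E] n⁆ ≤ γ[E] (n + 1) := by
          rw [commutator_comm]
          exact commutator_mono le_rfl le_top
        rw [commutator_comm]
        refine (commutator_mono le_rfl hn).trans ((ih (n + 1)).trans ?_)
        rw [show m + (n + 1) = m + 1 + n by ring]
        refine sup_le_sup_left (commutator_mono le_rfl (Subgroup.closure_mono ?_)) _
        refine Set.image_mono ?_
        exact Finset.subset_insert i J
      · refine le_trans ?_ le_sup_right
        rw [commutator_comm (γ[E] n), show m + 1 + n = m + n + 1 by ring]
        exact commutator_mono
          ((commutator_mono hu' le_rfl).trans (commutator_lowerCentralSeries_le m n)) hi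
    refine (commutator_mono ?_ le_rfl).trans hD
    exact zpowers_le.2 <| commutator_mem_commutator (mem_zpowers u) (mem_zpowers _)

end IsLeftNormedCommutator

theorem lowerCentralSeries_le_closure_isLeftNormedCommutator [DecidableEq ι] (hZ : Z ≤ center E)
    (hx : closure (Set.range x) ⊔ Z = ⊤) (m : ℕ) :
    γ[E] m ≤ closure {u | ∃ J, IsLeftNormedCommutator x m J u} ⊔ γ[E] (m + 1) ⊔ Z := by
  induction m with
  | zero =>
    rw [Subgroup.lowerCentralSeries_zero, ← hx]
    refine sup_le_sup_right (le_trans (Subgroup.closure_mono ?_) le_sup_left) Z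
    rintro _ ⟨i, rfl⟩
    exact ⟨{i}, .generator i⟩
  | succ m ih =>
    set S := {u | ∃ J, IsLeftNormedCommutator x (m + 1) J u}
    have hS : closure S ≤ γ[E] (m + 1) := by
      rw [closure_le]
      rintro u ⟨J, hu⟩
      exact hu.mem_lowerCentralSeries
    have : (γ[E] (m + 2) ⊔ closure S).Normal :=
      normal_sup_of_commutator_top_le (commutator_mono hS le_rfl)
    rw [sup_comm (closure S)]
    refine le_trans ?_ le_sup_left
    rw [Subgroup.lowerCentralSeries_succ _ m]
    refine (commutator_mono ih hx.ge).trans ?_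
    refine sup_commutator_le_iff.2 ⟨sup_commutator_le_iff.2 ⟨?_, ?_⟩, ?_⟩
    · rw [commutator_comm]
      refine sup_commutator_le_iff.2 ⟨closure_commutator_closure_le_iff.2 ?_, ?_⟩
      · rintro _ ⟨i, rfl⟩ u ⟨J, hu⟩
        rw [← commutatorElement_inv, inv_mem_iff]
        exact le_sup_right (α := Subgroup E) (subset_closure ⟨_, hu.commutator i⟩)
      · exact commutator_le_of_le_center hZ
    · exact (commutator_mono le_rfl le_top).trans le_sup_left
    · exact commutator_le_of_le_center hZ

theorem exists_isLeftNormedCommutator_notMem [DecidableEq ι] (hZ : Z ≤ center E)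
    (hx : closure (Set.range x) ⊔ Z = ⊤) {m : ℕ} (hm : ¬ γ[E] m ≤ γ[E] (m + 1) ⊔ Z) :
    ∃ J u, IsLeftNormedCommutator x m J u ∧ u ∉ γ[E] (m + 1) ⊔ Z := by
  by_contra! h
  have hS : closure {u | ∃ J, IsLeftNormedCommutator x m J u} ≤ γ[E] (m + 1) ⊔ Z :=
    (closure_le _).2 fun u ⟨J, hu⟩ => h J u hu
  refine hm <| (lowerCentralSeries_le_closure_isLeftNormedCommutator hZ hx m).trans ?_
  exact sup_le (sup_le hS le_sup_left) le_sup_right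

theorem relIndex_mul_prime_dvd_relIndex {H K L : Subgroup E} (hHK : H ≤ K) (hHL : ¬ K ⊓ L ≤ H)
    {p a : ℕ} (hp : p.Prime) (hpa : H.relIndex L ∣ p ^ a) : K.relIndex L * p ∣ H.relIndex L := by
  have hmul : H.relIndex (K ⊓ L) * K.relIndex L = H.relIndex L := by
    rw [relIndex_inf_mul_relIndex, inf_eq_left.2 hHK]
  obtain ⟨b, -, hb⟩ := (Nat.dvd_prime_pow hp).1 ((Dvd.intro _ hmul).trans hpa)
  have hb₀ : b ≠ 0 := by
    rintro rfl
    exact hHL (relIndex_eq_one.1 hb)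
  rw [← hmul, mul_comm, hb]
  exact mul_dvd_mul_right (dvd_pow_self p hb₀) _

theorem IsLeftNormedCommutator.relIndex_lowerCentralSeries_succ_dvd [Fintype ι] [LinearOrder ι]
    {m : ℕ} {J : Finset ι} {u : E} (hu : IsLeftNormedCommutator x m J u) (hZ : Z ≤ center E)
    (hx : closure (Set.range x) ⊔ Z = ⊤) :
    (γ[E] (m + 2)).relIndex (γ[E] (m + 1)) ∣ (γ[E] (m + 1) ⊔ Z).relIndex (γ[E] m) ^ J.card *
      (γ[E] (m + 1) ⊔ Z ⊔ zpowers u).relIndex (γ[E] m) ^ Jᶜ.card := by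
  set W := γ[E] (m + 1) ⊔ Z
  set D := γ[E] (m + 2) ⊔ ⁅γ[E] m, closure (x '' J)⁆
  have : D.Normal := normal_lowerCentralSeries_sup_commutator _ _
  have hW (g : E) : ⁅W, zpowers g⁆ ≤ γ[E] (m + 2) :=
    sup_commutator_le_iff.2 ⟨commutator_mono le_rfl le_top, commutator_le_of_le_center hZ⟩
  have hWu (g : E) : ⁅W ⊔ zpowers u, zpowers g⁆ ≤ D :=
    sup_commutator_le_iff.2 ⟨(hW g).trans le_sup_left,
      (commutator_mono le_rfl le_top).trans (hu.commutator_zpowers_le 0)⟩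
  have hlower : (γ[E] (m + 2)).relIndex D ∣ W.relIndex (γ[E] m) ^ J.card := by
    rw [← Finset.prod_const]
    refine relIndex_sup_commutator_closure_dvd le_rfl x (fun _ => W) J fun i _ w hw => ?_
    exact le_sup_left (α := Subgroup E) (hW _ (commutator_mem_commutator hw (mem_zpowers _)))
  have hγ : D ⊔ ⁅γ[E] m, closure (x '' (Jᶜ : Finset ι))⁆ = γ[E] (m + 1) := by
    have hsplit := sup_commutator_sup (K := closure (x '' J)) (L := closure (x '' Jᶜ))
      (le_refl (γ[E] (m + 2)))
    rw [← Subgroup.closure_union, ← Set.image_union, Set.union_compl_self, Set.image_univ]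
      at hsplit
    rw [Finset.coe_compl, lowerCentralSeries_succ_eq_sup_commutator hZ hx m]
    exact hsplit.symm
  have hupper : D.relIndex (γ[E] (m + 1)) ∣ (W ⊔ zpowers u).relIndex (γ[E] m) ^ Jᶜ.card := by
    have hcentral : ⁅⁅γ[E] m, (⊤ : Subgroup E)⁆, (⊤ : Subgroup E)⁆ ≤ D := le_sup_left
    rw [← hγ, ← Finset.prod_const]
    refine relIndex_sup_commutator_closure_dvd hcentral x (fun _ => W ⊔ zpowers u) _
      fun i _ w hw => ?_
    exact le_sup_left (α := Subgroup E) (hWu _ (commutator_mem_commutator hw (mem_zpowers _)))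
  rw [← relIndex_mul_relIndex (γ[E] (m + 2)) D _ le_sup_left (le_sup_left.trans_eq hγ)]
  exact mul_dvd_mul hlower hupper

theorem relIndex_mul_pow_dvd_relIndex_pow [Fintype ι] [LinearOrder ι] (hZ : Z ≤ center E)
    (hx : closure (Set.range x) ⊔ Z = ⊤) {m p a : ℕ} (hp : p.Prime)
    (hpa : (γ[E] (m + 1) ⊔ Z).relIndex (γ[E] m) ∣ p ^ a) (hm : ¬ γ[E] m ≤ γ[E] (m + 1) ⊔ Z) :
    (γ[E] (m + 2)).relIndex (γ[E] (m + 1)) * p ^ (Fintype.card ι - (m + 1)) ∣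
      (γ[E] (m + 1) ⊔ Z).relIndex (γ[E] m) ^ Fintype.card ι := by
  obtain ⟨J, u, hu, huW⟩ := exists_isLeftNormedCommutator_notMem hZ hx hm
  set W := γ[E] (m + 1) ⊔ Z
  have hpW : (W ⊔ zpowers u).relIndex (γ[E] m) * p ∣ W.relIndex (γ[E] m) :=
    relIndex_mul_prime_dvd_relIndex le_sup_left
      (fun h => huW (h ⟨le_sup_right (a := W) (mem_zpowers u), hu.mem_lowerCentralSeries⟩)) hp hpa
  calc (γ[E] (m + 2)).relIndex (γ[E] (m + 1)) * p ^ (Fintype.card ι - (m + 1))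
      ∣ W.relIndex (γ[E] m) ^ J.card * (W ⊔ zpowers u).relIndex (γ[E] m) ^ Jᶜ.card * p ^ Jᶜ.card :=
        mul_dvd_mul (hu.relIndex_lowerCentralSeries_succ_dvd hZ hx) <| pow_dvd_pow p <| by
          rw [Finset.card_compl]
          exact Nat.sub_le_sub_left hu.card_le _
    _ ∣ W.relIndex (γ[E] m) ^ J.card * W.relIndex (γ[E] m) ^ Jᶜ.card := by
        rw [mul_assoc, ← mul_pow]
        exact mul_dvd_mul_left _ (pow_dvd_pow_of_dvd hpW _)
    _ = W.relIndex (γ[E] m) ^ Fintype.card ι := by rw [← pow_add, Finset.card_add_card_compl]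

end LeftNormed

theorem relIndex_eq_prod_relIndex_succ {E : Type*} [Group E] {H : ℕ → Subgroup E} (hH : Antitone H)
    (n : ℕ) : (H n).relIndex (H 0) = ∏ j ∈ Finset.range n, (H (j + 1)).relIndex (H j) := by
  induction n with
  | zero => simp
  | succ n ih =>
    rw [Finset.prod_range_succ, ← ih, mul_comm,
      relIndex_mul_relIndex _ _ _ (hH (Nat.le_succ n)) (hH (Nat.zero_le n))]

theorem not_lowerCentralSeries_le_succ {G : Type*} [Group G] [Group.IsNilpotent G] {m : ℕ}
    (hm : m < Group.nilpotencyClass G) : ¬ γ[G] m ≤ γ[G] (m + 1) := by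
  intro h
  have hle (n : ℕ) : γ[G] m ≤ γ[G] (m + n) := by
    induction n with
    | zero => exact le_rfl
    | succ n ih => exact h.trans (commutator_mono ih le_rfl)
  refine hm.not_ge (Subgroup.lowerCentralSeries_eq_bot_iff_nilpotencyClass_le.1 ?_)
  refine le_bot_iff.1 ((hle (Group.nilpotencyClass G)).trans_eq ?_)
  exact Subgroup.lowerCentralSeries_eq_bot_iff_nilpotencyClass_le.2 (Nat.le_add_left _ _)

section CentralQuotient

variable {G : Type*} [Group G] {π : E →* G}

theorem lowerCentralSeries_sup_ker (hπ : Function.Surjective π) (m : ℕ) :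
    γ[E] m ⊔ π.ker = (γ[G] m).comap π := by
  rw [← comap_map_eq, map_lowerCentralSeries, map_top_of_surjective π hπ]

theorem relIndex_lowerCentralSeries_sup_ker (hπ : Function.Surjective π) (m : ℕ) :
    (γ[E] (m + 1) ⊔ π.ker).relIndex (γ[E] m) = (γ[G] (m + 1)).relIndex (γ[G] m) := by
  rw [lowerCentralSeries_sup_ker hπ, relIndex_comap, map_lowerCentralSeries,
    map_top_of_surjective π hπ]

theorem exists_closure_range_sup_ker_eq_top [Group.FG G] (hπ : Function.Surjective π) :
    ∃ x : Fin (Group.rank G) → E, closure (Set.range x) ⊔ π.ker = ⊤ := by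
  obtain ⟨S, hS, hS_top⟩ := Group.rank_spec G
  let y : Fin (Group.rank G) → G := Subtype.val ∘ (S.equivFinOfCardEq hS).symm
  have hy : Set.range y = S := by
    rw [(Equiv.surjective _).range_comp, Subtype.range_coe]
  refine ⟨Function.surjInv hπ ∘ y, ?_⟩
  rw [← comap_map_eq, MonoidHom.map_closure, ← Set.range_comp, ← Function.comp_assoc,
    (Function.rightInverse_surjInv hπ).comp_eq_id, Function.id_comp, hy, hS_top, comap_top]

theorem lowerCentralSeries_nilpotencyClass_add_one_eq_bot [Group.IsNilpotent G]
    (hπ : Function.Surjective π) (hker : π.ker ≤ center E) :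
    γ[E] (Group.nilpotencyClass G + 1) = ⊥ := by
  refine Subgroup.lowerCentralSeries_succ_eq_bot _ (le_trans ?_ hker)
  rw [← Subgroup.map_eq_bot_iff, map_lowerCentralSeries, map_top_of_surjective π hπ,
    Subgroup.lowerCentralSeries_nilpotencyClass]

theorem card_commutator_eq_prod_relIndex {n : ℕ} (h : γ[E] (n + 1) = ⊥) : Nat.card (commutator E) =
    ∏ j ∈ Finset.range n, (γ[E] (j + 2)).relIndex (γ[E] (j + 1)) := by
  rw [← relIndex_eq_prod_relIndex_succ (H := fun j => γ[E] (j + 1)), h, relIndex_bot_left, zero_add,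
    top_lowerCentralSeries_one]
  exact antitone_nat_of_succ_le fun j => Subgroup.lowerCentralSeries_antitone _ (Nat.le_succ _)

variable [Finite G] {p : ℕ} [Fact p.Prime]

theorem relIndex_lowerCentralSeries_mul_pow_dvd (hG : IsPGroup p G) (hπ : Function.Surjective π)
    (hker : π.ker ≤ center E) {m : ℕ} (hm : m < Group.nilpotencyClass G) :
    (γ[E] (m + 2)).relIndex (γ[E] (m + 1)) * p ^ (Group.rank G - (m + 1)) ∣
      (γ[G] (m + 1)).relIndex (γ[G] m) ^ Group.rank G := by
  have := hG.isNilpotent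
  obtain ⟨n, hn⟩ := IsPGroup.iff_card.1 hG
  obtain ⟨x, hx⟩ := exists_closure_range_sup_ker_eq_top hπ
  have hγ := relIndex_lowerCentralSeries_sup_ker hπ m
  have hdvd : (γ[E] (m + 1) ⊔ π.ker).relIndex (γ[E] m) ∣ p ^ n := by
    rw [hγ, ← hn]
    exact (relIndex_dvd_card _ _).trans (card_subgroup_dvd_card _)
  have hnot : ¬ γ[E] m ≤ γ[E] (m + 1) ⊔ π.ker := by
    rw [← relIndex_eq_one, hγ, relIndex_eq_one]
    exact not_lowerCentralSeries_le_succ hm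
  have := relIndex_mul_pow_dvd_relIndex_pow hker hx Fact.out hdvd hnot
  rwa [hγ, Fintype.card_fin] at this

theorem prod_relIndex_lowerCentralSeries_mul_pow_dvd (hG : IsPGroup p G)
    (hπ : Function.Surjective π) (hker : π.ker ≤ center E) :
    (∏ j ∈ Finset.range (Group.nilpotencyClass G - 1),
        (γ[E] (j + 3)).relIndex (γ[E] (j + 2))) *
      p ^ ∑ i ∈ Finset.Icc 2 (Group.nilpotencyClass G), (Group.rank G - i) ∣
      Nat.card (commutator G) ^ Group.rank G := by
  have := hG.isNilpotent
  set c := Group.nilpotencyClass G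
  set d := Group.rank G
  have hcard : Nat.card (commutator G) =
      ∏ j ∈ Finset.range (c - 1), (γ[G] (j + 2)).relIndex (γ[G] (j + 1)) :=
    card_commutator_eq_prod_relIndex <|
      Subgroup.lowerCentralSeries_eq_bot_iff_nilpotencyClass_le.2 (by lia)
  have hsum : ∑ i ∈ Finset.Icc 2 c, (d - i) = ∑ j ∈ Finset.range (c - 1), (d - (j + 2)) := by
    rw [← Finset.Ico_add_one_right_eq_Icc, Finset.sum_Ico_eq_sum_range]
    simp only [add_comm]
    rfl
  rw [hsum, ← Finset.prod_pow_eq_pow_sum, ← Finset.prod_mul_distrib, hcard, ← Finset.prod_pow]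
  refine Finset.prod_dvd_prod_of_dvd _ _ fun j hj => ?_
  exact relIndex_lowerCentralSeries_mul_pow_dvd hG hπ hker
    (Nat.add_lt_of_lt_sub (Finset.mem_range.1 hj))

theorem sq_card_commutator_mul_pow_dvd (hG : IsPGroup p G) (hπ : Function.Surjective π)
    (hker : π.ker ≤ center E) :
    (Nat.card (commutator E) *
      p ^ ∑ i ∈ Finset.Icc 2 (Group.nilpotencyClass G), (Group.rank G - i)) ^ 2 ∣
      (commutator G).index ^ (Group.rank G - 1) * Nat.card (commutator G) ^ (2 * Group.rank G) := by
  have := hG.isNilpotent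
  obtain ⟨x, hx⟩ := exists_closure_range_sup_ker_eq_top hπ
  have hbot : γ[E] (Group.nilpotencyClass G - 1 + 1 + 1) = ⊥ :=
    le_bot_iff.1 <| (Subgroup.lowerCentralSeries_antitone _ (by lia)).trans_eq
      (lowerCentralSeries_nilpotencyClass_add_one_eq_bot hπ hker)
  have hfirst : (γ[E] 2).relIndex (γ[E] 1) ^ 2 ∣ (commutator G).index ^ (Group.rank G - 1) := by
    rw [← top_lowerCentralSeries_one, ← index_comap_of_surjective _ hπ,
      ← lowerCentralSeries_sup_ker hπ]
    exact relIndex_lowerCentralSeries_two_one_sq_dvd hker hx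
  rw [card_commutator_eq_prod_relIndex hbot, Finset.prod_range_succ', mul_right_comm, mul_comm,
    mul_pow, mul_comm 2, pow_mul]
  exact mul_dvd_mul hfirst <|
    pow_dvd_pow_of_dvd (prod_relIndex_lowerCentralSeries_mul_pow_dvd hG hπ hker) 2

end CentralQuotient

end LowerCentralSeries

section CentralExtension

open Subgroup

/-- A 2-cocycle of `G` with values in the abelian group `A`, written multiplicatively and acted on
trivially by `G`; it need not be normalized. -/
structure MulTwoCocycle (G A : Type*) [Group G] [CommGroup A] where
  toFun : G → G → A
  map_mul_mul_map' (g h j : G) : toFun (g * h) j * toFun g h = toFun h j * toFun g (h * j)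

namespace MulTwoCocycle

variable {G A : Type*} [Group G] [CommGroup A]

instance : CoeFun (MulTwoCocycle G A) fun _ => G → G → A := ⟨toFun⟩

theorem map_mul_mul_map (f : MulTwoCocycle G A) (g h j : G) :
    f (g * h) j * f g h = f h j * f g (h * j) :=
  f.map_mul_mul_map' g h j

theorem map_one_left (f : MulTwoCocycle G A) (g : G) : f 1 g = f 1 1 := by
  simpa using (f.map_mul_mul_map 1 1 g).symm

theorem map_one_right (f : MulTwoCocycle G A) (g : G) : f g 1 = f 1 1 := by
  simpa using f.map_mul_mul_map g 1 1

/-- The central extension of `G` by `A` with factor set `f`: the set `A × G` with multiplication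
`(a, g) * (b, h) = (a * b * f g h, g * h)`. -/
@[ext]
structure Extension (f : MulTwoCocycle G A) where
  fiber : A
  base : G

namespace Extension

variable {f : MulTwoCocycle G A}

instance : Mul f.Extension := ⟨fun x y => ⟨x.fiber * y.fiber * f x.base y.base, x.base * y.base⟩⟩

instance : One f.Extension := ⟨⟨(f 1 1)⁻¹, 1⟩⟩

instance : Inv f.Extension :=
  ⟨fun x => ⟨(x.fiber * f x.base⁻¹ x.base * f 1 1)⁻¹, x.base⁻¹⟩⟩

theorem mk_mul_mk (a b : A) (g h : G) :
    (⟨a, g⟩ * ⟨b, h⟩ : f.Extension) = ⟨a * b * f g h, g * h⟩ := rfl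

theorem one_def : (1 : f.Extension) = ⟨(f 1 1)⁻¹, 1⟩ := rfl

theorem mk_inv (a : A) (g : G) : (⟨a, g⟩ : f.Extension)⁻¹ = ⟨(a * f g⁻¹ g * f 1 1)⁻¹, g⁻¹⟩ := rfl

instance : Group f.Extension := Group.ofLeftAxioms
  (by
    rintro ⟨a, g⟩ ⟨b, h⟩ ⟨c, j⟩
    simp only [mk_mul_mk, mul_assoc, mk.injEq, and_true]
    rw [mul_left_comm (f g h), mul_comm (f g h), f.map_mul_mul_map])
  (by
    rintro ⟨a, g⟩
    simp [one_def, mk_mul_mk, f.map_one_left])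
  (by
    rintro ⟨a, g⟩
    simp only [one_def, mk_mul_mk, mk_inv, mk.injEq, inv_mul_cancel, and_true]
    rw [mul_assoc, inv_mul_eq_iff_eq_mul, mul_inv_cancel_right])

variable (f) in
/-- The projection of the central extension onto `G`. -/
def proj : f.Extension →* G where
  toFun := base
  map_one' := rfl
  map_mul' _ _ := rfl

variable (f) in
/-- The embedding of `A` as the kernel of `proj f`; the factor `(f 1 1)⁻¹` is there because `f` need
not be normalized. -/
def incl : A →* f.Extension where
  toFun a := ⟨a * (f 1 1)⁻¹, 1⟩
  map_one' := by simp [one_def]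
  map_mul' a b := by simp [mk_mul_mk, mul_assoc, mul_left_comm]

theorem proj_surjective : Function.Surjective (proj f) := fun g => ⟨⟨1, g⟩, rfl⟩

theorem incl_injective : Function.Injective (incl f) := fun _ _ h =>
  mul_right_cancel (congrArg fiber h)

theorem incl_mul_mk (a b : A) (g : G) : incl f a * ⟨b, g⟩ = ⟨a * b, g⟩ := by
  simp [incl, mk_mul_mk, f.map_one_left, mul_right_comm]

theorem mk_mul_incl (a b : A) (g : G) : ⟨b, g⟩ * incl f a = ⟨b * a, g⟩ := by
  simp [incl, mk_mul_mk, f.map_one_right, mul_assoc]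

theorem range_incl : (incl f).range = (proj f).ker := by
  ext ⟨a, g⟩
  refine ⟨?_, fun hg => ⟨a * f 1 1, ?_⟩⟩
  · rintro ⟨b, hb⟩
    exact (congrArg base hb).symm
  · rw [show g = 1 from hg]
    simp [incl]

theorem ker_proj_le_center : (proj f).ker ≤ center f.Extension := by
  rw [← range_incl]
  rintro _ ⟨a, rfl⟩
  exact mem_center_iff.2 fun ⟨b, g⟩ => by rw [incl_mul_mk, mk_mul_incl, mul_comm]

variable (f) in
/-- The subgroup of `A` that corresponds to the intersection of `A` with the commutator subgroup of
`f.Extension`. -/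
def commutatorFiber : Subgroup A := (commutator f.Extension).comap (incl f)

theorem card_commutatorFiber_mul_card_commutator :
    Nat.card (commutatorFiber f) * Nat.card (commutator G) =
      Nat.card (commutator f.Extension) := by
  have hG : (commutator f.Extension).map (proj f) = commutator G := by
    rw [commutator_def, map_commutator, map_top_of_surjective _ proj_surjective, commutator_def]
  rw [← card_map_of_injective (incl_injective (f := f)), commutatorFiber, map_comap_eq, range_incl,
    ← hG, ← relIndex_ker, ← inf_relIndex_right, ← relIndex_bot_left, ← relIndex_bot_left,
    relIndex_mul_relIndex _ _ _ bot_le inf_le_right]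

end Extension

end MulTwoCocycle

end CentralExtension

section Characters

variable {K : Type*} [Field K] [IsAlgClosed K]

variable (K) in
theorem baer_additive_units : Module.Baer ℤ (Additive Kˣ) := by
  have : DivisibleBy (Additive Kˣ) ℕ := divisibleByOfSMulRightSurj _ _ fun {n} hn x => by
    obtain ⟨z, hz⟩ := IsAlgClosed.exists_pow_nat_eq (x.toMul : K) (Nat.pos_of_ne_zero hn)
    have hz₀ : z ≠ 0 := (pow_ne_zero_iff hn).1 (hz ▸ x.toMul.ne_zero)
    have hz' : Units.mk0 z hz₀ ^ n = x.toMul := Units.ext (by simpa using hz)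
    exact ⟨Additive.ofMul (Units.mk0 z hz₀), congrArg Additive.ofMul hz'⟩
  have : DivisibleBy (Additive Kˣ) ℤ := AddGroup.divisibleByIntOfDivisibleByNat _
  exact Module.Baer.of_divisible _

theorem exists_monoidHom_comp_eq {A E : Type*} [CommGroup A] [CommGroup E] {i : A →* E}
    {χ : A →* Kˣ} (hχ : i.ker ≤ χ.ker) : ∃ ψ : E →* Kˣ, ψ.comp i = χ := by
  obtain ⟨ψ, hψ⟩ := (baer_additive_units K).extension_property_addMonoidHom
    (MonoidHom.toAdditive (QuotientGroup.kerLift i)) (QuotientGroup.kerLift_injective i)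
    (MonoidHom.toAdditive (QuotientGroup.lift i.ker χ hχ))
  refine ⟨MonoidHom.toAdditive.symm ψ, MonoidHom.ext fun a => ?_⟩
  exact DFunLike.congr_fun hψ (Additive.ofMul (a : A ⧸ i.ker))

namespace MulTwoCocycle

variable {G A : Type*} [Group G] [CommGroup A]

theorem exists_map_mul_eq_mul {f : MulTwoCocycle G A} {χ : A →* Kˣ}
    (hχ : Extension.commutatorFiber f ≤ χ.ker) :
    ∃ ψ : G → Kˣ, ∀ g h, χ (f g h) * ψ (g * h) = ψ g * ψ h := by
  have hker : (Abelianization.of.comp (Extension.incl f)).ker ≤ χ.ker := by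
    rwa [← MonoidHom.comap_ker, Abelianization.ker_of]
  obtain ⟨ψ, hψ⟩ := exists_monoidHom_comp_eq hker
  refine ⟨fun g => ψ (Abelianization.of ⟨1, g⟩), fun g h => ?_⟩
  rw [← hψ, ← map_mul, ← map_mul, Extension.mk_mul_mk, MonoidHom.comp_apply, MonoidHom.comp_apply,
    ← map_mul, ← map_mul, Extension.incl_mul_mk, mul_one, mul_one, one_mul]

end MulTwoCocycle

end Characters

section Schur

open groupCohomology MulTwoCocycle Extension

local notation "Z²[" G "]" => cocycles₂ (Rep.trivial ℤ G (Additive ℂˣ))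

/-- The 2-cocycle of `G` with values in the character group of `Z²(G, ℂˣ)` that sends `(g, h)` to
evaluation at `(g, h)`. Every cocycle with values in `ℂˣ` is its image under a character. -/
def universalCocycle (G : Type) [Group G] :
    MulTwoCocycle G (Multiplicative Z²[G] →* ℂˣ) where
  toFun g h :=
    { toFun f := (f.toAdd.1 (g, h) : Additive ℂˣ).toMul
      map_one' := rfl
      map_mul' _ _ := rfl }
  map_mul_mul_map' g h j := MonoidHom.ext fun f =>
    congrArg (Additive.toMul (α := ℂˣ)) ((mem_cocycles₂_iff _).1 f.toAdd.2 g h j)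

variable {G : Type} [Group G]

theorem H2π_eq_of_forall_commutatorFiber {f f' : Z²[G]}
    (h : ∀ a ∈ commutatorFiber (universalCocycle G), a (.ofAdd f) = a (.ofAdd f')) :
    H2π _ f = H2π _ f' := by
  have hker : commutatorFiber (universalCocycle G) ≤ (MonoidHom.eval (.ofAdd (f - f'))).ker :=
    fun a ha => MonoidHom.mem_ker.2 <| (map_div a _ _).trans (div_eq_one.2 (h a ha))
  obtain ⟨ψ, hψ⟩ := exists_map_mul_eq_mul hker
  refine (H2π_eq_iff _ _).2 ⟨fun g => Additive.ofMul (ψ g), funext fun ⟨g, h⟩ => ?_⟩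
  change Additive.ofMul (ψ h / ψ (g * h) * ψ g) = f.1 (g, h) - f'.1 (g, h)
  rw [div_mul_eq_mul_div, mul_comm, ← hψ, mul_div_cancel_right]
  rfl

theorem card_schurMultiplier_le [Finite (commutatorFiber (universalCocycle G))] :
    Nat.card (schurMultiplier G) ≤ Nat.card (commutatorFiber (universalCocycle G)) := by
  set K := commutatorFiber (universalCocycle G)
  have : NeZero (Monoid.exponent K) := ⟨Monoid.exponent_ne_zero_of_finite⟩
  have hcard : Nat.card (K →* ℂˣ) = Nat.card K :=
    CommGroup.card_monoidHom_of_hasEnoughRootsOfUnity K ℂ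
  have : Finite (K →* ℂˣ) := Nat.finite_of_card_ne_zero (hcard ▸ Nat.card_pos.ne')
  have hsurj : Function.Surjective (H2π (Rep.trivial ℤ G (Additive ℂˣ))) :=
    (ModuleCat.epi_iff_surjective _).1 inferInstance
  choose s hs using hsurj
  let restrict (c : schurMultiplier G) : K →* ℂˣ :=
    (MonoidHom.eval (Multiplicative.ofAdd (s c))).comp K.subtype
  refine (Nat.card_le_card_of_injective restrict fun c c' h => ?_).trans_eq hcard
  refine (hs c).symm.trans ((H2π_eq_of_forall_commutatorFiber fun a ha => ?_).trans (hs c'))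
  exact DFunLike.congr_fun h ⟨a, ha⟩

theorem card_schurMultiplier_mul_card_commutator_le
    [Finite (commutator (universalCocycle G).Extension)] :
    Nat.card (schurMultiplier G) * Nat.card (commutator G) ≤
      Nat.card (commutator (universalCocycle G).Extension) := by
  have : Finite (commutatorFiber (universalCocycle G)) := Nat.finite_of_card_ne_zero <|
    left_ne_zero_of_mul (card_commutatorFiber_mul_card_commutator.trans_ne Nat.card_pos.ne')
  rw [← card_commutatorFiber_mul_card_commutator]
  exact Nat.mul_le_mul_right _ card_schurMultiplier_le

theorem sq_card_schurMultiplier_mul_pow_le {G : Type} [Group G] [Finite G] {p : ℕ} [Fact p.Prime]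
    (hG : IsPGroup p G) :
    (Nat.card (schurMultiplier G) *
      p ^ ∑ i ∈ Finset.Icc 2 (Group.nilpotencyClass G), (Group.rank G - i)) ^ 2 ≤
      (Nat.card G * Nat.card (commutator G)) ^ (Group.rank G - 1) := by
  set s := ∑ i ∈ Finset.Icc 2 (Group.nilpotencyClass G), (Group.rank G - i)
  set d := Group.rank G
  set E := (universalCocycle G).Extension
  have hindex : 0 < (commutator G).index := Nat.pos_of_ne_zero Subgroup.index_ne_zero_of_finite
  have hcomm : 0 < Nat.card (commutator G) := Nat.card_pos
  have hdvd : (Nat.card (commutator E) * p ^ s) ^ 2 ∣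
      (commutator G).index ^ (d - 1) * Nat.card (commutator G) ^ (2 * d) :=
    sq_card_commutator_mul_pow_dvd hG proj_surjective ker_proj_le_center
  have : Finite (commutator E) := Nat.finite_of_card_ne_zero fun h => by
    rw [h, zero_mul, zero_pow two_ne_zero, zero_dvd_iff] at hdvd
    exact absurd hdvd (by positivity)
  have hmul : (Nat.card (schurMultiplier G) * p ^ s) ^ 2 * Nat.card (commutator G) ^ 2 ≤
      (commutator G).index ^ (d - 1) * Nat.card (commutator G) ^ (2 * d) := by
    refine le_trans ?_ (Nat.le_of_dvd (by positivity) hdvd)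
    rw [← mul_pow, mul_right_comm]
    gcongr
    exact card_schurMultiplier_mul_card_commutator_le
  refine Nat.le_of_mul_le_mul_right (hmul.trans ?_) (pow_pos hcomm 2)
  calc (commutator G).index ^ (d - 1) * Nat.card (commutator G) ^ (2 * d)
      ≤ (commutator G).index ^ (d - 1) * Nat.card (commutator G) ^ (2 * (d - 1) + 2) := by
        gcongr
        lia
    _ = (Nat.card G * Nat.card (commutator G)) ^ (d - 1) * Nat.card (commutator G) ^ 2 := by
        rw [← (commutator G).index_mul_card]
        ring

end Schur

theorem le_rpow_of_sq_mul_pow_le {p M s e : ℕ} (hp : 0 < p) (h : (M * p ^ s) ^ 2 ≤ p ^ e) :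
    (M : ℝ) ≤ (p : ℝ) ^ ((e : ℝ) / 2 - s) := by
  have hp' : (0 : ℝ) < p := Nat.cast_pos.2 hp
  rw [Real.rpow_sub hp', Real.rpow_natCast, le_div_iff₀ (by positivity)]
  refine le_of_sq_le_sq ?_ (by positivity)
  rw [← Real.rpow_mul_natCast hp'.le, Nat.cast_two, div_mul_cancel₀ _ two_ne_zero,
    Real.rpow_natCast]
  exact_mod_cast h

theorem sum_Icc_min_sub (d c : ℕ) :
    ∑ i ∈ Finset.Icc 2 (min d c), ((d : ℝ) - i) = (∑ i ∈ Finset.Icc 2 c, (d - i) : ℕ) := by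
  rw [← Finset.sum_subset (Finset.Icc_subset_Icc_right (min_le_right d c)), Nat.cast_sum]
  · refine Finset.sum_congr rfl fun i hi => (Nat.cast_sub ?_).symm
    exact (Finset.mem_Icc.1 hi).2.trans (min_le_left d c)
  · grind

theorem schur_multiplier_bound_of_nilpotencyClass_general (p n k c d : ℕ) (hp : p.Prime)
    (G : Type) [Group G] [Finite G]
    (hcard : Nat.card G = p ^ n)
    (hc : Group.nilpotencyClass G = c)
    (hk : Nat.card (commutator G) = p ^ k)
    (hd : Group.rank G = d) :
    (Nat.card (schurMultiplier G) : ℝ) ≤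
      (p : ℝ) ^ (((d : ℝ) - 1) * ((n : ℝ) + (k : ℝ)) / 2
        - ∑ i ∈ Finset.Icc 2 (min d c), ((d : ℝ) - (i : ℝ))) := by
  have : Fact p.Prime := ⟨hp⟩
  have hbound := sq_card_schurMultiplier_mul_pow_le (IsPGroup.of_card hcard)
  rw [hcard, hk, hc, hd, ← pow_add, ← pow_mul] at hbound
  rw [sum_Icc_min_sub]
  convert le_rpow_of_sq_mul_pow_le hp.pos hbound using 3
  obtain _ | d := d
  · have := Group.rank_eq_zero_iff.1 hd
    have hn : n = 0 := Nat.pow_right_injective hp.two_le (hcard.symm.trans Nat.card_unique)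
    have hk₀ : k = 0 := Nat.pow_right_injective hp.two_le (hk.symm.trans Nat.card_unique)
    simp [hn, hk₀]
  · push_cast
    ring

/-- Theorem 1 (general form): for a non-abelian finite `p`-group of order `p ^ n`,
nilpotency class `c`, derived subgroup of order `p ^ k` and minimal number of
generators `d`, one has
`|M(G)| ≤ p ^ ((d - 1) * (n + k) / 2 - ∑_{i = 2}^{min d c} (d - i))`. -/
theorem schur_multiplier_bound_of_nilpotencyClass (p n k c d : ℕ) (hp : p.Prime)
    (G : Type) [Group G] [Finite G] [Group.IsNilpotent G]
    (hcard : Nat.card G = p ^ n)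
    (hna : ∃ a b : G, a * b ≠ b * a)
    (hc : Group.nilpotencyClass G = c)
    (hk : Nat.card (commutator G) = p ^ k)
    (hd : Group.rank G = d) :
    (Nat.card (schurMultiplier G) : ℝ) ≤
      (p : ℝ) ^ (((d : ℝ) - 1) * ((n : ℝ) + (k : ℝ)) / 2
        - ∑ i ∈ Finset.Icc 2 (min d c), ((d : ℝ) - (i : ℝ))) := 
  schur_multiplier_bound_of_nilpotencyClass_general p n k c d hp G hcard hc hk hd
end

section
/- Let p be a prime and G a non-abelian finite p-group of order p^n and nilpotency class c, with derived subgroup of order p^k and minimal number of generators d. If d ≤ c, then |M(G)| ≤ p^{(1/2)(d-1)(n+k) − (1/2)(d-1)(d-2)}. -/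
/-!
Bound `|H²(G)|` by induction on `|G|`, dividing out a subgroup `⟨z⟩` of order `p` in the last
nontrivial term of the lower central series. Since `z` is central, comparing the commutator of
lifts of `z` and `g` to a central extension defines a homomorphism `H²(G) → Hom(G, ℂˣ)`, and its
kernel is the image of inflation from `G/⟨z⟩` (Ganea). Since `z` is a product of commutators, the
characters of `⟨z⟩` inject into the kernel of inflation, which gains a factor `p`. So
`p |H²(G)| ≤ |R| |H²(G/⟨z⟩)|`, where `R` is the group of characters obtained from `z`.

A character in `R` has order dividing `p`, so `|R| ≤ p ^ d`. If `⟨z⟩` is the whole `c`-th term of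
the lower central series, then `c + 1` elements `x₀, …, x_c` with `⁅x₀, …, x_c⁆ ≠ 1` generate a
subgroup whose own `c`-th term contains `z`; by the three subgroups lemma in the extension, a
character in `R` is determined by its values on them, and `|R| ≤ p ^ (c + 1)`. This
saves `p ^ (d - c - 1)` each time the class drops to `c`; the induction ends with abelian groups.
-/

section Cohomology

variable (G A : Type*) [Group G] [CommGroup A]

/-- The group `Z²(G, A)` of 2-cocycles for the trivial action of `G` on `A`, written
multiplicatively and as curried functions. -/
def mulCocycles₂ : Subgroup (G → G → A) where
  carrier := {α | ∀ g h k, α (g * h) k * α g h = α h k * α g (h * k)}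
  one_mem' := fun g h k => by simp
  mul_mem' := fun {α β} hα hβ g h k => by
    simp only [Pi.mul_apply]
    rw [mul_mul_mul_comm, hα g h k, hβ g h k, mul_mul_mul_comm]
  inv_mem' := fun {α} hα g h k => by
    simp only [Pi.inv_apply]
    rw [← mul_inv, hα g h k, mul_inv]

instance : CoeFun (mulCocycles₂ G A) fun _ => G → G → A := ⟨Subtype.val⟩

/-- The coboundary map `C¹(G, A) → Z²(G, A)`. -/
def mulCoboundary : (G → A) →* mulCocycles₂ G A where
  toFun x := ⟨fun g h => x h / x (g * h) * x g, fun g h k => by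
    simp only [div_eq_mul_inv, mul_assoc g h k]
    calc _ = x k * (x (g * (h * k)))⁻¹ * x h * x g * ((x (g * h))⁻¹ * x (g * h)) := by ac_rfl
      _ = x k * (x (g * (h * k)))⁻¹ * x h * x g * ((x (h * k))⁻¹ * x (h * k)) := by simp
      _ = _ := by ac_rfl⟩
  map_one' := by ext; simp
  map_mul' x y := by
    ext g h
    simp only [Pi.mul_apply, Subgroup.coe_mul, div_eq_mul_inv, mul_inv]
    ac_rfl

/-- The second cohomology group `H²(G, A)` for the trivial action, written multiplicatively. -/
abbrev MulH2 : Type _ := mulCocycles₂ G A ⧸ (mulCoboundary G A).range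

end Cohomology

section Comparison

variable (G A : Type) [Group G] [CommGroup A]

/-- The projection from multiplicative cocycles to Mathlib's `H²`, whose coefficients are
additive. -/
noncomputable def mulCocycles₂.toGroupCohomology :
    mulCocycles₂ G A →* Multiplicative (groupCohomology (Rep.trivial ℤ G (Additive A)) 2) where
  toFun α := Multiplicative.ofAdd (groupCohomology.H2π (Rep.trivial ℤ G (Additive A))
    ⟨fun x => Additive.ofMul (α x.1 x.2), (groupCohomology.mem_cocycles₂_iff _).2 fun g h k =>
      congrArg Additive.ofMul (α.2 g h k)⟩)
  map_one' := by
    rw [← ofAdd_zero, ← map_zero (groupCohomology.H2π _).hom]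
    rfl
  map_mul' α β := by
    rw [← ofAdd_add, ← map_add]
    rfl

theorem mulCocycles₂.ker_toGroupCohomology :
    (toGroupCohomology G A).ker = (mulCoboundary G A).range := by
  ext α
  change groupCohomology.H2π _ _ = 0 ↔ _
  rw [groupCohomology.H2π_eq_zero_iff]
  constructor
  · rintro ⟨x, hx⟩
    refine ⟨fun g => Additive.toMul (x g), ?_⟩
    ext g h
    exact congrArg Additive.toMul (congrFun hx (g, h))
  · rintro ⟨x, rfl⟩
    exact ⟨fun g => Additive.ofMul (x g), rfl⟩

theorem mulCocycles₂.toGroupCohomology_surjective :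
    Function.Surjective (toGroupCohomology G A) := by
  intro y
  obtain ⟨x, hx⟩ := (ModuleCat.epi_iff_surjective
    (groupCohomology.H2π (Rep.trivial ℤ G (Additive A)))).1 inferInstance (Multiplicative.toAdd y)
  refine ⟨⟨fun g h => Additive.toMul (x.1 (g, h)), fun g h k => ?_⟩,
    congrArg Multiplicative.ofAdd hx⟩
  exact congrArg Additive.toMul ((groupCohomology.mem_cocycles₂_iff x.1).1 x.2 g h k)

theorem card_groupCohomology_two_trivial :
    Nat.card (groupCohomology (Rep.trivial ℤ G (Additive A)) 2) = Nat.card (MulH2 G A) := by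
  rw [MulH2, ← mulCocycles₂.ker_toGroupCohomology]
  exact (Nat.card_congr (QuotientGroup.quotientKerEquivOfSurjective _
    (mulCocycles₂.toGroupCohomology_surjective G A)).toEquiv).symm

end Comparison

section Pairing

variable {G A : Type*} [Group G] [CommGroup A]

theorem mulCocycles₂.apply_one_left (α : mulCocycles₂ G A) (g : G) : α 1 g = α 1 1 := by
  simpa using (α.2 1 1 g).symm

theorem mulCocycles₂.apply_one_right (α : mulCocycles₂ G A) (g : G) : α g 1 = α 1 1 := by
  simpa using α.2 g 1 1

/-- The commutator form of a cocycle `α`: for commuting `g` and `h` it is the commutator of lifts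
of `g` and `h` to the central extension defined by `α`. -/
def commForm (α : mulCocycles₂ G A) (g h : G) : A := α g h / α h g

theorem commForm_inv (α : mulCocycles₂ G A) (g h : G) : (commForm α g h)⁻¹ = commForm α h g :=
  inv_div _ _

theorem commForm_mul_left (α : mulCocycles₂ G A) {g h z : G} (hg : Commute g z)
    (hh : Commute h z) : commForm α (g * h) z = commForm α g z * commForm α h z := by
  simp only [commForm]
  rw [div_mul_div_comm, div_eq_div_iff_mul_eq_mul]
  refine mul_right_cancel (b := α g h) ?_
  calc α (g * h) z * (α z g * α z h) * α g h
      = α (g * h) z * α g h * (α z g * α z h) := by ac_rfl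
    _ = α h z * (α z g * (α z h * α g (z * h))) := by rw [α.2, hh.eq]; ac_rfl
    _ = α h z * (α g z * (α (z * g) h * α z g)) := by rw [← α.2 g z h, hg.eq]; ac_rfl
    _ = α g z * α h z * α z (g * h) * α g h := by rw [α.2]; ac_rfl

theorem commForm_mul_right (α : mulCocycles₂ G A) {g h z : G} (hg : Commute z g)
    (hh : Commute z h) : commForm α z (g * h) = commForm α z g * commForm α z h := by
  rw [← commForm_inv, commForm_mul_left α hg.symm hh.symm, mul_inv, commForm_inv, commForm_inv]

/-- The bimultiplicative map `(z, g) ↦ commForm α g z` on `Z(G) × G`. -/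
def commPairing (α : mulCocycles₂ G A) : Subgroup.center G →* G →* A :=
  MonoidHom.mk' (fun z => MonoidHom.mk' (fun g => commForm α g z) fun g h =>
    commForm_mul_left α (Subgroup.mem_center_iff.1 z.2 g) (Subgroup.mem_center_iff.1 z.2 h))
    fun z w => MonoidHom.ext fun g =>
      commForm_mul_right α (Subgroup.mem_center_iff.1 z.2 g) (Subgroup.mem_center_iff.1 w.2 g)

namespace MulH2

/-- The homomorphism `H²(G, A) → Hom(G, A)` given by pairing with a central element. -/
def pairing (z : Subgroup.center G) : MulH2 G A →* G →* A :=
  QuotientGroup.lift _ (MonoidHom.mk' (fun α => commPairing α z) fun α β => MonoidHom.ext fun g =>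
    mul_div_mul_comm (α g z) (β g z) (α z g) (β z g)) <| by
      rintro _ ⟨x, rfl⟩
      ext g
      change x z / x (g * z) * x g / (x g / x (z * g) * x z) = 1
      rw [Subgroup.mem_center_iff.1 z.2 g, div_mul_comm, mul_comm (x g / _), div_self']

theorem pairing_mk (z : Subgroup.center G) (α : mulCocycles₂ G A) :
    pairing z (α : MulH2 G A) = commPairing α z := rfl

theorem pairing_pow_orderOf (z : Subgroup.center G) (c : MulH2 G A) :
    pairing z c ^ orderOf z = 1 := by
  obtain ⟨α, rfl⟩ := QuotientGroup.mk_surjective c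
  rw [pairing_mk, ← map_pow, pow_orderOf_eq_one, map_one]

end MulH2

/-- The central extension of `G` by `A` defined by a 2-cocycle `α`, as the set `G × A` with twisted
multiplication. As `α` is not assumed normalized, the identity element is `(1, (α 1 1)⁻¹)`. -/
@[ext]
structure CocycleExtension (α : mulCocycles₂ G A) where
  base : G
  fiber : A

namespace CocycleExtension

variable {α : mulCocycles₂ G A}

instance : Mul (CocycleExtension α) :=
  ⟨fun x y => ⟨x.base * y.base, x.fiber * y.fiber * α x.base y.base⟩⟩

instance : One (CocycleExtension α) := ⟨⟨1, (α 1 1)⁻¹⟩⟩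

instance : Inv (CocycleExtension α) :=
  ⟨fun x => ⟨x.base⁻¹, (x.fiber * α x.base⁻¹ x.base * α 1 1)⁻¹⟩⟩

@[simp] theorem base_mul (x y : CocycleExtension α) : (x * y).base = x.base * y.base := rfl

@[simp] theorem fiber_mul (x y : CocycleExtension α) :
    (x * y).fiber = x.fiber * y.fiber * α x.base y.base := rfl

@[simp] theorem base_one : (1 : CocycleExtension α).base = 1 := rfl

@[simp] theorem fiber_one : (1 : CocycleExtension α).fiber = (α 1 1)⁻¹ := rfl

@[simp] theorem base_inv (x : CocycleExtension α) : x⁻¹.base = x.base⁻¹ := rfl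

@[simp] theorem fiber_inv (x : CocycleExtension α) :
    x⁻¹.fiber = (x.fiber * α x.base⁻¹ x.base * α 1 1)⁻¹ := rfl

instance : Group (CocycleExtension α) := Group.ofLeftAxioms
  (fun x y z => by
    ext
    · simp [mul_assoc]
    · calc x.fiber * y.fiber * α x.base y.base * z.fiber * α (x.base * y.base) z.base
          = x.fiber * y.fiber * z.fiber * (α (x.base * y.base) z.base * α x.base y.base) := by
            ac_rfl
        _ = x.fiber * (y.fiber * z.fiber * α y.base z.base) * α x.base (y.base * z.base) := by
            rw [α.2]; ac_rfl)
  (fun x => by ext <;> simp [mulCocycles₂.apply_one_left])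
  (fun x => by ext <;> simp [mul_assoc, mul_comm])

variable (α)

/-- The projection of the extension onto `G`. -/
def proj : CocycleExtension α →* G where
  toFun := base
  map_one' := rfl
  map_mul' _ _ := rfl

/-- The inclusion of `A` into the extension. -/
def incl : A →* CocycleExtension α where
  toFun a := ⟨1, a * (α 1 1)⁻¹⟩
  map_one' := by ext <;> simp
  map_mul' a b := by ext <;> simp [mul_assoc, mul_comm, mul_left_comm]

variable {α}

theorem proj_surjective : Function.Surjective (proj α) := fun g => ⟨⟨g, 1⟩, rfl⟩

theorem incl_injective : Function.Injective (incl α) := fun _ _ h =>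
  mul_right_cancel (congrArg fiber h)

theorem incl_mul (a : A) (x : CocycleExtension α) : incl α a * x = ⟨x.base, a * x.fiber⟩ := by
  ext <;> simp [incl, mulCocycles₂.apply_one_left, mul_comm, mul_left_comm]

theorem exists_incl_mul_eq {x y : CocycleExtension α} (h : proj α x = proj α y) :
    ∃ a, incl α a * x = y :=
  ⟨y.fiber / x.fiber, by rw [incl_mul]; ext; exacts [h, div_mul_cancel _ _]⟩

theorem commute_iff {x y : CocycleExtension α} (h : Commute x.base y.base) :
    Commute x y ↔ commForm α x.base y.base = 1 := by
  rw [commute_iff_eq, CocycleExtension.ext_iff, commForm, div_eq_one]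
  simp only [base_mul, fiber_mul, h.eq, true_and, mul_comm y.fiber, mul_right_inj]

theorem incl_mem_center (a : A) : incl α a ∈ Subgroup.center (CocycleExtension α) :=
  Subgroup.mem_center_iff.2 fun x => (commute_iff (Commute.one_right _)).2 <| by
    change α x.base 1 / α 1 x.base = 1
    rw [mulCocycles₂.apply_one_left, mulCocycles₂.apply_one_right, div_self']

end CocycleExtension

end Pairing

section Inflation

variable {G Q A : Type*} [Group G] [Group Q] [CommGroup A]

/-- The inflation map `Z²(Q, A) → Z²(G, A)` along `f : G →* Q`. -/
def inflCocycle (f : G →* Q) : mulCocycles₂ Q A →* mulCocycles₂ G A where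
  toFun β := ⟨fun g h => β (f g) (f h), fun g h k => by simpa only [map_mul] using β.2 _ _ _⟩
  map_one' := rfl
  map_mul' _ _ := rfl

theorem inflCocycle_mulCoboundary (f : G →* Q) (x : Q → A) :
    inflCocycle f (mulCoboundary Q A x) = mulCoboundary G A (x ∘ f) := by
  ext g h
  change x (f h) / x (f g * f h) * x (f g) = x (f h) / x (f (g * h)) * x (f g)
  rw [map_mul]

/-- The inflation map `H²(Q, A) → H²(G, A)` along `f : G →* Q`. -/
def MulH2.infl (f : G →* Q) : MulH2 Q A →* MulH2 G A :=
  QuotientGroup.map _ _ (inflCocycle f) <| by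
    rintro _ ⟨x, rfl⟩
    exact ⟨x ∘ f, (inflCocycle_mulCoboundary f x).symm⟩

theorem exists_inflCocycle_eq {f : G →* Q} (hf : Function.Surjective f) (α : mulCocycles₂ G A)
    (hα : ∀ g h, ∀ m n : f.ker, α (g * m) (h * n) = α g h) : ∃ β, inflCocycle f β = α := by
  have hα' : ∀ {g g' h h'}, f g = f g' → f h = f h' → α g h = α g' h' := fun {g g' h h'} hg hh => by
    simpa using (hα g h ⟨g⁻¹ * g', f.eq_iff.1 hg.symm⟩ ⟨h⁻¹ * h', f.eq_iff.1 hh.symm⟩).symm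
  let s := Function.surjInv hf
  have hs : ∀ q, f (s q) = q := Function.surjInv_eq hf
  refine ⟨⟨fun q q' => α (s q) (s q'), fun q₁ q₂ q₃ => ?_⟩, ?_⟩
  · beta_reduce
    rw [hα' (g' := s q₁ * s q₂) (by simp only [map_mul, hs]) rfl,
      hα' (h := s (q₂ * q₃)) (h' := s q₂ * s q₃) rfl (by simp only [map_mul, hs]), α.2]
  · ext g h
    exact hα' (hs _) (hs _)

theorem exists_ker_retraction (f : G →* Q) :
    ∃ r : G → f.ker, ∀ (g : G) (n : f.ker), r (g * n) = r g * n := by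
  have hs (g : G) : f (Function.invFun f (f g)) = f g := Function.invFun_eq ⟨g, rfl⟩
  refine ⟨fun g => ⟨(Function.invFun f (f g))⁻¹ * g, f.eq_iff.1 (hs g).symm⟩, fun g n => ?_⟩
  ext
  simp [f.mem_ker.1 n.2, mul_assoc]

end Inflation

section Transgression

variable {G Q A : Type*} [Group G] [Group Q] [CommGroup A]

theorem mulCoboundary_mul_ker (f : G →* Q) (hZ : f.ker ≤ Subgroup.center G) {χ : f.ker →* A}
    {u : G → A} (hu : ∀ g (n : f.ker), u (g * n) = u g * χ n) (g h : G) (m n : f.ker) :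
    mulCoboundary G A u (g * m) (h * n) = mulCoboundary G A u g h := by
  change u (h * n) / u (g * m * (h * n)) * u (g * m) = u h / u (g * h) * u g
  have hgh : g * m * (h * n) = g * h * (m * n : f.ker) := by
    rw [mul_assoc, ← mul_assoc (m : G), ← Subgroup.mem_center_iff.1 (hZ m.2) h]
    simp [mul_assoc]
  rw [hgh, hu, hu, hu, map_mul, mul_comm (χ m), mul_div_mul_comm, mul_mul_mul_comm,
    div_mul_cancel_left, inv_mul_cancel, mul_one]

theorem exists_inflCocycle_eq_mulCoboundary {f : G →* Q} (hf : Function.Surjective f)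
    (hZ : f.ker ≤ Subgroup.center G) (χ : f.ker →* A) :
    ∃ (β : mulCocycles₂ Q A) (u : G → A),
      inflCocycle f β = mulCoboundary G A u ∧ ∀ g (n : f.ker), u (g * n) = u g * χ n := by
  obtain ⟨r, hr⟩ := exists_ker_retraction f
  have hu (g : G) (n : f.ker) : χ (r (g * n)) = χ (r g) * χ n := by rw [hr, map_mul]
  obtain ⟨β, hβ⟩ := exists_inflCocycle_eq hf (mulCoboundary G A fun g => χ (r g))
    (mulCoboundary_mul_ker f hZ hu)
  exact ⟨β, _, hβ, hu⟩

theorem map_eq_one_of_mulCoboundary_eq_one {v : G → A} (hv : mulCoboundary G A v = 1) {n : G}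
    (hn : n ∈ commutator G) : v n = 1 := by
  have hmul (g h : G) : v (g * h) = v g * v h := by
    have h1 : v h / v (g * h) * v g = 1 := congrFun (congrFun (congrArg Subtype.val hv) g) h
    rw [div_mul_eq_mul_div, div_eq_one] at h1
    rw [← h1, mul_comm]
  exact Abelianization.commutator_subset_ker (MonoidHom.mk' v hmul) hn

theorem eq_of_mk_eq_mk_of_inflCocycle_eq_mulCoboundary {f : G →* Q} (hD : f.ker ≤ commutator G)
    {χ χ' : f.ker →* A} {β β' : mulCocycles₂ Q A} {u u' : G → A}
    (hβ : inflCocycle f β = mulCoboundary G A u) (hu : ∀ g (n : f.ker), u (g * n) = u g * χ n)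
    (hβ' : inflCocycle f β' = mulCoboundary G A u')
    (hu' : ∀ g (n : f.ker), u' (g * n) = u' g * χ' n)
    (h : (β : MulH2 Q A) = β') : χ = χ' := by
  obtain ⟨x, hx⟩ := QuotientGroup.eq.1 h
  -- `u' / u` restricts to `χ' / χ` on the kernel, and dividing by `x ∘ f` makes it a homomorphism.
  have hv : mulCoboundary G A (u' / u / (x ∘ f)) = 1 := by
    rw [map_div, map_div, ← inflCocycle_mulCoboundary, hx, map_mul, map_inv, hβ, hβ',
      inv_mul_eq_div, div_self']
  ext n
  have h1 : u' 1 / u 1 / x (f 1) = 1 := map_eq_one_of_mulCoboundary_eq_one hv (one_mem _)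
  have hn : u' n / u n / x (f n) = 1 := map_eq_one_of_mulCoboundary_eq_one hv (hD n.2)
  rw [← one_mul (n : G), hu, hu', one_mul, f.mem_ker.1 n.2, ← map_one f, mul_div_mul_comm,
    mul_div_right_comm, h1, one_mul, div_eq_one] at hn
  exact hn.symm

end Transgression

section Exactness

variable {G Q A K : Type*} [Group G] [Group Q] [CommGroup A] [Field K]

theorem exists_units_pow_eq [IsAlgClosed K] {n : ℕ} (hn : n ≠ 0) (a : Kˣ) :
    ∃ b : Kˣ, b ^ n = a := by
  obtain ⟨b, hb⟩ := IsAlgClosed.exists_pow_nat_eq (a : K) (Nat.pos_of_ne_zero hn)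
  have hb0 : IsUnit b := (isUnit_pow_iff hn).1 (hb ▸ a.isUnit)
  exact ⟨hb0.unit, Units.ext hb⟩

namespace CocycleExtension

variable {α : mulCocycles₂ G A}

theorem mk_mul_mk (x : G → A) (g h : G) :
    (⟨g, x g⟩ * ⟨h, x h⟩ : CocycleExtension α) =
      incl α ((α * mulCoboundary G A x : mulCocycles₂ G A) g h) * ⟨g * h, x (g * h)⟩ := by
  rw [incl_mul]
  ext
  · rfl
  change x g * x h * α g h = α g h * (x h / x (g * h) * x g) * x (g * h)
  rw [mul_assoc (α g h), mul_right_comm (x h / _), div_mul_cancel, mul_comm, mul_comm (x g)]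

theorem mk_mem_range_infl {f : G →* Q} (hf : Function.Surjective f)
    {κ : f.ker →* CocycleExtension α} (hproj : ∀ n, proj α (κ n) = n)
    (hcenter : ∀ n, κ n ∈ Subgroup.center (CocycleExtension α)) :
    (α : MulH2 G A) ∈ (MulH2.infl f).range := by
  obtain ⟨r, hr⟩ := exists_ker_retraction f
  -- A section `w` with `w (g * n) = w g * κ n` has a cocycle that is constant on cosets of `f.ker`.
  let x : G → A := fun g => ((⟨g * (r g : G)⁻¹, 1⟩ : CocycleExtension α) * κ (r g)).fiber
  let w : G → CocycleExtension α := fun g => ⟨g, x g⟩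
  have hw_mul_ker (g : G) (n : f.ker) : w (g * n) = w g * κ n := by
    have hw (g : G) : w g = ⟨g * (r g : G)⁻¹, 1⟩ * κ (r g) := by
      ext
      · exact ((congrArg _ (hproj _)).trans (inv_mul_cancel_right _ _)).symm
      · rfl
    rw [hw, hw, hr, map_mul, ← mul_assoc, Subgroup.coe_mul, mul_inv_rev, mul_assoc g,
      mul_inv_cancel_left]
  have hcomm (n : f.ker) (e : CocycleExtension α) : κ n * e = e * κ n :=
    (Subgroup.mem_center_iff.1 (hcenter n) e).symm
  have hw_mul (g h : G) (m n : f.ker) :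
      w (g * m) * w (h * n) = w g * w h * κ (m * n) ∧
        w (g * m * (h * n)) = w (g * h) * κ (m * n) := by
    have hm : (m : G) * h = h * m := by
      obtain ⟨e, rfl⟩ := proj_surjective (α := α) h
      rw [← hproj, ← map_mul, ← map_mul, hcomm]
    constructor
    · simp only [hw_mul_ker, map_mul, mul_assoc]
      rw [← mul_assoc (κ m) (w h), hcomm, mul_assoc]
    · rw [← hw_mul_ker, mul_assoc, ← mul_assoc (m : G), hm]
      simp only [Subgroup.coe_mul, mul_assoc]
  obtain ⟨β, hβ⟩ := exists_inflCocycle_eq hf (α * mulCoboundary G A x) fun g h m n => by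
    refine incl_injective (α := α) (mul_right_cancel (b := w (g * h) * κ (m * n)) ?_)
    rw [← (hw_mul g h m n).2, ← mk_mul_mk, (hw_mul g h m n).1, (hw_mul g h m n).2, ← mul_assoc,
      ← mk_mul_mk]
  refine ⟨β, (congrArg _ hβ).trans ?_⟩
  exact (QuotientGroup.mk_mul_of_mem α ⟨x, rfl⟩)

theorem exists_central_lift [IsAlgClosed K] {α : mulCocycles₂ G Kˣ} {z : Subgroup.center G}
    (hfin : IsOfFinOrder (z : G)) (hz : commPairing α z = 1) :
    ∃ ζ ∈ Subgroup.center (CocycleExtension α), proj α ζ = z ∧ ζ ^ orderOf (z : G) = 1 := by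
  let x : CocycleExtension α := ⟨z, 1⟩
  have hx : x ∈ Subgroup.center (CocycleExtension α) := Subgroup.mem_center_iff.2 fun e =>
    (commute_iff (x := e) (y := x) (Subgroup.mem_center_iff.1 z.2 e.base)).2
      (DFunLike.congr_fun hz e.base)
  obtain ⟨a, ha⟩ : ∃ a, incl α a * 1 = x ^ orderOf (z : G) :=
    exists_incl_mul_eq (by rw [map_one, map_pow]; exact (pow_orderOf_eq_one (z : G)).symm)
  obtain ⟨b, hb⟩ := exists_units_pow_eq hfin.orderOf_pos.ne' a⁻¹
  refine ⟨incl α b * x, mul_mem (incl_mem_center b) hx, one_mul _, ?_⟩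
  rw [Commute.mul_pow (Subgroup.mem_center_iff.1 hx _), ← ha, mul_one, ← map_pow, ← map_mul, hb,
    inv_mul_cancel, map_one]

theorem exists_central_splitting [IsAlgClosed K] {α : mulCocycles₂ G Kˣ} {z : Subgroup.center G}
    (hfin : IsOfFinOrder (z : G)) (hz : commPairing α z = 1) {N : Subgroup G}
    (hN : N = Subgroup.zpowers (z : G)) :
    ∃ κ : N →* CocycleExtension α,
      (∀ n, proj α (κ n) = n) ∧ ∀ n, κ n ∈ Subgroup.center (CocycleExtension α) := by
  subst hN
  obtain ⟨ζ, hζ, hproj, hpow⟩ := exists_central_lift hfin hz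
  let g : Subgroup.zpowers (z : G) := ⟨z, Subgroup.mem_zpowers _⟩
  have hg (n : Subgroup.zpowers (z : G)) : n ∈ Subgroup.zpowers g := by
    obtain ⟨_, i, rfl⟩ := n
    exact ⟨i, rfl⟩
  have hdvd : orderOf ζ ∣ orderOf g := by
    rw [Subgroup.orderOf_mk]
    exact orderOf_dvd_of_pow_eq_one hpow
  refine ⟨monoidHomOfForallMemZpowers hg hdvd, fun n => ?_, fun n => ?_⟩ <;>
    obtain ⟨i, rfl⟩ := hg n <;>
    simp only [map_zpow, monoidHomOfForallMemZpowers_apply_gen]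
  · rw [hproj]
    rfl
  · exact zpow_mem hζ i

end CocycleExtension

theorem MulH2.ker_pairing [IsAlgClosed K] {f : G →* Q} (hf : Function.Surjective f)
    {z : Subgroup.center G} (hfin : IsOfFinOrder (z : G))
    (hz : f.ker = Subgroup.zpowers (z : G)) :
    (pairing z : MulH2 G Kˣ →* G →* Kˣ).ker = (infl f).range := by
  apply le_antisymm
  · intro c hc
    obtain ⟨α, rfl⟩ := QuotientGroup.mk_surjective c
    obtain ⟨κ, hproj, hcenter⟩ := CocycleExtension.exists_central_splitting hfin hc hz
    exact CocycleExtension.mk_mem_range_infl hf hproj hcenter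
  · rintro _ ⟨b, rfl⟩
    obtain ⟨β, rfl⟩ := QuotientGroup.mk_surjective b
    ext g
    have hfz : f z = 1 := f.mem_ker.1 (hz ▸ Subgroup.mem_zpowers _)
    change ((β (f g) (f z) / β (f z) (f g) : Kˣ) : K) = 1
    rw [hfz, mulCocycles₂.apply_one_left, mulCocycles₂.apply_one_right, div_self', Units.val_one]

end Exactness

section Counting

variable {G Q A K : Type*} [Group G] [Group Q] [CommGroup A] [Field K]

theorem mulCoboundary_prod [Fintype G] (α : mulCocycles₂ G A) :
    mulCoboundary G A (fun g => ∏ k, α g k) = α ^ Fintype.card G := by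
  ext g h
  change (∏ k, α h k) / (∏ k, α (g * h) k) * ∏ k, α g k = α g h ^ Fintype.card G
  rw [← Equiv.prod_comp (Equiv.mulLeft h) (α g ·), ← Finset.prod_div_distrib,
    ← Finset.prod_mul_distrib]
  refine Finset.prod_eq_pow_card fun k _ => ?_
  rw [Equiv.coe_mulLeft, div_mul_eq_mul_div, ← α.2 g h k, mul_div_cancel_left]

theorem MulH2.exists_mk_eq_and_pow_card_eq_one [Finite G] [IsAlgClosed K] (c : MulH2 G Kˣ) :
    ∃ γ : mulCocycles₂ G Kˣ, (γ : MulH2 G Kˣ) = c ∧ γ ^ Nat.card G = 1 := by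
  have := Fintype.ofFinite G
  obtain ⟨α, rfl⟩ := QuotientGroup.mk_surjective c
  choose y hy using fun g => exists_units_pow_eq (Fintype.card_ne_zero (α := G)) (∏ k, α g k)
  refine ⟨α * mulCoboundary G Kˣ y⁻¹, QuotientGroup.mk_mul_of_mem α ⟨_, rfl⟩, ?_⟩
  rw [mul_pow, Nat.card_eq_fintype_card, ← mulCoboundary_prod, ← map_pow, ← map_mul]
  convert map_one (mulCoboundary G Kˣ)
  ext g
  simp [← hy]

instance [Finite G] [IsAlgClosed K] : Finite (MulH2 G Kˣ) := by
  have : NeZero (Nat.card G) := ⟨Nat.card_pos.ne'⟩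
  have : Finite {γ : mulCocycles₂ G Kˣ // γ ^ Nat.card G = 1} :=
    Finite.of_injective (β := G → G → rootsOfUnity (Nat.card G) K)
      (fun γ g h => ⟨γ.1 g h, congrFun (congrFun (congrArg Subtype.val γ.2) g) h⟩)
      fun γ γ' hγ => Subtype.ext <| Subtype.ext <| funext fun g => funext fun h =>
        congrArg Subtype.val (congrFun (congrFun hγ g) h)
  refine Finite.of_surjective
    (fun γ : {γ : mulCocycles₂ G Kˣ // γ ^ Nat.card G = 1} => (γ.1 : MulH2 G Kˣ)) fun c => ?_
  obtain ⟨γ, hγ, hpow⟩ := c.exists_mk_eq_and_pow_card_eq_one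
  exact ⟨⟨γ, hpow⟩, hγ⟩

theorem card_ker_le_card_ker_infl [Finite G] [IsAlgClosed K] [CharZero K] {f : G →* Q}
    (hf : Function.Surjective f) (hZ : f.ker ≤ Subgroup.center G) (hD : f.ker ≤ commutator G) :
    Nat.card f.ker ≤ Nat.card (MulH2.infl f : MulH2 Q Kˣ →* _).ker := by
  have : Finite Q := Finite.of_surjective f hf
  let : CommGroup f.ker :=
    { mul_comm := fun m n => Subtype.ext (Subgroup.mem_center_iff.1 (hZ n.2) m) }
  choose β u hβ hu using exists_inflCocycle_eq_mulCoboundary (A := Kˣ) hf hZ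
  rw [← CommGroup.card_monoidHom_of_hasEnoughRootsOfUnity f.ker K]
  refine Nat.card_le_card_of_injective
    (fun χ => ⟨(β χ : MulH2 Q Kˣ), (QuotientGroup.eq_one_iff _).2 ⟨u χ, (hβ χ).symm⟩⟩)
    fun χ χ' h => ?_
  exact eq_of_mk_eq_mk_of_inflCocycle_eq_mulCoboundary hD (hβ χ) (hu χ) (hβ χ') (hu χ')
    (congrArg Subtype.val h)

theorem MulH2.card_ker_infl_mul_card [IsAlgClosed K] {f : G →* Q} (hf : Function.Surjective f)
    {z : Subgroup.center G} (hfin : IsOfFinOrder (z : G))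
    (hz : f.ker = Subgroup.zpowers (z : G)) :
    Nat.card (infl f : MulH2 Q Kˣ →* _).ker * Nat.card (MulH2 G Kˣ) =
      Nat.card (pairing z : MulH2 G Kˣ →* G →* Kˣ).range * Nat.card (MulH2 Q Kˣ) := by
  rw [← Subgroup.card_mul_index (infl f : MulH2 Q Kˣ →* MulH2 G Kˣ).ker,
    ← Subgroup.card_mul_index (pairing z : MulH2 G Kˣ →* G →* Kˣ).ker, Subgroup.index_ker,
    Subgroup.index_ker, ker_pairing hf hfin hz]
  ring

end Counting

section Bounds

universe u

variable {G Q A K : Type*} [Group G] [Group Q] [CommGroup A] [Field K]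

theorem card_le_pow_of_separates {n : ℕ} [NeZero n] {F : Subgroup (G →* Kˣ)}
    (hF : ∀ χ ∈ F, χ ^ n = 1) {T : Finset G}
    (hT : ∀ χ ∈ F, (∀ t ∈ T, χ t = 1) → χ = 1) : Nat.card F ≤ n ^ T.card := by
  let eval (χ : F) (t : T) : rootsOfUnity n K := ⟨χ.1 t, DFunLike.congr_fun (hF χ χ.2) (t : G)⟩
  have eval_injective : Function.Injective eval := fun χ ψ h => by
    refine div_eq_one.1 (Subtype.ext (hT _ (χ / ψ).2 fun t ht => div_eq_one.2 ?_))
    exact congrArg Subtype.val (congrFun h ⟨t, ht⟩)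
  calc Nat.card F ≤ Nat.card (T → rootsOfUnity n K) :=
        Nat.card_le_card_of_injective eval eval_injective
    _ = Nat.card (rootsOfUnity n K) ^ T.card := by
        rw [Nat.card_fun, Nat.card_eq_fintype_card (α := T), Fintype.card_coe]
    _ ≤ n ^ T.card := Nat.pow_le_pow_left (by
        simpa only [Nat.card_eq_fintype_card] using card_rootsOfUnity K n) _

theorem closure_image_erase_eq_top [DecidableEq G] [DecidableEq Q] {f : G →* Q}
    (hf : Function.Surjective f) {z : G} (hz : z ∈ f.ker) {T : Finset G}
    (hT : Subgroup.closure (T : Set G) = ⊤) :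
    Subgroup.closure ((T.erase z).image f : Set Q) = ⊤ := by
  rw [eq_top_iff, ← MonoidHom.range_eq_top.2 hf, MonoidHom.range_eq_map, ← hT,
    MonoidHom.map_closure, Subgroup.closure_le]
  rintro _ ⟨t, ht, rfl⟩
  by_cases htz : t = z
  · rw [htz, f.mem_ker.1 hz]
    exact one_mem _
  · exact Subgroup.subset_closure (Finset.mem_image_of_mem f (Finset.mem_erase.2 ⟨htz, ht⟩))

theorem card_eq_orderOf_mul_card_map {f : G →* Q} {z : G} (hz : f.ker = Subgroup.zpowers z)
    {H : Subgroup G} (hzH : z ∈ H) : Nat.card H = orderOf z * Nat.card (H.map f) := by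
  rw [← Subgroup.relIndex_ker (K := H) f, hz, ← Nat.card_zpowers, ← Subgroup.relIndex_bot_left,
    ← Subgroup.relIndex_bot_left,
    Subgroup.relIndex_mul_relIndex _ _ _ bot_le (Subgroup.zpowers_le.2 hzH)]

theorem card_eq_orderOf_mul_card {f : G →* Q} (hf : Function.Surjective f) {z : G}
    (hz : f.ker = Subgroup.zpowers z) : Nat.card G = orderOf z * Nat.card Q := by
  rw [← Subgroup.card_top (G := Q), ← Subgroup.map_top_of_surjective f hf,
    ← card_eq_orderOf_mul_card_map hz (Subgroup.mem_top z), Subgroup.card_top]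

namespace MulH2

theorem card_range_pairing_le_pow {z : Subgroup.center G} (hz : IsOfFinOrder z) {T : Finset G}
    (hT : ∀ c : MulH2 G Kˣ, (∀ t ∈ T, pairing z c t = 1) → pairing z c = 1) :
    Nat.card (pairing z : MulH2 G Kˣ →* G →* Kˣ).range ≤ orderOf z ^ T.card := by
  have : NeZero (orderOf z) := ⟨hz.orderOf_pos.ne'⟩
  apply card_le_pow_of_separates
  · rintro _ ⟨c, rfl⟩
    exact pairing_pow_orderOf z c
  · rintro _ ⟨c, rfl⟩
    exact hT c

theorem pairing_self (z : Subgroup.center G) (c : MulH2 G A) : pairing z c z = 1 := by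
  obtain ⟨α, rfl⟩ := QuotientGroup.mk_surjective c
  exact div_self' _

theorem card_range_pairing_le_card_quotient [IsAlgClosed K] [CharZero K] {G : Type*} [CommGroup G]
    [Finite G] (z : Subgroup.center G) :
    Nat.card (pairing z : MulH2 G Kˣ →* G →* Kˣ).range ≤
      Nat.card (G ⧸ Subgroup.zpowers (z : G)) := by
  have hker (χ : (pairing z : MulH2 G Kˣ →* G →* Kˣ).range) :
      Subgroup.zpowers (z : G) ≤ χ.1.ker := by
    obtain ⟨_, c, rfl⟩ := χ
    exact Subgroup.zpowers_le.2 (pairing_self z c)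
  rw [← CommGroup.card_monoidHom_of_hasEnoughRootsOfUnity (G ⧸ Subgroup.zpowers (z : G)) K]
  refine Nat.card_le_card_of_injective (fun χ => QuotientGroup.lift _ χ.1 (hker χ)) ?_
  intro χ ψ h
  ext g
  exact congrArg Units.val (DFunLike.congr_fun h (g : G ⧸ Subgroup.zpowers (z : G)))

theorem card_le_card_range_pairing_mul [IsAlgClosed K] [Finite G] {f : G →* Q}
    (hf : Function.Surjective f) {z : Subgroup.center G}
    (hz : f.ker = Subgroup.zpowers (z : G)) :
    Nat.card (MulH2 G Kˣ) ≤
      Nat.card (pairing z : MulH2 G Kˣ →* G →* Kˣ).range * Nat.card (MulH2 Q Kˣ) := by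
  have : Finite Q := Finite.of_surjective f hf
  rw [← card_ker_infl_mul_card hf (isOfFinOrder_of_finite _) hz]
  exact Nat.le_mul_of_pos_left _ Nat.card_pos

theorem orderOf_mul_card_le [IsAlgClosed K] [CharZero K] [Finite G] {f : G →* Q}
    (hf : Function.Surjective f) {z : Subgroup.center G}
    (hz : f.ker = Subgroup.zpowers (z : G)) (hD : (z : G) ∈ commutator G) :
    orderOf z * Nat.card (MulH2 G Kˣ) ≤
      Nat.card (pairing z : MulH2 G Kˣ →* G →* Kˣ).range * Nat.card (MulH2 Q Kˣ) := by
  rw [← card_ker_infl_mul_card hf (isOfFinOrder_of_finite _) hz, ← Subgroup.orderOf_coe,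
    ← Nat.card_zpowers, ← hz]
  refine Nat.mul_le_mul_right _ (card_ker_le_card_ker_infl hf ?_ ?_)
  · rw [hz, Subgroup.zpowers_le]
    exact z.2
  · rwa [hz, Subgroup.zpowers_le]

instance [Subsingleton G] : Subsingleton (MulH2 G A) := by
  refine subsingleton_of_forall_eq 1 fun c => ?_
  obtain ⟨α, rfl⟩ := QuotientGroup.mk_surjective c
  refine (QuotientGroup.eq_one_iff α).2 ⟨fun _ => α 1 1, ?_⟩
  ext g h
  change α 1 1 / α 1 1 * α 1 1 = α g h
  rw [Subsingleton.elim g 1, Subsingleton.elim h 1, div_self', one_mul]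

theorem card_range_pairing_le_pow_card_erase [DecidableEq G] {z : Subgroup.center G}
    (hz : IsOfFinOrder z) {T : Finset G} (hT : Subgroup.closure (T : Set G) = ⊤) :
    Nat.card (pairing z : MulH2 G Kˣ →* G →* Kˣ).range ≤ orderOf z ^ (T.erase (z : G)).card := by
  refine card_range_pairing_le_pow hz fun c hc => MonoidHom.eq_of_eqOn_dense hT fun t ht => ?_
  by_cases htz : t = z
  · exact htz ▸ pairing_self z c
  · exact hc t (Finset.mem_erase.2 ⟨htz, ht⟩)

variable (K) in
theorem card_sq_mul_card_le_card_pow_rank [IsAlgClosed K] [CharZero K] (G : Type u) [CommGroup G]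
    [Finite G] : Nat.card (MulH2 G Kˣ) ^ 2 * Nat.card G ≤ Nat.card G ^ Group.rank G := by
  classical
  induction hr : Group.rank G using Nat.strong_induction_on generalizing G with | h r ih
  obtain ⟨T, hTr, hT⟩ := Group.rank_spec G
  obtain rfl | ⟨z, hzT⟩ := T.eq_empty_or_nonempty
  · rw [Finset.coe_empty, Subgroup.closure_empty] at hT
    have : Subsingleton G := Subgroup.subsingleton_iff.1 (subsingleton_of_bot_eq_top hT)
    simp
  let ζ : Subgroup.center G := ⟨z, by simp [CommGroup.center_eq_top]⟩
  let Q := G ⧸ Subgroup.zpowers z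
  let f : G →* Q := QuotientGroup.mk' _
  have hf : Function.Surjective f := QuotientGroup.mk'_surjective _
  have hz : f.ker = Subgroup.zpowers z := QuotientGroup.ker_mk' _
  let R := Nat.card (pairing ζ : MulH2 G Kˣ →* G →* Kˣ).range
  have hT' : (T.erase z).card + 1 = r := by rw [Finset.card_erase_add_one hzT, hTr, hr]
  have hM : Nat.card (MulH2 G Kˣ) ≤ R * Nat.card (MulH2 Q Kˣ) :=
    card_le_card_range_pairing_mul (z := ζ) hf hz
  have hRQ : R ≤ Nat.card Q := card_range_pairing_le_card_quotient ζ
  have hRz : R ≤ orderOf ζ ^ (T.erase z).card :=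
    card_range_pairing_le_pow_card_erase (isOfFinOrder_of_finite ζ) hT
  have hQ : Nat.card (MulH2 Q Kˣ) ^ 2 * Nat.card Q ≤ Nat.card Q ^ (T.erase z).card := by
    have hrank : Group.rank Q ≤ (T.erase z).card :=
      (Group.rank_le (closure_image_erase_eq_top hf (hz.ge (Subgroup.mem_zpowers z)) hT)).trans
        Finset.card_image_le
    exact (ih _ (by lia) Q rfl).trans (Nat.pow_le_pow_right Nat.card_pos hrank)
  have hG : Nat.card G = orderOf ζ * Nat.card Q := by
    rw [← Subgroup.orderOf_coe, card_eq_orderOf_mul_card hf hz]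
  calc Nat.card (MulH2 G Kˣ) ^ 2 * Nat.card G
      ≤ (R * Nat.card (MulH2 Q Kˣ)) ^ 2 * (orderOf ζ * Nat.card Q) := by rw [hG]; gcongr
    _ = R * R * orderOf ζ * (Nat.card (MulH2 Q Kˣ) ^ 2 * Nat.card Q) := by ring
    _ ≤ orderOf ζ ^ (T.erase z).card * Nat.card Q * orderOf ζ * Nat.card Q ^ (T.erase z).card := by
        gcongr
    _ = Nat.card G ^ r := by rw [← hT', hG]; ring

end MulH2
end Bounds

section LowerCentralSeries

variable {G Q : Type*} [Group G] [Group Q]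

theorem commutator_commutator_le_of_rotate_s1 {H₁ H₂ H₃ N : Subgroup G} [N.Normal]
    (h1 : ⁅⁅H₂, H₃⁆, H₁⁆ ≤ N) (h2 : ⁅⁅H₃, H₁⁆, H₂⁆ ≤ N) : ⁅⁅H₁, H₂⁆, H₃⁆ ≤ N := by
  have le_iff (H : Subgroup G) : H ≤ N ↔ H.map (QuotientGroup.mk' N) = ⊥ := by
    rw [Subgroup.map_eq_bot_iff, QuotientGroup.ker_mk']
  rw [le_iff, Subgroup.map_commutator, Subgroup.map_commutator] at *
  exact Subgroup.commutator_commutator_eq_bot_of_rotate h1 h2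

theorem commutator_lowerCentralSeries_le_s1 (i j : ℕ) :
    ⁅(⊤ : Subgroup G).lowerCentralSeries i, (⊤ : Subgroup G).lowerCentralSeries j⁆ ≤
      (⊤ : Subgroup G).lowerCentralSeries (i + j + 1) := by
  induction j generalizing i with
  | zero => exact le_rfl
  | succ j ih =>
    rw [Subgroup.commutator_comm, Subgroup.lowerCentralSeries_succ]
    apply commutator_commutator_le_of_rotate_s1
    · rw [Subgroup.commutator_comm ⊤, ← add_assoc, add_right_comm i j 1]
      exact ih (i + 1)
    · exact Subgroup.commutator_mono (ih i) le_rfl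

theorem lowerCentralSeries_le_center {N : Subgroup G} {c : ℕ}
    (h : ⁅N, (⊤ : Subgroup G).lowerCentralSeries c⁆ = ⊥) :
    N.lowerCentralSeries c ≤ Subgroup.center G := by
  suffices commutator_eq_bot : ∀ i j, i + j = c →
      ⁅N.lowerCentralSeries i, (⊤ : Subgroup G).lowerCentralSeries j⁆ = ⊥ from
    Subgroup.commutator_top_right_eq_bot_iff_le_center.1 (commutator_eq_bot c 0 (add_zero c))
  intro i
  induction i with
  | zero =>
    rintro j hj
    rwa [Subgroup.lowerCentralSeries_zero, ← zero_add j, hj]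
  | succ i ih =>
    intro j hij
    rw [Subgroup.lowerCentralSeries_succ]
    apply Subgroup.commutator_commutator_eq_bot_of_rotate
    · rw [← le_bot_iff, ← ih (j + 1) (by lia), Subgroup.commutator_comm, Subgroup.commutator_comm N]
      exact Subgroup.commutator_mono le_rfl (Subgroup.commutator_mono le_rfl le_top)
    · rw [← le_bot_iff, ← h, Subgroup.commutator_comm N, ← hij, add_right_comm, add_comm i j]
      refine Subgroup.commutator_mono (le_trans ?_ (commutator_lowerCentralSeries_le_s1 j i)) le_rfl
      exact Subgroup.commutator_mono le_rfl (Subgroup.lowerCentralSeries_mono i le_top)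

theorem exists_finset_of_notMem_upperCentralSeries {g : G} {c : ℕ}
    (hg : g ∉ Subgroup.upperCentralSeries G c) (i : ℕ) :
    ∃ T : Finset G, T.card ≤ c ∧ ∀ X : Subgroup G, (T : Set G) ⊆ X →
      g ∈ X.lowerCentralSeries i → X.lowerCentralSeries (i + c) ≠ ⊥ := by
  classical
  induction c generalizing g i with
  | zero => exact ⟨∅, le_rfl, fun X _ hgX h => hg (h.le hgX)⟩
  | succ c ih =>
    obtain ⟨y, hy⟩ := not_forall.1 (mt Subgroup.mem_upperCentralSeries_succ_iff.2 hg)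
    obtain ⟨T, hTc, hT⟩ := ih hy (i + 1)
    refine ⟨insert y T, (Finset.card_insert_le y T).trans (Nat.succ_le_succ hTc), ?_⟩
    intro X hX hgX
    rw [Finset.coe_insert, Set.insert_subset_iff] at hX
    rw [← add_assoc, ← add_right_comm]
    exact hT X hX.2 (Subgroup.commutator_mem_commutator hgX hX.1)

theorem exists_finset_lowerCentralSeries_closure_ne_bot {c : ℕ}
    (hc : (⊤ : Subgroup G).lowerCentralSeries c ≠ ⊥) :
    ∃ T : Finset G, T.card ≤ c + 1 ∧
      (Subgroup.closure (T : Set G)).lowerCentralSeries c ≠ ⊥ := by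
  classical
  rw [Ne, Subgroup.lowerCentralSeries_eq_bot_iff_upperCentralSeries_eq_top,
    Subgroup.eq_top_iff'] at hc
  obtain ⟨g, hg⟩ := not_forall.1 hc
  obtain ⟨T, hTc, hT⟩ := exists_finset_of_notMem_upperCentralSeries hg 0
  refine ⟨insert g T, (Finset.card_insert_le g T).trans (Nat.succ_le_succ hTc), ?_⟩
  have hX := Subgroup.subset_closure (k := (↑(insert g T) : Set G))
  rw [Finset.coe_insert, Set.insert_subset_iff] at hX
  rw [Finset.coe_insert, ← zero_add c]
  exact hT _ hX.2 hX.1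

theorem lowerCentralSeries_le_ker_iff [Group.IsNilpotent Q] {f : G →* Q}
    (hf : Function.Surjective f) {c : ℕ} :
    (⊤ : Subgroup G).lowerCentralSeries c ≤ f.ker ↔ Group.nilpotencyClass Q ≤ c := by
  rw [← Subgroup.lowerCentralSeries_eq_bot_iff_nilpotencyClass_le, ← Subgroup.map_eq_bot_iff,
    Subgroup.map_lowerCentralSeries, Subgroup.map_top_of_surjective f hf]

theorem nilpotencyClass_eq_of_lowerCentralSeries_le_ker [Group.IsNilpotent Q] {f : G →* Q}
    (hf : Function.Surjective f) (hZ : f.ker ≤ Subgroup.center G) {c : ℕ}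
    (hc : (⊤ : Subgroup G).lowerCentralSeries c ≠ ⊥)
    (hL : (⊤ : Subgroup G).lowerCentralSeries c ≤ f.ker) : Group.nilpotencyClass Q = c := by
  have := Subgroup.isNilpotent_of_ker_le_center f hZ
  rw [Ne, Subgroup.lowerCentralSeries_eq_bot_iff_nilpotencyClass_le] at hc
  have hcQ := (lowerCentralSeries_le_ker_iff hf).1 hL
  have hcG := Group.nilpotencyClass_le_of_ker_le_center f hZ
  lia

theorem exists_center_orderOf_eq_prime [Finite G] {p : ℕ} [hp : Fact p.Prime] (hG : IsPGroup p G)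
    {c : ℕ} (hc : (⊤ : Subgroup G).lowerCentralSeries c ≠ ⊥)
    (hc' : (⊤ : Subgroup G).lowerCentralSeries (c + 1) = ⊥) :
    ∃ z : Subgroup.center G, (z : G) ∈ (⊤ : Subgroup G).lowerCentralSeries c ∧ orderOf z = p := by
  have hL := Subgroup.commutator_top_right_eq_bot_iff_le_center.1 hc'
  have := (Subgroup.nontrivial_iff_ne_bot _).2 hc
  obtain ⟨n, hn, hcard⟩ := (hG.to_subgroup _).nontrivial_iff_card.1 this
  obtain ⟨z, hz⟩ := exists_prime_orderOf_dvd_card' p (hcard ▸ dvd_pow_self p hn.ne')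
  exact ⟨⟨z, hL z.2⟩, z.2, by rw [Subgroup.orderOf_mk, Subgroup.orderOf_coe, hz]⟩

theorem mem_of_le_zpowers_of_ne_bot {z : G} (hz : (orderOf z).Prime) {H : Subgroup G}
    (hH : H ≤ Subgroup.zpowers z) (hne : H ≠ ⊥) : z ∈ H := by
  have : Fact (Nat.card (Subgroup.zpowers z)).Prime := ⟨(Nat.card_zpowers z).symm ▸ hz⟩
  obtain h | h := (H.subgroupOf (Subgroup.zpowers z)).eq_bot_or_eq_top_of_prime_card
  · exact absurd ((Subgroup.subgroupOf_eq_bot.1 h).eq_bot_of_le hH) hne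
  · exact Subgroup.subgroupOf_eq_top.1 h (Subgroup.mem_zpowers z)

end LowerCentralSeries

section PairingBound

variable {G Q A K : Type*} [Group G] [Group Q] [CommGroup A] [Field K]

theorem commPairing_eq_one_of_mem_lowerCentralSeries {α : mulCocycles₂ G A}
    {z : Subgroup.center G} {c : ℕ}
    (hL : (⊤ : Subgroup G).lowerCentralSeries c ≤ Subgroup.zpowers (z : G)) {X : Subgroup G}
    (hz : (z : G) ∈ X.lowerCentralSeries c) (hX : ∀ x ∈ X, commPairing α z x = 1) :
    commPairing α z = 1 := by
  let π := CocycleExtension.proj α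
  have hπ : Function.Surjective π := CocycleExtension.proj_surjective
  -- The `c`-th term of the extension's lower central series lies over `⟨z⟩`, so it commutes with
  -- the preimage of `X`; hence the `c`-th term of that preimage, which meets the fibre over `z`,
  -- is central.
  have hcomm : ⁅X.comap π, (⊤ : Subgroup (CocycleExtension α)).lowerCentralSeries c⁆ = ⊥ := by
    rw [Subgroup.commutator_eq_bot_iff_le_centralizer]
    intro x hx e he
    obtain ⟨i, hi : (z : G) ^ i = e.base⟩ : π e ∈ Subgroup.zpowers (z : G) := hL <| by
      rw [← Subgroup.map_top_of_surjective π hπ, ← Subgroup.map_lowerCentralSeries]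
      exact Subgroup.mem_map_of_mem π he
    have hform : commPairing α (z ^ i) x.base = 1 := by
      rw [map_zpow, MonoidHom.zpow_apply, hX x.base hx, one_zpow]
    refine ((CocycleExtension.commute_iff (x := x) (y := e) ?_).2 ?_).eq.symm
    · exact hi ▸ Subgroup.mem_center_iff.1 (z ^ i).2 x.base
    · exact hi ▸ hform
  rw [← Subgroup.map_comap_eq_self_of_surjective hπ X, ← Subgroup.map_lowerCentralSeries] at hz
  obtain ⟨e, he, hez : e.base = z⟩ := hz
  ext g
  have hcenter := Subgroup.mem_center_iff.1 (lowerCentralSeries_le_center hcomm he) ⟨g, 1⟩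
  have hform := (CocycleExtension.commute_iff (y := e) ?_).1 hcenter
  · rw [hez] at hform
    exact hform
  · rw [hez]
    exact Subgroup.mem_center_iff.1 z.2 g

theorem MulH2.card_range_pairing_le_pow_succ {z : Subgroup.center G} (hp : (orderOf z).Prime)
    {c : ℕ} (hL : (⊤ : Subgroup G).lowerCentralSeries c ≤ Subgroup.zpowers (z : G))
    (hc : (⊤ : Subgroup G).lowerCentralSeries c ≠ ⊥) :
    Nat.card (pairing z : MulH2 G Kˣ →* G →* Kˣ).range ≤ orderOf z ^ (c + 1) := by
  obtain ⟨T, hTc, hT⟩ := exists_finset_lowerCentralSeries_closure_ne_bot hc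
  have hzT : (z : G) ∈ (Subgroup.closure (T : Set G)).lowerCentralSeries c :=
    mem_of_le_zpowers_of_ne_bot (by rwa [Subgroup.orderOf_coe])
      ((Subgroup.lowerCentralSeries_mono c le_top).trans hL) hT
  refine (card_range_pairing_le_pow (orderOf_pos_iff.1 hp.pos) (T := T) fun b hb => ?_).trans
    (Nat.pow_le_pow_right hp.pos hTc)
  obtain ⟨α, rfl⟩ := QuotientGroup.mk_surjective b
  refine commPairing_eq_one_of_mem_lowerCentralSeries hL hzT fun x hx => ?_
  exact (Subgroup.closure_le (commPairing α z).ker).2 hb hx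

theorem MulH2.card_range_pairing_le_pow_rank [Group.FG G] {z : Subgroup.center G}
    (hz : IsOfFinOrder z) :
    Nat.card (pairing z : MulH2 G Kˣ →* G →* Kˣ).range ≤ orderOf z ^ Group.rank G := by
  obtain ⟨T, hTr, hT⟩ := Group.rank_spec G
  rw [← hTr]
  exact card_range_pairing_le_pow hz fun c hc => MonoidHom.eq_of_eqOn_dense hT hc

theorem MulH2.card_range_pairing_mul_pow_le [Group.FG G] {z : Subgroup.center G}
    (hp : (orderOf z).Prime) {c d : ℕ}
    (hL : (⊤ : Subgroup G).lowerCentralSeries c ≤ Subgroup.zpowers (z : G))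
    (hc : (⊤ : Subgroup G).lowerCentralSeries c ≠ ⊥) (hd : Group.rank G ≤ d) :
    Nat.card (pairing z : MulH2 G Kˣ →* G →* Kˣ).range * orderOf z ^ (d - (c + 1)) ≤
      orderOf z ^ d := by
  obtain h | h := le_total (c + 1) d
  · rw [← pow_mul_pow_sub _ h]
    exact Nat.mul_le_mul_right _ (card_range_pairing_le_pow_succ hp hL hc)
  · rw [Nat.sub_eq_zero_of_le h, pow_zero, mul_one]
    exact (card_range_pairing_le_pow_rank (orderOf_pos_iff.1 hp.pos)).trans
      (Nat.pow_le_pow_right hp.pos hd)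

end PairingBound

instance {G : Type*} [Group G] (z : Subgroup.center G) : (Subgroup.zpowers (z : G)).Normal := by
  refine ⟨fun x hx g => ?_⟩
  rwa [Subgroup.mem_center_iff.1 (Subgroup.zpowers_le.2 z.2 hx) g, mul_inv_cancel_right]

namespace MulH2

universe u

variable {G Q K : Type*} [Group G] [Group Q] [Field K] [IsAlgClosed K] [CharZero K]

theorem card_sq_mul_pow_le_of_quotient [Finite G] {f : G →* Q} (hf : Function.Surjective f)
    {z : Subgroup.center G} (hz : f.ker = Subgroup.zpowers (z : G)) (hD : (z : G) ∈ commutator G)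
    {d S t : ℕ}
    (ht : Nat.card (pairing z : MulH2 G Kˣ →* G →* Kˣ).range * orderOf z ^ t ≤
      orderOf z ^ (d + 1))
    (hQ : Nat.card (MulH2 Q Kˣ) ^ 2 * (orderOf z ^ S) ^ 2 ≤
      (Nat.card Q * Nat.card (commutator Q)) ^ d) :
    Nat.card (MulH2 G Kˣ) ^ 2 * (orderOf z ^ (S + t)) ^ 2 ≤
      (Nat.card G * Nat.card (commutator G)) ^ d := by
  have hG : Nat.card G = orderOf z * Nat.card Q := by
    rw [← Subgroup.orderOf_coe, card_eq_orderOf_mul_card hf hz]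
  have hG' : Nat.card (commutator G) = orderOf z * Nat.card (commutator Q) := by
    rw [← Subgroup.orderOf_coe, card_eq_orderOf_mul_card_map hz hD, commutator_def,
      Subgroup.map_commutator, Subgroup.map_top_of_surjective f hf, ← commutator_def]
  have hM := orderOf_mul_card_le (K := K) hf hz hD
  set M := Nat.card (MulH2 G Kˣ)
  set MQ := Nat.card (MulH2 Q Kˣ)
  set R := Nat.card (pairing z : MulH2 G Kˣ →* G →* Kˣ).range
  set q := orderOf z
  have hq : 0 < q := orderOf_pos z
  refine Nat.le_of_mul_le_mul_left ?_ (pow_pos hq 2)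
  calc q ^ 2 * (M ^ 2 * (q ^ (S + t)) ^ 2)
      = (q * M) ^ 2 * (q ^ (S + t)) ^ 2 := by ring
    _ ≤ (R * MQ) ^ 2 * (q ^ (S + t)) ^ 2 := by gcongr
    _ = (R * q ^ t) ^ 2 * (MQ ^ 2 * (q ^ S) ^ 2) := by ring
    _ ≤ (q ^ (d + 1)) ^ 2 * (Nat.card Q * Nat.card (commutator Q)) ^ d := by gcongr
    _ = q ^ 2 * (q ^ 2 * (Nat.card Q * Nat.card (commutator Q))) ^ d := by
        rw [mul_pow (q ^ 2)]; ring
    _ = q ^ 2 * (Nat.card G * Nat.card (commutator G)) ^ d := by rw [hG, hG']; ring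

variable (K) in
theorem card_sq_le_of_isMulCommutative [Finite G] [IsMulCommutative G] {d : ℕ}
    (hd : Group.rank G ≤ d + 1) : Nat.card (MulH2 G Kˣ) ^ 2 ≤ Nat.card G ^ d := by
  let : CommGroup G := { mul_comm := mul_comm' }
  refine Nat.le_of_mul_le_mul_right ?_ (Nat.card_pos (α := G))
  rw [← pow_succ]
  exact (card_sq_mul_card_le_card_pow_rank K G).trans (Nat.pow_le_pow_right Nat.card_pos hd)

theorem card_sq_mul_pow_le_of_quotient_zpowers [Finite G] [Group.IsNilpotent G]
    {z : Subgroup.center G} (hp : (orderOf z).Prime) {c d : ℕ} (hc : 1 ≤ c)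
    (hcG : Group.nilpotencyClass G = c + 1)
    (hzL : (z : G) ∈ (⊤ : Subgroup G).lowerCentralSeries c) (hd : Group.rank G ≤ d + 1)
    (hQ : Nat.card (MulH2 (G ⧸ Subgroup.zpowers (z : G)) Kˣ) ^ 2 *
        (orderOf z ^ ∑ i ∈ Finset.Icc 2 (Group.nilpotencyClass (G ⧸ Subgroup.zpowers (z : G))),
          (d + 1 - i)) ^ 2 ≤
      (Nat.card (G ⧸ Subgroup.zpowers (z : G)) *
        Nat.card (commutator (G ⧸ Subgroup.zpowers (z : G)))) ^ d) :
    Nat.card (MulH2 G Kˣ) ^ 2 * (orderOf z ^ ∑ i ∈ Finset.Icc 2 (c + 1), (d + 1 - i)) ^ 2 ≤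
      (Nat.card G * Nat.card (commutator G)) ^ d := by
  let f := QuotientGroup.mk' (Subgroup.zpowers (z : G))
  have hf : Function.Surjective f := QuotientGroup.mk'_surjective _
  have hz : f.ker = Subgroup.zpowers (z : G) := QuotientGroup.ker_mk' _
  have hD : (z : G) ∈ commutator G := Subgroup.lowerCentralSeries_antitone _ hc hzL
  have hne : (⊤ : Subgroup G).lowerCentralSeries c ≠ ⊥ := by
    rw [Ne, Subgroup.lowerCentralSeries_eq_bot_iff_nilpotencyClass_le]
    lia
  by_cases hL : (⊤ : Subgroup G).lowerCentralSeries c ≤ f.ker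
  · rw [nilpotencyClass_eq_of_lowerCentralSeries_le_ker hf
      (hz.trans_le (Subgroup.zpowers_le.2 z.2)) hne hL] at hQ
    rw [Finset.sum_Icc_succ_top (by lia)]
    exact card_sq_mul_pow_le_of_quotient hf hz hD
      (card_range_pairing_mul_pow_le hp (hz ▸ hL) hne hd) hQ
  · have hcQ : Group.nilpotencyClass (G ⧸ Subgroup.zpowers (z : G)) = c + 1 :=
      ((Group.nilpotencyClass_quotient_le _).trans hcG.le).antisymm
        (not_le.1 (mt (lowerCentralSeries_le_ker_iff hf).2 hL))
    rw [hcQ] at hQ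
    refine card_sq_mul_pow_le_of_quotient hf hz hD (t := 0) ?_ hQ
    rw [pow_zero, mul_one]
    exact (card_range_pairing_le_pow_rank (isOfFinOrder_of_finite z)).trans
      (Nat.pow_le_pow_right hp.pos hd)

variable (K) in
theorem card_sq_mul_pow_le {p : ℕ} [hp : Fact p.Prime] {d : ℕ} (G : Type u) [Group G] [Finite G]
    [Group.IsNilpotent G] (hG : IsPGroup p G) (hd : Group.rank G ≤ d + 1) :
    Nat.card (MulH2 G Kˣ) ^ 2 *
        (p ^ ∑ i ∈ Finset.Icc 2 (Group.nilpotencyClass G), (d + 1 - i)) ^ 2 ≤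
      (Nat.card G * Nat.card (commutator G)) ^ d := by
  induction hN : Nat.card G using Nat.strong_induction_on generalizing G with | h N ih
  subst hN
  obtain hc | hc := le_or_gt (Group.nilpotencyClass G) 1
  · have hG' : commutator G = ⊥ :=
      Subgroup.lowerCentralSeries_eq_bot_iff_nilpotencyClass_le.2 hc
    have := (commutator_eq_bot_iff G).1 hG'
    rw [Finset.Icc_eq_empty_of_lt (by lia), Finset.sum_empty, pow_zero, one_pow, mul_one, hG',
      Subgroup.card_bot, mul_one]
    exact card_sq_le_of_isMulCommutative K hd
  obtain ⟨c, hcG⟩ : ∃ c, Group.nilpotencyClass G = c + 1 := ⟨_, (Nat.sub_add_cancel hc.le).symm⟩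
  obtain ⟨z, hzL, rfl⟩ := exists_center_orderOf_eq_prime hG
    (mt Subgroup.lowerCentralSeries_eq_bot_iff_nilpotencyClass_le.1 (by lia))
    (Subgroup.lowerCentralSeries_eq_bot_iff_nilpotencyClass_le.2 hcG.le)
  have hf := QuotientGroup.mk'_surjective (Subgroup.zpowers (z : G))
  have hlt : Nat.card (G ⧸ Subgroup.zpowers (z : G)) < Nat.card G := by
    rw [card_eq_orderOf_mul_card hf (QuotientGroup.ker_mk' _), Subgroup.orderOf_coe]
    exact lt_mul_of_one_lt_left Nat.card_pos hp.out.one_lt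
  have hQ := ih _ hlt _ (hG.to_quotient _) ((Group.rank_le_of_surjective _ hf).trans hd) rfl
  rw [hcG]
  exact card_sq_mul_pow_le_of_quotient_zpowers hp.out (by lia) hcG hzL hd hQ

end MulH2

theorem card_schurMultiplier (G : Type) [Group G] :
    Nat.card (schurMultiplier G) = Nat.card (MulH2 G ℂˣ) :=
  card_groupCohomology_two_trivial G ℂˣ

theorem le_rpow_of_sq_mul_pow_sq_le {p x : ℝ} (hp : 0 < p) {s m : ℕ}
    (h : x ^ 2 * (p ^ s) ^ 2 ≤ p ^ m) : x ≤ p ^ ((m : ℝ) / 2 - s) := by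
  have hp_sq : (p ^ ((m : ℝ) / 2 - s)) ^ 2 * (p ^ s) ^ 2 = p ^ m := by
    rw [← mul_pow, ← Real.rpow_natCast p s, ← Real.rpow_add hp, sub_add_cancel,
      ← Real.rpow_mul_natCast hp.le, Nat.cast_two, div_mul_cancel₀ _ two_ne_zero,
      Real.rpow_natCast]
  rw [← hp_sq] at h
  exact le_of_sq_le_sq (le_of_mul_le_mul_right h (by positivity)) (by positivity)

theorem sum_Icc_two_min_sub (d c : ℕ) :
    ∑ i ∈ Finset.Icc 2 (min d c), ((d : ℝ) - i) =
      ((∑ i ∈ Finset.Icc 2 c, (d - i) : ℕ) : ℝ) := by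
  rw [Nat.cast_sum, ← Finset.sum_subset (Finset.Icc_subset_Icc_right (min_le_right d c))]
  · refine Finset.sum_congr rfl fun i hi => (Nat.cast_sub ?_).symm
    exact (Finset.mem_Icc.1 hi).2.trans (min_le_left d c)
  · intro i hi hi'
    rw [Finset.mem_Icc] at hi hi'
    rw [Nat.sub_eq_zero_of_le (by lia), Nat.cast_zero]

theorem sum_Icc_two_const_sub (x : ℝ) (m : ℕ) :
    ∑ i ∈ Finset.Icc 2 (m + 1), (x - i) = m * (x - (m + 3) / 2) := by
  induction m with
  | zero => simp
  | succ m ih =>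
    rw [Finset.sum_Icc_succ_top (by lia), ih]
    push_cast
    ring

theorem sum_Icc_two_sub {d : ℕ} (hd : 0 < d) :
    ∑ i ∈ Finset.Icc 2 d, ((d : ℝ) - i) = ((d : ℝ) - 1) * ((d : ℝ) - 2) / 2 := by
  obtain ⟨m, rfl⟩ := Nat.exists_eq_succ_of_ne_zero hd.ne'
  rw [Nat.succ_eq_add_one, sum_Icc_two_const_sub]
  push_cast
  ring

theorem schur_multiplier_bound_of_d_le_class_general (p n k c d : ℕ) (hp : p.Prime)
    (G : Type) [Group G] [Finite G] [Group.IsNilpotent G]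
    (hcard : Nat.card G = p ^ n)
    (hc : Group.nilpotencyClass G = c)
    (hk : Nat.card (commutator G) = p ^ k)
    (hd : Group.rank G = d) :
    (Nat.card (schurMultiplier G) : ℝ) ≤
      (p : ℝ) ^ (((d : ℝ) - 1) * ((n : ℝ) + (k : ℝ)) / 2
        - ∑ i ∈ Finset.Icc 2 (min d c), ((d : ℝ) - i)) := by
  have : Fact p.Prime := ⟨hp⟩
  rw [card_schurMultiplier]
  cases d with
  | zero =>
    have : Subsingleton G := Group.rank_eq_zero_iff.1 hd
    rw [Nat.card_unique, eq_comm, Nat.pow_eq_one, or_iff_right hp.ne_one] at hcard hk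
    simp [hcard, hk]
  | succ d =>
    have h := MulH2.card_sq_mul_pow_le ℂ G (IsPGroup.of_card hcard) hd.le
    rw [hc, hcard, hk, ← pow_add, ← pow_mul _ _ d] at h
    rw [sum_Icc_two_min_sub]
    convert le_rpow_of_sq_mul_pow_sq_le (p := p) (x := Nat.card (MulH2 G ℂˣ))
      (mod_cast hp.pos) (mod_cast h) using 3
    push_cast
    ring

/-- Theorem 1, the case `d ≤ c`:
`|M(G)| ≤ p ^ ((d - 1) * (n + k) / 2 - (d - 1) * (d - 2) / 2)`. -/
theorem schur_multiplier_bound_of_d_le_class (p n k c d : ℕ) (hp : p.Prime)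
    (G : Type) [Group G] [Finite G] [Group.IsNilpotent G]
    (hcard : Nat.card G = p ^ n)
    (hna : ∃ a b : G, a * b ≠ b * a)
    (hc : Group.nilpotencyClass G = c)
    (hk : Nat.card (commutator G) = p ^ k)
    (hd : Group.rank G = d)
    (hdc : d ≤ c) :
    (Nat.card (schurMultiplier G) : ℝ) ≤
      (p : ℝ) ^ (((d : ℝ) - 1) * ((n : ℝ) + (k : ℝ)) / 2
        - ((d : ℝ) - 1) * ((d : ℝ) - 2) / 2) := by
  obtain ⟨a, b, hab⟩ := hna
  have : Nontrivial G := ⟨a, b, fun h => hab (by rw [h])⟩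
  have hd0 : 0 < d := hd ▸ Group.rank_pos (G := G)
  simpa only [min_eq_left hdc, sum_Icc_two_sub hd0] using
    schur_multiplier_bound_of_d_le_class_general p n k c d hp G hcard hc hk hd
end

section
/- Let p be a prime and G a non-abelian finite p-group of order p^n and nilpotency class c, with derived subgroup of order p^k and minimal number of generators d. If d ≥ c, then |M(G)| ≤ p^{(1/2)(d-1)(n+k) − (1/2)(c-1)(2d−(c+2))}. -/
/-! Let `F → G` be a free presentation with kernel `R`, put `H = F ⧸ ⁅R, F⁆`, and let `Z ≤ H` be
the image of `R`, which is central. Every `2`-cocycle of `G` becomes a coboundary on `H`;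
restricting a primitive to `Z ∩ H'` embeds `M(G)` into `Hom(Z ∩ H', ℂˣ)`, so that
`|M(G)| |G'| ≤ |H'|`.

The order of `H'` is bounded along the lower central series `γ₁ = H, γ₂ = H', …`. The quotient
`γ₂ / γ₃` is governed by an alternating pairing on `H ⧸ γ₂ Z`. For `i ≥ 2`, the quotient
`γᵢ₊₁ / γᵢ₊₂` is spanned by the images of the commutators with the `d` generators, each a quotient
of `γᵢ / γᵢ₊₁ (γᵢ ∩ Z)`. A left-normed commutator `w` of weight `i` in the generators involves at
most `i` of them, and by the Hall-Witt identity `⁅w, y⁆` lies in the span of the commutators with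
those. So if `w` lies outside `γᵢ₊₁ Z`, each of the other `d - i` generators saves a factor `p`. -/

namespace SchurMultiplierBound

open Subgroup
open scoped commutatorElement IsMulCommutative

section RelIndex

theorem relIndex_sup_eq_mul {G : Type*} [Group G] (N X Y : Subgroup G) [N.Normal] [X.Normal] :
    N.relIndex (X ⊔ Y) = N.relIndex X * (N ⊔ X).relIndex Y := by
  rw [← relIndex_sup_left (X ⊔ Y) N, ← relIndex_sup_left X N, ← relIndex_sup_left Y (N ⊔ X),
    sup_assoc, relIndex_mul_relIndex _ _ _ le_sup_left (sup_le_sup_left le_sup_left N)]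

variable {C ι : Type*} [CommGroup C]

theorem relIndex_dvd_of_le_right (N : Subgroup C) {X Y : Subgroup C} (hXY : X ≤ Y) :
    N.relIndex X ∣ N.relIndex Y :=
  Dvd.intro _ (by rw [← relIndex_sup_eq_mul, sup_eq_right.2 hXY])

theorem relIndex_biSup_dvd_prod (N : Subgroup C) (B : ι → Subgroup C) (S : Finset ι) :
    N.relIndex (⨆ j ∈ S, B j) ∣ ∏ j ∈ S, N.relIndex (B j) := by
  classical
  induction S using Finset.induction_on with
  | empty => simp
  | insert s S hs ih =>
    rw [Finset.iSup_insert, relIndex_sup_eq_mul, Finset.prod_insert hs]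
    exact mul_dvd_mul_left _ ((relIndex_dvd_of_le_left _ le_sup_left).trans ih)

theorem index_sup_zpowers_mul_dvd {A : Type*} [Group A] {V : Subgroup A} {p a : ℕ} (hp : p.Prime)
    (hV : V.index = p ^ a) {w : A} (hw : w ∉ V) : (V ⊔ zpowers w).index * p ∣ V.index := by
  have hmul : V.relIndex (V ⊔ zpowers w) * (V ⊔ zpowers w).index = V.index :=
    relIndex_mul_index le_sup_left
  have hne : V.relIndex (V ⊔ zpowers w) ≠ 1 := fun h =>
    hw (relIndex_eq_one.1 h (le_sup_right (a := V) (mem_zpowers w)))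
  obtain ⟨b, -, hb⟩ := (Nat.dvd_prime_pow hp).1 (hV ▸ Dvd.intro _ hmul)
  have hpb : p ∣ V.relIndex (V ⊔ zpowers w) := by
    rw [hb] at hne ⊢
    exact dvd_pow_self p fun h => hne (by rw [h, pow_zero])
  rw [← hmul, mul_comm]
  exact mul_dvd_mul_right hpb _

end RelIndex

section Homs

variable {A C ι : Type*} [Group A] [CommGroup C]

theorem card_iSup_range_dvd [Fintype ι] [DecidableEq ι] (θ : ι → A →* C) (S : Finset ι)
    {V W : Subgroup A} (hV : ∀ s ∈ S, V ≤ (θ s).ker)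
    (hW : ∀ j ∉ S, W ≤ (⨆ s ∈ S, (θ s).range).comap (θ j)) :
    Nat.card ↥(⨆ j, (θ j).range) ∣ V.index ^ S.card * W.index ^ Sᶜ.card := by
  set T : Subgroup C := ⨆ s ∈ S, (θ s).range
  have hsplit : ⨆ j, (θ j).range = T ⊔ ⨆ j ∈ Sᶜ, (θ j).range := by
    simp only [T, ← Finset.iSup_union, Finset.union_compl, Finset.mem_univ, iSup_pos]
  have hS : Nat.card T ∣ V.index ^ S.card := by
    rw [← relIndex_bot_left, ← Finset.prod_const]
    refine (relIndex_biSup_dvd_prod _ _ _).trans (Finset.prod_dvd_prod_of_dvd _ _ fun s hs => ?_)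
    rw [relIndex_bot_left, ← index_ker]
    exact index_dvd_of_le (hV s hs)
  have hSc : T.relIndex (⨆ j ∈ Sᶜ, (θ j).range) ∣ W.index ^ Sᶜ.card := by
    rw [← Finset.prod_const]
    refine (relIndex_biSup_dvd_prod _ _ _).trans (Finset.prod_dvd_prod_of_dvd _ _ fun j hj => ?_)
    rw [MonoidHom.range_eq_map, ← relIndex_comap, relIndex_top_right]
    exact index_dvd_of_le (hW j (Finset.mem_compl.1 hj))
  rw [hsplit, ← relIndex_bot_left, relIndex_sup_eq_mul, bot_sup_eq, relIndex_bot_left]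
  exact mul_dvd_mul hS hSc

theorem card_iSup_range_mul_pow_dvd [Fintype ι] (θ : ι → A →* C) (S : Finset ι) {V : Subgroup A}
    (hV : ∀ j, V ≤ (θ j).ker) {p a : ℕ} (hp : p.Prime) (hVp : V.index = p ^ a) {w : A}
    (hwV : w ∉ V) (hw : ∀ j, θ j w ∈ ⨆ s ∈ S, (θ s).range) :
    Nat.card ↥(⨆ j, (θ j).range) * p ^ (Fintype.card ι - S.card) ∣ V.index ^ Fintype.card ι := by
  classical
  have hW : ∀ j ∉ S, V ⊔ zpowers w ≤ (⨆ s ∈ S, (θ s).range).comap (θ j) := fun j _ =>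
    sup_le ((hV j).trans (ker_le_comap _ _)) (zpowers_le.2 (hw j))
  rw [← Finset.card_compl]
  calc
    _ ∣ V.index ^ S.card * (V ⊔ zpowers w).index ^ Sᶜ.card * p ^ Sᶜ.card :=
      mul_dvd_mul_right (card_iSup_range_dvd θ S (fun s _ => hV s) hW) _
    _ = V.index ^ S.card * ((V ⊔ zpowers w).index * p) ^ Sᶜ.card := by rw [mul_assoc, mul_pow]
    _ ∣ V.index ^ S.card * V.index ^ Sᶜ.card :=
      mul_dvd_mul_left _ (pow_dvd_pow_of_dvd (index_sup_zpowers_mul_dvd hp hVp hwV) _)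
    _ = V.index ^ Fintype.card ι := by rw [← pow_add, Finset.card_add_card_compl]

theorem iSup_range_eq_iSup_range_flip {D : Type*} [Group D] (B : A →* D →* C) {x : ι → D}
    (hx : closure (Set.range x) = ⊤) : ⨆ a, (B a).range = ⨆ j, (B.flip (x j)).range := by
  apply le_antisymm
  · refine iSup_le fun a => ?_
    rw [MonoidHom.range_eq_map, ← hx, map_le_iff_le_comap, closure_le]
    rintro _ ⟨j, rfl⟩
    exact mem_iSup_of_mem j ⟨a, rfl⟩
  · refine iSup_le fun j => ?_
    rintro _ ⟨a, rfl⟩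
    exact mem_iSup_of_mem a ⟨x j, rfl⟩

theorem alternating_swap {B : A →* A →* C} (hB : ∀ a, B a a = 1) (a b : A) :
    B a b = (B b a)⁻¹ := by
  have h := hB (a * b)
  simp only [map_mul, MonoidHom.mul_apply, hB, one_mul, mul_one] at h
  exact eq_inv_of_mul_eq_one_right h

theorem relIndex_range_dvd_of_alternating {B : A →* A →* C} (hB : ∀ a, B a a = 1) (x : ι → A)
    (S : Finset ι) {V : Subgroup A} {N : Subgroup C} (hVN : ∀ v ∈ V, ∀ a, B v a ∈ N) (b : A)
    (hgen : closure (x '' S) ⊔ (V ⊔ zpowers b) = ⊤) :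
    N.relIndex (B b).range ∣ V.relIndex (V ⊔ zpowers b) ^ S.card := by
  set V' := V ⊔ zpowers b
  let T : Subgroup C := ⨆ j ∈ S, V'.map (B.flip (x j))
  have hb : b ∈ V' := le_sup_right (a := V) (mem_zpowers b)
  have hle : (B b).range ≤ N ⊔ T := by
    rw [MonoidHom.range_eq_map, ← hgen, map_le_iff_le_comap, sup_le_iff, closure_le, sup_le_iff,
      zpowers_le]
    refine ⟨?_, fun v hv => ?_, ?_⟩
    · rintro _ ⟨j, hj, rfl⟩
      exact mem_sup_right (mem_iSup_of_mem j (mem_iSup_of_mem hj ⟨b, hb, rfl⟩))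
    · rw [mem_comap, alternating_swap hB]
      exact mem_sup_left (inv_mem (hVN v hv b))
    · rw [mem_comap, hB]
      exact one_mem _
  calc
    _ ∣ N.relIndex (N ⊔ T) := relIndex_dvd_of_le_right N hle
    _ = N.relIndex T := relIndex_sup_left T N
    _ ∣ ∏ j ∈ S, N.relIndex (V'.map (B.flip (x j))) := relIndex_biSup_dvd_prod _ _ _
    _ ∣ ∏ _j ∈ S, V.relIndex V' := by
      refine Finset.prod_dvd_prod_of_dvd _ _ fun j _ => ?_
      rw [← relIndex_comap]
      exact relIndex_dvd_of_le_left _ fun v hv => hVN v hv (x j)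
    _ = V.relIndex V' ^ S.card := Finset.prod_const _

theorem sq_relIndex_iSup_range_mul_index_dvd {B : A →* A →* C} (hB : ∀ a, B a a = 1) (x : ι → A)
    (S : Finset ι) (V : Subgroup A) (N : Subgroup C) (hVN : ∀ v ∈ V, ∀ a, B v a ∈ N)
    (hgen : closure (x '' S) ⊔ V = ⊤) :
    N.relIndex (⨆ a, (B a).range) ^ 2 * V.index ∣ V.index ^ S.card := by
  classical
  induction S using Finset.induction_on generalizing V N with
  | empty =>
    have hV : V = ⊤ := by simpa using hgen
    have hN : ⨆ a, (B a).range ≤ N := iSup_le fun a => by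
      rintro _ ⟨b, rfl⟩
      exact hVN a (hV ▸ mem_top a) b
    simp [hV, relIndex_eq_one.2 hN]
  | insert s S hs ih =>
    set b := x s
    set V' := V ⊔ zpowers b
    have hgen' : closure (x '' S) ⊔ V' = ⊤ := by
      rw [← hgen, Finset.coe_insert, Set.image_insert_eq, Set.insert_eq, Subgroup.closure_union,
        ← zpowers_eq_closure, sup_comm (zpowers (x s)), sup_assoc, sup_comm _ V]
    have hVN' : ∀ v ∈ V', ∀ a, B v a ∈ N ⊔ (B b).range := fun v hv a => by
      have hV' : V' ≤ (N ⊔ (B b).range).comap (B.flip a) :=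
        sup_le (fun v hv => mem_sup_left (hVN v hv a)) (zpowers_le.2 (mem_sup_right ⟨a, rfl⟩))
      exact hV' hv
    have hy : N.relIndex (B b).range ∣ V'.index := by
      rw [MonoidHom.range_eq_map, ← relIndex_comap, relIndex_top_right]
      refine index_dvd_of_le (sup_le (fun v hv => ?_) (zpowers_le.2 ?_)) <;> rw [mem_comap]
      · exact alternating_swap hB b v ▸ inv_mem (hVN v hv b)
      · exact hB b ▸ one_mem N
    have hmul : N.relIndex (⨆ a, (B a).range) =
        N.relIndex (B b).range * (N ⊔ (B b).range).relIndex (⨆ a, (B a).range) := by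
      rw [← relIndex_sup_eq_mul, sup_eq_right.2 (le_iSup (fun a => (B a).range) b)]
    have hy' : N.relIndex (B b).range ∣ V.relIndex V' ^ S.card :=
      relIndex_range_dvd_of_alternating hB x S hVN b hgen'
    rw [hmul, ← relIndex_mul_index (show V ≤ V' from le_sup_left), Finset.card_insert_of_notMem hs]
    set y := N.relIndex (B b).range
    set m := (N ⊔ (B b).range).relIndex (⨆ a, (B a).range)
    set o := V.relIndex V'
    calc
      (y * m) ^ 2 * (o * V'.index) = y * y * (m ^ 2 * V'.index) * o := by ring
      _ ∣ V'.index * o ^ S.card * V'.index ^ S.card * o :=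
        mul_dvd_mul_right (mul_dvd_mul (mul_dvd_mul hy hy') (ih V' _ hVN' hgen')) o
      _ = (o * V'.index) ^ (S.card + 1) := by ring

end Homs

section Commutator

variable {H : Type*} [Group H]

theorem normal_of_le_center {T : Subgroup H} (hT : T ≤ center H) : T.Normal :=
  ⟨fun t ht g => by rwa [mem_center_iff.1 (hT ht) g, mul_inv_cancel_right]⟩

variable {N : Subgroup H} [N.Normal]

theorem commutator_le_iff_map_mk'_eq_bot {X Y : Subgroup H} :
    ⁅X, Y⁆ ≤ N ↔ ⁅X.map (QuotientGroup.mk' N), Y.map (QuotientGroup.mk' N)⁆ = ⊥ := by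
  rw [← map_commutator, Subgroup.map_eq_bot_iff, QuotientGroup.ker_mk']

theorem commutator_commutator_le_of_rotate {X Y Z : Subgroup H} (h₁ : ⁅⁅Y, Z⁆, X⁆ ≤ N)
    (h₂ : ⁅⁅Z, X⁆, Y⁆ ≤ N) : ⁅⁅X, Y⁆, Z⁆ ≤ N := by
  rw [commutator_le_iff_map_mk'_eq_bot, map_commutator] at *
  exact commutator_commutator_eq_bot_of_rotate h₁ h₂

theorem commutator_closure_le {S T : Set H} (h : ∀ s ∈ S, ∀ t ∈ T, ⁅s, t⁆ ∈ N) :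
    ⁅closure S, closure T⁆ ≤ N := by
  rw [commutator_le_iff_map_mk'_eq_bot, commutator_eq_bot_iff_le_centralizer,
    MonoidHom.map_closure, MonoidHom.map_closure, centralizer_closure, closure_le]
  rintro _ ⟨s, hs, rfl⟩ _ ⟨t, ht, rfl⟩
  rw [eq_comm, ← commutatorElement_eq_one_iff_mul_comm, ← map_commutatorElement]
  exact (QuotientGroup.eq_one_iff _).2 (h s hs t ht)

variable {U : Subgroup H}

theorem mk_commutatorElement_mem_center (hU : ⁅⁅U, (⊤ : Subgroup H)⁆, (⊤ : Subgroup H)⁆ ≤ N)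
    {u : H} (hu : u ∈ U) (y : H) :
    QuotientGroup.mk' N ⁅u, y⁆ ∈ center (H ⧸ N) := by
  have hle : (⁅U, ⊤⁆ : Subgroup H).map (QuotientGroup.mk' N) ≤ center (H ⧸ N) := by
    rwa [← commutator_top_right_eq_bot_iff_le_center,
      ← map_top_of_surjective _ (QuotientGroup.mk'_surjective N),
      ← commutator_le_iff_map_mk'_eq_bot]
  exact hle (mem_map_of_mem _ (commutator_mem_commutator hu (mem_top y)))

variable (hU : ⁅⁅U, (⊤ : Subgroup H)⁆, (⊤ : Subgroup H)⁆ ≤ N)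

/-- The pairing `(u, y) ↦ ⁅u, y⁆ N`, which is bimultiplicative because `⁅U, H⁆` is central
modulo `N`. -/
def commutatorPairing : U →* H →* center (H ⧸ N) :=
  have hc (u : U) (y : H) := mk_commutatorElement_mem_center hU u.2 y
  MonoidHom.mk'
    (fun u : U => MonoidHom.mk' (fun y => ⟨QuotientGroup.mk' N ⁅(u : H), y⁆, hc u y⟩) fun y z =>
      Subtype.ext <| by
        change QuotientGroup.mk' N ⁅(u : H), y * z⁆ = QuotientGroup.mk' N _ * QuotientGroup.mk' N _
        rw [commutatorElement_mul_right_eq_mul_conj, map_mul, map_mul, map_mul,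
          mem_center_iff.1 (hc u z), ← mul_assoc, map_inv, mul_inv_cancel_right,
          mem_center_iff.1 (hc u y)])
    fun u v => MonoidHom.ext fun y => Subtype.ext <| by
      change QuotientGroup.mk' N ⁅(u : H) * v, y⁆ = QuotientGroup.mk' N _ * QuotientGroup.mk' N _
      rw [commutatorElement_mul_left_eq_conj_mul, map_mul, map_mul, map_mul,
        mem_center_iff.1 (hc v y), map_inv, mul_inv_cancel_right, mem_center_iff.1 (hc u y)]

theorem commutatorPairing_eq_one_iff {u : U} {y : H} :
    commutatorPairing hU u y = 1 ↔ ⁅(u : H), y⁆ ∈ N :=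
  Subtype.ext_iff.trans (QuotientGroup.eq_one_iff _)

theorem card_iSup_range_commutatorPairing :
    Nat.card ↥(⨆ u, (commutatorPairing hU u).range) = N.relIndex ⁅U, ⊤⁆ := by
  have hmap : (⨆ u, (commutatorPairing hU u).range).map (center (H ⧸ N)).subtype =
      (⁅U, ⊤⁆ : Subgroup H).map (QuotientGroup.mk' N) := by
    apply le_antisymm
    · rw [Subgroup.map_iSup]
      refine iSup_le fun u => ?_
      rintro _ ⟨_, ⟨y, rfl⟩, rfl⟩
      exact mem_map_of_mem _ (commutator_mem_commutator u.2 (mem_top y))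
    · rw [map_le_iff_le_comap, commutator_le]
      exact fun u hu y _ => ⟨_, mem_iSup_of_mem ⟨u, hu⟩ ⟨y, rfl⟩, rfl⟩
  rw [← card_map_of_injective (subtype_injective (center (H ⧸ N))), hmap, ← relIndex_ker,
    QuotientGroup.ker_mk']

end Commutator

local notation "𝓛" => Subgroup.lowerCentralSeries (⊤ : Subgroup _)

section LowerCentralSeries

variable {H ι : Type*} [Group H]

theorem commutator_lowerCentralSeries_le (i j : ℕ) :
    ⁅(𝓛 i : Subgroup H), (𝓛 j : Subgroup H)⁆ ≤ 𝓛 (i + j + 1) := by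
  induction i generalizing j with
  | zero => rw [zero_add, commutator_comm]; exact commutator_mono le_rfl le_top
  | succ i ih =>
    refine commutator_commutator_le_of_rotate ?_ ?_
    · rw [commutator_comm ⊤, commutator_comm, add_right_comm i, add_assoc i]
      exact ih (j + 1)
    · rw [commutator_comm (𝓛 j), add_right_comm i]
      exact commutator_mono (ih j) le_rfl

/-- The left-normed commutator `⁅…⁅⁅x j, x kₙ⁆, x kₙ₋₁⁆, …, x k₁⁆` attached to `j` and the list
`[k₁, …, kₙ]`. -/
def leftNormed (x : ι → H) (j : ι) : List ι → H
  | [] => x j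
  | k :: l => ⁅leftNormed x j l, x k⁆

theorem leftNormed_mem_lowerCentralSeries (x : ι → H) (j : ι) (l : List ι) :
    leftNormed x j l ∈ (𝓛 l.length : Subgroup H) := by
  induction l with
  | nil => exact mem_top _
  | cons k l ih => exact commutator_mem_commutator ih (mem_top _)

theorem commutator_zpowers_leftNormed_le {N : Subgroup H} [N.Normal] {x : ι → H} {j : ι}
    {l : List ι} {m : ℕ} (h : ∀ s ∈ j :: l, ⁅(𝓛 (l.length + m) : Subgroup H), zpowers (x s)⁆ ≤ N) :
    ⁅zpowers (leftNormed x j l), 𝓛 m⁆ ≤ N := by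
  induction l generalizing m with
  | nil => simpa [leftNormed, commutator_comm] using h
  | cons k l ih =>
    have hw : zpowers (leftNormed x j (k :: l)) ≤ ⁅zpowers (leftNormed x j l), zpowers (x k)⁆ :=
      zpowers_le.2 (commutator_mem_commutator (mem_zpowers _) (mem_zpowers _))
    refine (commutator_mono hw le_rfl).trans (commutator_commutator_le_of_rotate ?_ ?_)
    · calc
        _ ≤ ⁅𝓛 (m + 1), zpowers (leftNormed x j l)⁆ := by
          rw [commutator_comm (zpowers (x k))]
          exact commutator_mono (commutator_mono le_rfl le_top) le_rfl
        _ ≤ N := by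
          rw [commutator_comm]
          refine ih fun s hs => ?_
          rw [add_comm m, ← add_assoc]
          exact h s (by simp only [List.mem_cons] at hs ⊢; tauto)
    · refine le_trans (commutator_mono ?_ le_rfl) (h k (by simp))
      calc
        _ ≤ ⁅𝓛 l.length, 𝓛 m⁆ := by
          rw [commutator_comm]
          exact commutator_mono (zpowers_le.2 (leftNormed_mem_lowerCentralSeries x j l)) le_rfl
        _ ≤ 𝓛 (l.length + 1 + m) := by
          rw [add_right_comm]
          exact commutator_lowerCentralSeries_le _ _

theorem lowerCentralSeries_le_closure_leftNormed_sup {x : ι → H}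
    (hx : closure (Set.range x) = ⊤) (i : ℕ) :
    𝓛 i ≤ closure {w | ∃ j l, l.length = i ∧ leftNormed x j l = w} ⊔ 𝓛 (i + 1) := by
  induction i with
  | zero =>
    rw [Subgroup.lowerCentralSeries_zero, ← hx, closure_le]
    rintro _ ⟨j, rfl⟩
    exact mem_sup_left (subset_closure ⟨j, [], rfl, rfl⟩)
  | succ i ih =>
    set C := {w | ∃ j l, l.length = i ∧ leftNormed x j l = w}
    set K := closure {w | ∃ j l, l.length = i + 1 ∧ leftNormed x j l = w} ⊔ 𝓛 (i + 2)
    have hK : K ≤ 𝓛 (i + 1) := by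
      refine sup_le ((closure_le _).2 ?_) (Subgroup.lowerCentralSeries_antitone _ (Nat.le_succ _))
      rintro _ ⟨j, l, hl, rfl⟩
      exact hl ▸ leftNormed_mem_lowerCentralSeries x j l
    have : K.Normal :=
      commutator_top_right_le_iff.1 ((commutator_mono hK le_rfl).trans le_sup_right)
    calc
      𝓛 (i + 1) ≤ ⁅closure (C ∪ (𝓛 (i + 1) : Subgroup H)), closure (Set.range x)⁆ := by
        rw [Subgroup.closure_union, closure_eq, hx]
        exact commutator_mono ih le_rfl
      _ ≤ K := by
        refine commutator_closure_le ?_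
        rintro _ (⟨j, l, hl, rfl⟩ | hu) _ ⟨k, rfl⟩
        · exact mem_sup_left (subset_closure ⟨j, k :: l, by simp [hl], rfl⟩)
        · exact mem_sup_right (commutator_mem_commutator hu (mem_top _))

theorem commutator_sup_top_le_of_le_center {K N Z : Subgroup H} [N.Normal] (hZ : Z ≤ center H)
    (hK : ⁅K, (⊤ : Subgroup H)⁆ ≤ N) : ⁅K ⊔ Z, (⊤ : Subgroup H)⁆ ≤ N := by
  rw [sup_eq_closure, ← Subgroup.closure_univ]
  refine commutator_closure_le ?_
  rintro u (hu | hu) y -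
  · exact hK (commutator_mem_commutator hu (mem_top y))
  · rw [commutatorElement_eq_one_iff_mul_comm.2 (mem_center_iff.1 (hZ hu) y).symm]
    exact one_mem N

theorem exists_leftNormed_notMem {x : ι → H} (hx : closure (Set.range x) = ⊤) {i : ℕ}
    {K : Subgroup H} (hK : 𝓛 (i + 1) ≤ K) (hKi : ¬ 𝓛 i ≤ K) :
    ∃ j l, l.length = i ∧ leftNormed x j l ∉ K := by
  by_contra! hmem
  refine hKi ((lowerCentralSeries_le_closure_leftNormed_sup hx i).trans
    (sup_le ((closure_le _).2 ?_) hK))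
  rintro _ ⟨j, l, hl, rfl⟩
  exact hmem j l hl

theorem commutatorPairing_leftNormed_mem {N : Subgroup H} [N.Normal] {x : ι → H} {j : ι}
    {l : List ι} (hN : ⁅⁅𝓛 l.length, (⊤ : Subgroup H)⁆, (⊤ : Subgroup H)⁆ ≤ N) (y : H) :
    commutatorPairing hN ⟨_, leftNormed_mem_lowerCentralSeries x j l⟩ y ∈
      ⨆ s ∈ j :: l, ((commutatorPairing hN).flip (x s)).range := by
  set B := commutatorPairing hN
  set T := ⨆ s ∈ j :: l, (B.flip (x s)).range
  have hTc := normal_of_le_center (Subgroup.map_subtype_le T)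
  have hcomm : ∀ s ∈ j :: l, ⁅(𝓛 (l.length + 0) : Subgroup H), zpowers (x s)⁆ ≤
      (T.map (center (H ⧸ N)).subtype).comap (QuotientGroup.mk' N) := fun s hs =>
    commutator_le.2 fun u hu z ⟨n, hn⟩ => by
      refine ⟨B ⟨u, hu⟩ z, ?_, rfl⟩
      rw [SetLike.mem_coe, ← hn, map_zpow]
      have hsT : (B.flip (x s)).range ≤ T := le_biSup (fun s => (B.flip (x s)).range) hs
      exact zpow_mem (hsT ⟨⟨u, hu⟩, rfl⟩) n
  obtain ⟨t, ht, hty⟩ := commutator_zpowers_leftNormed_le hcomm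
    (commutator_mem_commutator (mem_zpowers _) (mem_top y))
  rwa [← Subtype.ext hty (a2 := B _ y)]

/-- A left-normed commutator of weight `i + 1` outside `𝓛 (i + 1) ⊔ Z` involves at most `i + 1`
generators, so the remaining ones contribute a factor `p` less each. -/
theorem relIndex_lowerCentralSeries_mul_pow_dvd [Fintype ι] {x : ι → H}
    (hx : closure (Set.range x) = ⊤) {Z : Subgroup H} (hZ : Z ≤ center H) {i p a : ℕ}
    (hp : p.Prime) (ha : a ≠ 0) (hi : (𝓛 (i + 1) ⊔ Z).relIndex (𝓛 i) = p ^ a) :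
    (𝓛 (i + 2) : Subgroup H).relIndex (𝓛 (i + 1)) * p ^ (Fintype.card ι - (i + 1)) ∣
      (p ^ a) ^ Fintype.card ι := by
  classical
  have hnot : ¬ 𝓛 i ≤ 𝓛 (i + 1) ⊔ Z := fun h => by
    rw [relIndex_eq_one.2 h] at hi
    exact (one_lt_pow₀ hp.one_lt ha).ne hi
  obtain ⟨j, l, rfl, hw⟩ := exists_leftNormed_notMem hx le_sup_left hnot
  have hL : ⁅⁅𝓛 l.length, (⊤ : Subgroup H)⁆, (⊤ : Subgroup H)⁆ ≤ 𝓛 (l.length + 2) := le_rfl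
  set V := (𝓛 (l.length + 1) ⊔ Z).subgroupOf (𝓛 l.length)
  set θ := fun k => (commutatorPairing hL).flip (x k)
  have hVker (k : ι) : V ≤ (θ k).ker := fun v hv =>
    (commutatorPairing_eq_one_iff hL).2 (commutator_sup_top_le_of_le_center hZ le_rfl
      (commutator_mem_commutator (mem_subgroupOf.1 hv) (mem_top (x k))))
  have hθw (k : ι) : θ k ⟨_, leftNormed_mem_lowerCentralSeries x j l⟩ ∈
      ⨆ s ∈ (j :: l).toFinset, (θ s).range := by
    simp only [List.mem_toFinset]
    exact commutatorPairing_leftNormed_mem hL (x k)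
  have hdvd := card_iSup_range_mul_pow_dvd θ (j :: l).toFinset hVker hp hi hw hθw
  rw [← iSup_range_eq_iSup_range_flip _ hx, card_iSup_range_commutatorPairing] at hdvd
  rw [← hi]
  refine (mul_dvd_mul_left _ (pow_dvd_pow p ?_)).trans hdvd
  exact Nat.sub_le_sub_left (List.toFinset_card_le (j :: l)) _

theorem sq_relIndex_lowerCentralSeries_mul_index_dvd [Fintype ι] {x : ι → H}
    (hx : closure (Set.range x) = ⊤) {Z : Subgroup H} (hZ : Z ≤ center H) :
    (𝓛 2 : Subgroup H).relIndex (𝓛 1) ^ 2 * (𝓛 1 ⊔ Z).index ∣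
      (𝓛 1 ⊔ Z).index ^ Fintype.card ι := by
  have hL : ⁅⁅𝓛 0, (⊤ : Subgroup H)⁆, (⊤ : Subgroup H)⁆ ≤ 𝓛 2 := le_rfl
  let B : H →* H →* center (H ⧸ (𝓛 2 : Subgroup H)) :=
    (commutatorPairing hL).comp topEquiv.symm.toMonoidHom
  have hB (a b : H) : B a b = 1 ↔ ⁅a, b⁆ ∈ (𝓛 2 : Subgroup H) := commutatorPairing_eq_one_iff hL
  have hBV : ∀ v ∈ 𝓛 1 ⊔ Z, ∀ a, B v a ∈ (⊥ : Subgroup _) := fun v hv a => (hB v a).2 <|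
    commutator_sup_top_le_of_le_center hZ le_rfl (commutator_mem_commutator hv (mem_top a))
  have hdvd := sq_relIndex_iSup_range_mul_index_dvd
    (fun a => (hB a a).2 (by rw [commutatorElement_self]; exact one_mem _)) x Finset.univ
    (𝓛 1 ⊔ Z) ⊥ hBV (by rw [Finset.coe_univ, Set.image_univ, hx, top_sup_eq])
  have hrange : ⨆ a, (B a).range = ⨆ u, (commutatorPairing hL u).range :=
    topEquiv.symm.toEquiv.iSup_comp (g := fun u => (commutatorPairing hL u).range)
  rwa [relIndex_bot_left, hrange, card_iSup_range_commutatorPairing, Finset.card_univ] at hdvd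

end LowerCentralSeries

section CentralExtension

variable {G H : Type*} [Group G] [Group H]

theorem not_lowerCentralSeries_le_succ [Group.IsNilpotent G] {i : ℕ}
    (hi : i < Group.nilpotencyClass G) : ¬ (𝓛 i : Subgroup G) ≤ 𝓛 (i + 1) := fun h => by
  have hle (m : ℕ) : (𝓛 i : Subgroup G) ≤ 𝓛 (i + m) := by
    induction m with
    | zero => exact le_rfl
    | succ m ih => exact h.trans (commutator_mono ih le_rfl)
  have hbot : (𝓛 i : Subgroup G) = ⊥ := by
    rw [eq_bot_iff, ← Subgroup.lowerCentralSeries_nilpotencyClass, ← Nat.add_sub_cancel' hi.le]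
    exact hle _
  exact hi.not_ge (Subgroup.lowerCentralSeries_eq_bot_iff_nilpotencyClass_le.1 hbot)

variable {π : H →* G}

theorem relIndex_lowerCentralSeries_sup_ker (hπ : Function.Surjective π) (i j : ℕ) :
    (𝓛 i ⊔ π.ker).relIndex (𝓛 j) = (𝓛 i : Subgroup G).relIndex (𝓛 j) := by
  rw [← comap_map_eq, relIndex_comap, map_lowerCentralSeries, map_lowerCentralSeries,
    map_top_of_surjective π hπ]

theorem lowerCentralSeries_succ_eq_bot_of_ker_le_center (hπ : Function.Surjective π)
    (hker : π.ker ≤ center H) {n : ℕ} (hn : (𝓛 n : Subgroup G) = ⊥) :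
    (𝓛 (n + 1) : Subgroup H) = ⊥ := by
  refine Subgroup.lowerCentralSeries_succ_eq_bot _ (le_trans ?_ hker)
  rw [← Subgroup.map_eq_bot_iff, map_lowerCentralSeries, map_top_of_surjective π hπ, hn]

theorem relIndex_lowerCentralSeries_mul {i j k : ℕ} (hij : i ≤ j) (hjk : j ≤ k) :
    (𝓛 k : Subgroup G).relIndex (𝓛 j) * (𝓛 j : Subgroup G).relIndex (𝓛 i) =
      (𝓛 k : Subgroup G).relIndex (𝓛 i) :=
  relIndex_mul_relIndex _ _ _ (Subgroup.lowerCentralSeries_antitone _ hjk)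
    (Subgroup.lowerCentralSeries_antitone _ hij)

variable {ι : Type*} [Fintype ι] {p : ℕ} [Fact p.Prime]

theorem relIndex_lowerCentralSeries_two_mul_pow_dvd [Finite G] [Group.IsNilpotent G]
    (hG : IsPGroup p G) (hπ : Function.Surjective π) (hker : π.ker ≤ center H) {x : ι → H}
    (hx : closure (Set.range x) = ⊤) {m : ℕ} (hm : m < Group.nilpotencyClass G) :
    (𝓛 (m + 2) : Subgroup H).relIndex (𝓛 2) *
        p ^ ∑ j ∈ Finset.range m, (Fintype.card ι - (j + 2)) ∣
      (𝓛 (m + 1) : Subgroup G).relIndex (𝓛 1) ^ Fintype.card ι := by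
  induction m with
  | zero => simp
  | succ m ih =>
    obtain ⟨a, ha⟩ := (hG.to_subgroup (𝓛 (m + 1))).index ((𝓛 (m + 2)).subgroupOf (𝓛 (m + 1)))
    have ha₀ : a ≠ 0 := by
      rintro rfl
      exact not_lowerCentralSeries_le_succ hm (relIndex_eq_one.1 ha)
    have hstep := relIndex_lowerCentralSeries_mul_pow_dvd hx hker (Fact.out : p.Prime) ha₀
      ((relIndex_lowerCentralSeries_sup_ker hπ (m + 2) (m + 1)).trans ha)
    calc
      _ = (𝓛 (m + 3) : Subgroup H).relIndex (𝓛 (m + 2)) * p ^ (Fintype.card ι - (m + 2)) *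
          ((𝓛 (m + 2) : Subgroup H).relIndex (𝓛 2) *
            p ^ ∑ j ∈ Finset.range m, (Fintype.card ι - (j + 2))) := by
        rw [← relIndex_lowerCentralSeries_mul (Nat.le_add_left 2 m) (Nat.le_succ (m + 2)),
          Finset.sum_range_succ]
        ring
      _ ∣ (p ^ a) ^ Fintype.card ι * (𝓛 (m + 1) : Subgroup G).relIndex (𝓛 1) ^ Fintype.card ι :=
        mul_dvd_mul hstep (ih (Nat.lt_of_succ_lt hm))
      _ = _ := by
        rw [← ha, ← mul_pow]
        exact congrArg (· ^ _)
          (relIndex_lowerCentralSeries_mul (Nat.le_add_left 1 m) (Nat.le_succ (m + 1)))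

theorem sq_card_commutator_mul_dvd [Finite G] [Group.IsNilpotent G] (hG : IsPGroup p G)
    (hπ : Function.Surjective π) (hker : π.ker ≤ center H) {x : ι → H}
    (hx : closure (Set.range x) = ⊤) {m : ℕ} (hm : Group.nilpotencyClass G = m + 1) :
    Nat.card (commutator H) ^ 2 * (commutator G).index *
        p ^ (2 * ∑ j ∈ Finset.range m, (Fintype.card ι - (j + 2))) ∣
      (commutator G).index ^ Fintype.card ι * Nat.card (commutator G) ^ (2 * Fintype.card ι) := by
  have hGbot : (𝓛 (m + 1) : Subgroup G) = ⊥ := hm ▸ Subgroup.lowerCentralSeries_nilpotencyClass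
  have hHbot : (𝓛 (m + 2) : Subgroup H) = ⊥ :=
    lowerCentralSeries_succ_eq_bot_of_ker_le_center hπ hker hGbot
  have hindex : (𝓛 1 ⊔ π.ker).index = (commutator G).index := by
    rw [← relIndex_top_right, ← top_lowerCentralSeries_one, ← relIndex_top_right]
    exact relIndex_lowerCentralSeries_sup_ker hπ 1 0
  have hcard := relIndex_lowerCentralSeries_mul (G := H) one_le_two (Nat.le_add_left 2 m)
  have hbase := sq_relIndex_lowerCentralSeries_mul_index_dvd hx hker
  have hstep := relIndex_lowerCentralSeries_two_mul_pow_dvd hG hπ hker hx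
    (m.lt_succ_self.trans_eq hm.symm)
  rw [hHbot, relIndex_bot_left, relIndex_bot_left, top_lowerCentralSeries_one] at hcard
  rw [hindex, top_lowerCentralSeries_one] at hbase
  rw [hHbot, hGbot, relIndex_bot_left, relIndex_bot_left, top_lowerCentralSeries_one] at hstep
  calc
    _ = (𝓛 2 : Subgroup H).relIndex (commutator H) ^ 2 * (commutator G).index *
        (Nat.card (𝓛 2 : Subgroup H) *
          p ^ ∑ j ∈ Finset.range m, (Fintype.card ι - (j + 2))) ^ 2 := by
      rw [← hcard]
      ring
    _ ∣ (commutator G).index ^ Fintype.card ι *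
        (Nat.card (commutator G) ^ Fintype.card ι) ^ 2 :=
      mul_dvd_mul hbase (pow_dvd_pow_of_dvd hstep 2)
    _ = _ := by ring

end CentralExtension

section CentralQuotient

variable {F G : Type*} [Group F] [Group G] (φ : F →* G)

/-- The largest quotient `F ⧸ ⁅ker φ, F⁆` of `F` through which `φ` factors with central kernel.
For `F` free and `φ` surjective, it maps onto every central extension of `G`. -/
abbrev CentralQuotient : Type _ :=
  F ⧸ ⁅φ.ker, (⊤ : Subgroup F)⁆

/-- The homomorphism with central kernel induced by `φ`. -/
def centralQuotientMap : CentralQuotient φ →* G :=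
  QuotientGroup.lift _ φ (commutator_le_left _ _)

theorem ker_centralQuotientMap_le_center :
    (centralQuotientMap φ).ker ≤ center (CentralQuotient φ) := by
  rw [← commutator_top_right_eq_bot_iff_le_center, centralQuotientMap, QuotientGroup.ker_lift,
    ← map_top_of_surjective _ (QuotientGroup.mk'_surjective _), ← commutator_le_iff_map_mk'_eq_bot]

theorem centralQuotientMap_surjective (hφ : Function.Surjective φ) :
    Function.Surjective (centralQuotientMap φ) :=
  QuotientGroup.lift_surjective_of_surjective _ _ hφ _

theorem closure_range_mk_eq_top {ι : Type*} {N : Subgroup F} [N.Normal] {x : ι → F}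
    (hx : closure (Set.range x) = ⊤) :
    closure (Set.range fun i => (x i : F ⧸ N)) = ⊤ := by
  rw [← map_top_of_surjective _ (QuotientGroup.mk'_surjective N), ← hx, MonoidHom.map_closure,
    ← Set.range_comp]
  rfl

end CentralQuotient

section Cocycle

open groupCohomology

variable {G A : Type} [Group G] [AddCommGroup A] (f : cocycles₂ (Rep.trivial ℤ G A))

/-- The central extension of `G` by `A` with factor set `-f`, on the set `G × A`. The sign makes
the fiber coordinate of a homomorphism into it a primitive of `f`, see `IsPrimitiveAlong`. -/
@[ext]
structure CocycleExtension (f : cocycles₂ (Rep.trivial ℤ G A)) where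
  /-- The image in `G`. -/
  base : G
  /-- The coordinate in `A`. -/
  fiber : A

namespace CocycleExtension

variable {f}

instance : Mul (CocycleExtension f) :=
  ⟨fun x y => ⟨x.base * y.base, x.fiber + y.fiber - f (x.base, y.base)⟩⟩

instance : One (CocycleExtension f) := ⟨⟨1, f (1, 1)⟩⟩

instance : Inv (CocycleExtension f) :=
  ⟨fun x => ⟨x.base⁻¹, f (1, 1) + f (x.base⁻¹, x.base) - x.fiber⟩⟩

instance : Group (CocycleExtension f) :=
  Group.ofLeftAxioms
    (fun x y z => by
      refine CocycleExtension.ext (mul_assoc _ _ _) ?_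
      have h : (f (x.base * y.base, z.base) + f (x.base, y.base) : A) =
          f (y.base, z.base) + f (x.base, y.base * z.base) :=
        (mem_cocycles₂_iff f.1).1 f.2 x.base y.base z.base
      calc
        x.fiber + y.fiber - f (x.base, y.base) + z.fiber - f (x.base * y.base, z.base) =
            x.fiber + y.fiber + z.fiber - (f (x.base * y.base, z.base) + f (x.base, y.base)) := by
          abel
        _ = x.fiber + (y.fiber + z.fiber - f (y.base, z.base)) - f (x.base, y.base * z.base) := by
          rw [h]
          abel)
    (fun x => by
      refine CocycleExtension.ext (one_mul _) ?_
      have h : (f (1, x.base) : A) = f (1, 1) := cocycles₂_map_one_fst f x.base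
      change f (1, 1) + x.fiber - f (1, x.base) = x.fiber
      rw [h, add_sub_cancel_left])
    (fun x => by
      refine CocycleExtension.ext (inv_mul_cancel _) ?_
      change f (1, 1) + f (x.base⁻¹, x.base) - x.fiber + x.fiber - f (x.base⁻¹, x.base) = f (1, 1)
      abel)

/-- The projection of the extension onto `G`. -/
def baseHom : CocycleExtension f →* G := MonoidHom.mk' base fun _ _ => rfl

theorem ker_baseHom_le_center : (baseHom (f := f)).ker ≤ center (CocycleExtension f) := by
  intro z (hz : z.base = 1)
  refine mem_center_iff.2 fun y => CocycleExtension.ext ?_ ?_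
  · change y.base * z.base = z.base * y.base
    rw [hz, mul_one, one_mul]
  · change y.fiber + z.fiber - f (y.base, z.base) = z.fiber + y.fiber - f (z.base, y.base)
    rw [hz, cocycles₂_map_one_fst, cocycles₂_map_one_snd, add_comm]
    rfl

end CocycleExtension

variable {H : Type*} [Group H]

/-- The inflation of `f` along `π` is the coboundary of `u`. -/
def IsPrimitiveAlong (π : H →* G) (u : H → A) : Prop :=
  ∀ a b, u (a * b) + f (π a, π b) = u a + u b

theorem exists_isPrimitiveAlong_centralQuotientMap {ι : Type*} (φ : FreeGroup ι →* G) :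
    ∃ u, IsPrimitiveAlong f (centralQuotientMap φ) u := by
  let ψ : FreeGroup ι →* CocycleExtension f := FreeGroup.lift fun i => ⟨φ (FreeGroup.of i), 0⟩
  have hψ : CocycleExtension.baseHom.comp ψ = φ := FreeGroup.ext_hom _ _ fun i => by
    simp [ψ, CocycleExtension.baseHom]
  have hker : ⁅φ.ker, (⊤ : Subgroup (FreeGroup ι))⁆ ≤ ψ.ker := by
    rw [← Subgroup.map_eq_bot_iff, map_commutator, eq_bot_iff,
      ← commutator_top_right_eq_bot_iff_le_center.2
        (CocycleExtension.ker_baseHom_le_center (f := f))]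
    refine commutator_mono ?_ le_top
    rw [map_le_iff_le_comap, MonoidHom.comap_ker, hψ]
  let Ψ : CentralQuotient φ →* CocycleExtension f := QuotientGroup.lift _ ψ hker
  have hΨ : CocycleExtension.baseHom.comp Ψ = centralQuotientMap φ :=
    QuotientGroup.monoidHom_ext _ hψ
  refine ⟨fun a => (Ψ a).fiber, fun a b => ?_⟩
  rw [← hΨ]
  exact eq_sub_iff_add_eq.1 (congrArg CocycleExtension.fiber (map_mul Ψ a b))

theorem exists_monoidHom_extension [DivisibleBy A ℤ] {Z : Subgroup H} (χ : Z →* Multiplicative A)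
    (hχ : ∀ z : Z, (z : H) ∈ commutator H → χ z = 1) :
    ∃ θ : H →* Multiplicative A, ∀ z : Z, θ z = χ z := by
  let q : Z →* Abelianization H := Abelianization.of.comp Z.subtype
  have hker : q.rangeRestrict.ker ≤ χ.ker := fun z hz => hχ z <| by
    rwa [MonoidHom.ker_rangeRestrict, MonoidHom.mem_ker, MonoidHom.comp_apply,
      ← MonoidHom.mem_ker, Abelianization.ker_of] at hz
  let χ' := q.rangeRestrict.liftOfSurjective q.rangeRestrict_surjective ⟨χ, hker⟩
  obtain ⟨h, hh⟩ := (Module.Baer.of_divisible A).extension_property_addMonoidHom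
    (MonoidHom.toAdditive q.range.subtype) q.range.subtype_injective
    (MonoidHom.toAdditiveLeft χ')
  refine ⟨(AddMonoidHom.toMultiplicativeRight h).comp Abelianization.of, fun z => ?_⟩
  have hχ' : χ' (q.rangeRestrict z) = χ z := MonoidHom.liftOfRightInverse_comp_apply _ _ _ _ z
  rw [← hχ']
  exact congrArg Multiplicative.ofAdd (DFunLike.congr_fun hh (.ofMul (q.rangeRestrict z)))

namespace IsPrimitiveAlong

variable {f} {π : H →* G} {u : H → A}

theorem map_one (hu : IsPrimitiveAlong f π u) : u 1 = f (1, 1) := by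
  have h := hu 1 1
  rw [mul_one, _root_.map_one] at h
  exact (add_left_cancel h).symm

theorem map_mul_of_mem_ker (hu : IsPrimitiveAlong f π u) (a : H) {z : H} (hz : z ∈ π.ker) :
    u (a * z) = u a + u z - u 1 := by
  have h : (f (π a, 1) : A) = f (1, 1) := cocycles₂_map_one_snd f (π a)
  rw [eq_sub_iff_add_eq, hu.map_one, ← h, ← π.mem_ker.1 hz]
  exact hu a z

theorem sub {f' : cocycles₂ (Rep.trivial ℤ G A)} {u' : H → A} (hu : IsPrimitiveAlong f π u)
    (hu' : IsPrimitiveAlong f' π u') : IsPrimitiveAlong (f - f') π (u - u') := fun a b => by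
  have h : ((f - f') (π a, π b) : A) = f (π a, π b) - f' (π a, π b) := rfl
  rw [h, Pi.sub_apply, Pi.sub_apply, Pi.sub_apply, sub_add_sub_comm, hu a b, hu' a b,
    add_sub_add_comm]

/-- The restriction to `ker π` of a primitive along `π`, normalized to a homomorphism. -/
def kerHom (hu : IsPrimitiveAlong f π u) : π.ker →* Multiplicative A :=
  MonoidHom.mk' (fun z => .ofAdd (u z - u 1)) fun y z => congrArg Multiplicative.ofAdd <| by
    change u (y * z) - u 1 = u y - u 1 + (u z - u 1)
    rw [hu.map_mul_of_mem_ker _ z.2]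
    abel

theorem mem_coboundaries₂ [DivisibleBy A ℤ] (hu : IsPrimitiveAlong f π u)
    (hπ : Function.Surjective π) (h : ∀ z : π.ker, (z : H) ∈ commutator H → hu.kerHom z = 1) :
    (f : G × G → A) ∈ coboundaries₂ (Rep.trivial ℤ G A) := by
  obtain ⟨θ, hθ⟩ := exists_monoidHom_extension hu.kerHom h
  let v (a : H) : A := u a - (θ a).toAdd
  have hv : IsPrimitiveAlong f π v := fun a b => by
    simp only [v, map_mul, toAdd_mul]
    rw [sub_add_eq_add_sub, hu a b, add_sub_add_comm]
  have hv_ker {z : H} (hz : z ∈ π.ker) : v z = v 1 := by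
    have hθz : (θ z).toAdd = u z - u 1 := congrArg Multiplicative.toAdd (hθ ⟨z, hz⟩)
    simp only [v, hθz, _root_.map_one, toAdd_one, sub_sub_cancel, sub_zero]
  have hv_fiber {a b : H} (hab : π a = π b) : v a = v b := by
    have hz : b⁻¹ * a ∈ π.ker := by rw [π.mem_ker, map_mul, map_inv, hab, inv_mul_cancel]
    rw [← mul_inv_cancel_left b a, hv.map_mul_of_mem_ker b hz, hv_ker hz, add_sub_cancel_right]
  let s := Function.surjInv hπ
  have hs (g : G) : π (s g) = g := Function.surjInv_eq hπ g
  refine ⟨v ∘ s, funext fun ⟨g, g'⟩ => ?_⟩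
  have hprod : v (s (g * g')) = v (s g * s g') := hv_fiber (by rw [map_mul, hs, hs, hs])
  have hcoc := hv (s g) (s g')
  rw [hs, hs] at hcoc
  change v (s g') - v (s (g * g')) + v (s g) = f (g, g')
  rw [hprod, sub_add_eq_add_sub, add_comm, ← hcoc, add_sub_cancel_left]

end IsPrimitiveAlong

theorem exists_injective_H2_monoidHom [DivisibleBy A ℤ] {π : H →* G} (hπ : Function.Surjective π)
    (h : ∀ f : cocycles₂ (Rep.trivial ℤ G A), ∃ u, IsPrimitiveAlong f π u) :
    ∃ Φ : H2 (Rep.trivial ℤ G A) → (↥(π.ker ⊓ commutator H) →* Multiplicative A),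
      Function.Injective Φ := by
  have hsurj (m : H2 (Rep.trivial ℤ G A)) : ∃ f, H2π (Rep.trivial ℤ G A) f = m :=
    H2_induction_on m fun f => ⟨f, rfl⟩
  choose f hf using hsurj
  choose u hu using fun m => h (f m)
  refine ⟨fun m => (hu m).kerHom.comp (inclusion inf_le_left), fun m m' hmm' => ?_⟩
  rw [← hf m, ← hf m', H2π_eq_iff]
  refine ((hu m).sub (hu m')).mem_coboundaries₂ hπ fun z hz => ?_
  have hmz : u m z - u m 1 = u m' z - u m' 1 :=
    congrArg Multiplicative.toAdd (DFunLike.congr_fun hmm' ⟨z, z.2, hz⟩)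
  change Multiplicative.ofAdd (u m z - u m' z - (u m 1 - u m' 1)) = 1
  rw [sub_sub_sub_comm, hmz, sub_self, ofAdd_zero]

end Cocycle

section SchurMultiplier

noncomputable instance : DivisibleBy (Additive ℂˣ) ℕ :=
  divisibleByOfSMulRightSurj _ _ fun {n} hn y => by
    obtain ⟨z, hz⟩ := IsAlgClosed.exists_pow_nat_eq (y.toMul : ℂ) (Nat.pos_of_ne_zero hn)
    have hz₀ : z ≠ 0 := by
      rintro rfl
      exact y.toMul.ne_zero (by rw [← hz, zero_pow hn])
    exact ⟨.ofMul (Units.mk0 z hz₀), congrArg Additive.ofMul (Units.ext hz)⟩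

noncomputable instance : DivisibleBy (Additive ℂˣ) ℤ :=
  AddGroup.divisibleByIntOfDivisibleByNat _

variable {G : Type} [Group G] {ι : Type*}

theorem card_schurMultiplier_le {φ : FreeGroup ι →* G} (hφ : Function.Surjective φ)
    [Finite (commutator (CentralQuotient φ))] :
    Nat.card (schurMultiplier G) ≤
      Nat.card ↥((centralQuotientMap φ).ker ⊓ commutator (CentralQuotient φ)) := by
  let K := (centralQuotientMap φ).ker ⊓ commutator (CentralQuotient φ)
  obtain ⟨Φ, hΦ⟩ := exists_injective_H2_monoidHom (A := Additive ℂˣ)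
    (centralQuotientMap_surjective φ hφ)
    (exists_isPrimitiveAlong_centralQuotientMap · φ)
  have : Finite K := Finite.Set.subset _ inf_le_right
  have : IsMulCommutative K := .of_comm fun y z => Subtype.ext <|
    mem_center_iff.1 (ker_centralQuotientMap_le_center φ z.2.1) y
  have hdual : Nat.card (K →* Multiplicative (Additive ℂˣ)) = Nat.card K :=
    CommGroup.card_monoidHom_of_hasEnoughRootsOfUnity K ℂ
  have := Nat.finite_of_card_ne_zero (hdual.trans_ne Nat.card_pos.ne')
  exact hdual ▸ Nat.card_le_card_of_injective Φ hΦ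

theorem card_ker_inf_commutator_mul_card_commutator {G H : Type*} [Group G] [Group H]
    {π : H →* G} (hπ : Function.Surjective π) :
    Nat.card ↥(π.ker ⊓ commutator H) * Nat.card (commutator G) = Nat.card (commutator H) := by
  have hmap : (commutator H).map π = commutator G := by
    rw [commutator_def, map_commutator, map_top_of_surjective π hπ, commutator_def]
  rw [← hmap, ← relIndex_ker, ← inf_relIndex_right,
    ← relIndex_bot_left, ← relIndex_bot_left, relIndex_mul_relIndex _ _ _ bot_le inf_le_right]

theorem sq_card_schurMultiplier_mul_le [Finite G] [Group.IsNilpotent G] {p : ℕ} [Fact p.Prime]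
    (hG : IsPGroup p G) {m : ℕ} (hm : Group.nilpotencyClass G = m + 1) :
    (Nat.card (schurMultiplier G) * Nat.card (commutator G)) ^ 2 * (commutator G).index *
        p ^ (2 * ∑ j ∈ Finset.range m, (Group.rank G - (j + 2))) ≤
      (commutator G).index ^ Group.rank G * Nat.card (commutator G) ^ (2 * Group.rank G) := by
  obtain ⟨S, hS, hgen⟩ := Group.rank_spec G
  let φ : FreeGroup S →* G := FreeGroup.lift Subtype.val
  have hφ : Function.Surjective φ :=
    FreeGroup.lift_surjective_iff_closure_range_eq_top.2 (by rwa [Subtype.range_coe])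
  have hdvd := sq_card_commutator_mul_dvd hG (centralQuotientMap_surjective φ hφ)
    (ker_centralQuotientMap_le_center φ)
    (closure_range_mk_eq_top (FreeGroup.closure_range_of S)) hm
  rw [Fintype.card_coe, hS] at hdvd
  have hpos : 0 < (commutator G).index ^ Group.rank G *
      Nat.card (commutator G) ^ (2 * Group.rank G) :=
    Nat.mul_pos (Nat.pow_pos (commutator G).index_ne_zero_of_finite.bot_lt)
      (Nat.pow_pos Nat.card_pos)
  have : Finite (commutator (CentralQuotient φ)) := Nat.finite_of_card_ne_zero fun h =>
    hpos.ne' (zero_dvd_iff.1 (by simpa [h] using hdvd))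
  refine le_trans ?_ (Nat.le_of_dvd hpos hdvd)
  rw [← card_ker_inf_commutator_mul_card_commutator (centralQuotientMap_surjective φ hφ)]
  gcongr
  exact card_schurMultiplier_le hφ

end SchurMultiplier

section Arithmetic

theorem mul_two_mul_sub_le_two_mul_sum (d m : ℕ) :
    (m : ℝ) * (2 * d - (m + 3)) ≤ 2 * (∑ j ∈ Finset.range m, (d - (j + 2)) : ℕ) := by
  induction m with
  | zero => simp
  | succ m ih =>
    have h : (d : ℝ) - (m + 2) ≤ (d - (m + 2) : ℕ) := by
      rw [sub_le_iff_le_add]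
      exact_mod_cast le_tsub_add
    rw [Finset.sum_range_succ]
    push_cast at ih ⊢
    linarith

theorem le_rpow_of_sq_mul_pow_le_pow {x y : ℝ} (hy : 0 < y) {a b : ℕ}
    (h : x ^ 2 * y ^ a ≤ y ^ b) : x ≤ y ^ (((b : ℝ) - a) / 2) := by
  rw [← le_div_iff₀ (pow_pos hy a), ← Real.rpow_natCast y a, ← Real.rpow_natCast y b,
    ← Real.rpow_sub hy] at h
  refine le_of_sq_le_sq ?_ (Real.rpow_nonneg hy.le _)
  rwa [← Real.rpow_mul_natCast hy.le, Nat.cast_two, div_mul_cancel₀ _ two_ne_zero]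

end Arithmetic

end SchurMultiplierBound

theorem schur_multiplier_bound_of_class_le_d_general (p n k c d : ℕ) (hp : p.Prime)
    (G : Type) [Group G] [Finite G] [Nontrivial G] [Group.IsNilpotent G]
    (hcard : Nat.card G = p ^ n)
    (hc : Group.nilpotencyClass G = c)
    (hk : Nat.card (commutator G) = p ^ k)
    (hd : Group.rank G = d) :
    (Nat.card (schurMultiplier G) : ℝ) ≤
      (p : ℝ) ^ (((d : ℝ) - 1) * ((n : ℝ) + (k : ℝ)) / 2
        - ((c : ℝ) - 1) * (2 * (d : ℝ) - ((c : ℝ) + 2)) / 2) := by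
  have : Fact p.Prime := ⟨hp⟩
  obtain ⟨m, rfl⟩ : ∃ m, c = m + 1 := Nat.exists_eq_add_one_of_ne_zero fun hc₀ =>
    not_subsingleton G (Group.nilpotencyClass_zero_iff_subsingleton.1 (hc.trans hc₀))
  obtain ⟨r, hr⟩ := (IsPGroup.of_card hcard).index (commutator G)
  have hn : k + r = n := Nat.pow_right_injective hp.two_le <| by
    change p ^ (k + r) = p ^ n
    rw [pow_add, ← hk, ← hr, Subgroup.card_mul_index, hcard]
  have hbound := SchurMultiplierBound.sq_card_schurMultiplier_mul_le (.of_card hcard) hc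
  rw [hk, hr, hd] at hbound
  set s := ∑ j ∈ Finset.range m, (d - (j + 2))
  have hle := SchurMultiplierBound.le_rpow_of_sq_mul_pow_le_pow
    (x := Nat.card (schurMultiplier G)) (y := p) (a := 2 * k + r + 2 * s)
    (b := r * d + k * (2 * d)) (mod_cast hp.pos) (mod_cast by convert hbound using 1 <;> ring)
  refine hle.trans (Real.rpow_le_rpow_of_exponent_le (mod_cast hp.one_le) ?_)
  have hs := SchurMultiplierBound.mul_two_mul_sub_le_two_mul_sum d m
  rw [← hn]
  push_cast
  linarith

/-- Theorem 1, the case `d ≥ c`: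
`|M(G)| ≤ p ^ ((d - 1) * (n + k) / 2 - (c - 1) * (2 * d - (c + 2)) / 2)`. -/
theorem schur_multiplier_bound_of_class_le_d (p n k c d : ℕ) (hp : p.Prime)
    (G : Type) [Group G] [Finite G] [Group.IsNilpotent G]
    (hcard : Nat.card G = p ^ n)
    (hna : ∃ a b : G, a * b ≠ b * a)
    (hc : Group.nilpotencyClass G = c)
    (hk : Nat.card (commutator G) = p ^ k)
    (hd : Group.rank G = d)
    (hcd : c ≤ d) :
    (Nat.card (schurMultiplier G) : ℝ) ≤
      (p : ℝ) ^ (((d : ℝ) - 1) * ((n : ℝ) + (k : ℝ)) / 2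
        - ((c : ℝ) - 1) * (2 * (d : ℝ) - ((c : ℝ) + 2)) / 2) := by
  obtain ⟨a, b, hab⟩ := hna
  have : Nontrivial G := nontrivial_of_ne _ _ hab
  exact schur_multiplier_bound_of_class_le_d_general p n k c d hp G hcard hc hk hd
end

section
/- Let p be a prime and G a finite p-group of nilpotency class 2 such that G^p ≤ γ₂(G), with |γ₂(G)| = p^k and d(G) = d. Then p^{(1/2)d(d-1) − k} ≤ |M(G)|. -/
/-!
A bimultiplicative map `B : G × G → ℂˣ` is a 2-cocycle. If `B x y = c y / c (x * y) * c x` is a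
coboundary, then `c` restricts to a character of the derived subgroup `G'`, because `B` is trivial
as soon as one argument lies in `G'`, and this character sends `⁅x, y⁆` to `B y x / B x y`. Hence
it determines `B` up to a symmetric map, and a group of bimultiplicative maps without nontrivial
symmetric members has at most `|Hom(G', ℂˣ)| * |M(G)| ≤ |G'| * |M(G)|` elements.

By Burnside's basis theorem a finite `p`-group `G` with `d` generators maps onto `𝔽_p ^ d`. Composed
with an embedding `𝔽_p → ℂˣ`, the strictly upper triangular bilinear forms on `𝔽_p ^ d` pull back to
such a group of order `p ^ (d * (d - 1) / 2)` on `G`.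

That `M(G)` is finite, so that its cardinality is meaningful, comes from averaging over `G`: this
shows that `|G|` annihilates `H²`, and by divisibility of `ℂˣ` every class is then represented by
one of the finitely many cocycles with values in the `|G|`-th roots of unity.
-/

open Function groupCohomology
open scoped commutatorElement

universe u

section Finiteness

variable {k G : Type u} [CommRing k] [Group G] [Finite G] {A : Rep.{u} k G}

theorem card_nsmul_mem_coboundaries₂ {f : G × G → A} (hf : f ∈ cocycles₂ A) :
    Nat.card G • f ∈ coboundaries₂ A := by
  cases nonempty_fintype G
  refine ⟨fun g => ∑ j, f (g, j), funext fun ⟨g, h⟩ => ?_⟩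
  have hsum : ∑ j, f (g * h, j) + Nat.card G • f (g, h) =
      A.ρ g (∑ j, f (h, j)) + ∑ j, f (g, j) := by
    calc ∑ j, f (g * h, j) + Nat.card G • f (g, h)
        = ∑ j, (f (g * h, j) + f (g, h)) := by
          simp [Finset.sum_add_distrib]
      _ = ∑ j, (A.ρ g (f (h, j)) + f (g, h * j)) := by
          simp only [(mem_cocycles₂_iff f).1 hf g h]
      _ = A.ρ g (∑ j, f (h, j)) + ∑ j, f (g, j) := by
          rw [Finset.sum_add_distrib, map_sum]
          exact congrArg _ (Equiv.sum_comp (Equiv.mulLeft h) fun j => f (g, j))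
  rw [d₁₂_hom_apply, sub_add_eq_add_sub, ← hsum, add_sub_cancel_left]
  rfl

theorem exists_card_nsmul_eq_zero_H2π_eq (hA : Surjective fun a : A => Nat.card G • a)
    (x : H2 A) : ∃ z : cocycles₂ A, Nat.card G • z = 0 ∧ H2π A z = x := by
  induction x using H2_induction_on with | h f =>
  obtain ⟨c, hc⟩ := card_nsmul_mem_coboundaries₂ f.2
  obtain ⟨e, rfl⟩ : ∃ e : G → A, Nat.card G • e = c := hA.comp_left c
  have hde : (d₁₂ A).hom e ∈ coboundaries₂ A := ⟨e, rfl⟩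
  let δ : cocycles₂ A := ⟨(d₁₂ A).hom e, coboundaries₂_le_cocycles₂ A hde⟩
  refine ⟨f - δ, Subtype.ext ?_, ?_⟩
  · change Nat.card G • (f.1 - (d₁₂ A).hom e) = 0
    rw [nsmul_sub, ← hc, map_nsmul, sub_self]
  · rw [map_sub, (H2π_eq_zero_iff δ).2 hde, sub_zero]

theorem finite_H2 (hA : Surjective fun a : A => Nat.card G • a)
    [Finite {a : A // Nat.card G • a = 0}] : Finite (H2 A) := by
  let T := {z : cocycles₂ A // Nat.card G • z = 0}
  have : Finite T := by
    refine Finite.of_injective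
      (fun (z : T) (g : G × G) => (⟨z.1 g, congrFun (congrArg Subtype.val z.2) g⟩ :
        {a : A // Nat.card G • a = 0})) fun z w h => ?_
    exact Subtype.ext (DFunLike.ext _ _ fun g => congrArg Subtype.val (congrFun h g))
  refine Finite.of_surjective (fun z : T => H2π A z.1) fun x => ?_
  obtain ⟨z, hz, hx⟩ := exists_card_nsmul_eq_zero_H2π_eq hA x
  exact ⟨⟨z, hz⟩, hx⟩

end Finiteness

theorem finite_H2_units (G K : Type) [Group G] [Finite G] [Field K] [IsAlgClosed K] :
    Finite (H2 (Rep.trivial ℤ G (Additive Kˣ))) := by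
  have hdiv : Surjective fun a : Additive Kˣ => Nat.card G • a := by
    intro a
    obtain ⟨z, hz⟩ := IsAlgClosed.exists_pow_nat_eq (a.toMul : K) (Nat.card_pos (α := G))
    have hz0 : z ≠ 0 := by
      rintro rfl
      exact a.toMul.ne_zero (by rw [← hz, zero_pow Nat.card_pos.ne'])
    exact ⟨.ofMul (Units.mk0 z hz0), Additive.toMul.injective (Units.ext hz)⟩
  have : Finite {a : Additive Kˣ // Nat.card G • a = 0} :=
    inferInstanceAs (Finite (rootsOfUnity (Nat.card G) K))
  exact finite_H2 (A := Rep.trivial ℤ G (Additive Kˣ)) hdiv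

theorem card_monoidHom_units_le (H K : Type*) [Group H] [Finite H] [CommRing K] [IsDomain K] :
    Nat.card (H →* Kˣ) ≤ Nat.card H := by
  have hli := linearIndependent_monoidHom H K
  have : Finite (H →* K) := hli.finite
  cases nonempty_fintype H
  cases nonempty_fintype (H →* K)
  calc Nat.card (H →* Kˣ) = Fintype.card (H →* K) := by
        rw [← Nat.card_congr MonoidHom.toHomUnitsMulEquiv.toEquiv, Nat.card_eq_fintype_card]
    _ ≤ Module.finrank K (H → K) := hli.fintype_card_le_finrank
    _ = Nat.card H := by rw [Module.finrank_pi, Nat.card_eq_fintype_card]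

section Bimultiplicative

variable {G M : Type} [Group G] [CommGroup M]

/-- A bimultiplicative map `B : G × G → M` (in curried form) regarded as a 2-cocycle of `G` with
values in the trivial `G`-module `M`. Group cohomology takes additive coefficients, so `M` enters
as the `ℤ`-module `Additive M`. -/
def bimulCocycle₂ (B : G →* G →* M) : cocycles₂ (Rep.trivial ℤ G (Additive M)) :=
  ⟨fun x => .ofMul (B x.1 x.2), (mem_cocycles₂_iff _).2 fun g h j => by
    change B (g * h) j * B g h = B h j * B g (h * j)
    simp only [map_mul, MonoidHom.mul_apply, mul_comm, mul_left_comm]⟩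

/-- The homomorphism taking a bimultiplicative map `B : G × G → M` to its cohomology class in
`H²(G, M)`, whose kernel and image bound the number of such maps. The group `H²(G, M)` is written
multiplicatively to match the pointwise product of bimultiplicative maps. -/
noncomputable def bimulClass :
    (G →* G →* M) →* Multiplicative (H2 (Rep.trivial ℤ G (Additive M))) :=
  .mk' (fun B => .ofAdd (H2π _ (bimulCocycle₂ B))) fun B C => by
    rw [← ofAdd_add, ← map_add]
    rfl

theorem exists_apply_eq_div_of_bimulClass_eq_one {B : G →* G →* M} (hB : bimulClass B = 1) :
    ∃ c : G → M, ∀ x y, B x y = c y / c (x * y) * c x := by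
  obtain ⟨c, hc⟩ := (H2π_eq_zero_iff (bimulCocycle₂ B)).1 (Multiplicative.ofAdd.injective hB)
  exact ⟨fun x => (c x).toMul, fun x y => congrArg Additive.toMul (congrFun hc (x, y)).symm⟩

theorem exists_commutator_hom_of_bimulClass_eq_one {B : G →* G →* M} (hB : bimulClass B = 1) :
    ∃ χ : commutator G →* M, ∀ x y (h : ⁅x, y⁆ ∈ commutator G), χ ⟨⁅x, y⁆, h⟩ = B y x / B x y := by
  obtain ⟨c, hc⟩ := exists_apply_eq_div_of_bimulClass_eq_one hB
  have hc_mul (x) (z : commutator G) : c (x * z) = c x * c z := by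
    have hBz : B x z = 1 := Abelianization.commutator_subset_ker (B x) z.2
    rw [hc, div_mul_eq_mul_div, div_eq_one] at hBz
    rw [← hBz, mul_comm]
  refine ⟨.mk' (fun z => c z) fun z w => hc_mul z w, fun x y h => ?_⟩
  have hB_inv (u v : G) : B u⁻¹ v⁻¹ = B u v := by simp
  have hcomm : c (x⁻¹ * y⁻¹) = c (y⁻¹ * x⁻¹) * c ⁅x, y⁆ := by
    rw [← hc_mul _ ⟨⁅x, y⁆, h⟩]
    congr 1
    simp only [commutatorElement_def]
    group
  change c ⁅x, y⁆ = B y x / B x y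
  rw [← hB_inv y x, ← hB_inv x y, hc, hc, hcomm, div_mul_eq_mul_div, div_mul_eq_mul_div,
    mul_comm (c x⁻¹), div_div_div_cancel_left, mul_div_cancel_left]

theorem card_le_card_commutator_hom_mul_card_H2 {P : Type*} [Group P] (Φ : P →* G →* G →* M)
    [Finite (commutator G →* M)] [Finite (H2 (Rep.trivial ℤ G (Additive M)))]
    (hΦ : ∀ a, (∀ x y, Φ a x y = Φ a y x) → a = 1) :
    Nat.card P ≤ Nat.card (commutator G →* M) * Nat.card (H2 (Rep.trivial ℤ G (Additive M))) := by
  let ψ := bimulClass.comp Φ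
  choose χ hχ using fun a : ψ.ker => exists_commutator_hom_of_bimulClass_eq_one a.2
  have hχ_inj : Injective χ := by
    intro a b hab
    refine Subtype.ext (div_eq_one.1 (hΦ (a / b) fun x y => ?_))
    have h : ⁅x, y⁆ ∈ commutator G :=
      Subgroup.commutator_mem_commutator (Subgroup.mem_top x) (Subgroup.mem_top y)
    have hdiv : Φ a y x / Φ a x y = Φ b y x / Φ b x y := by rw [← hχ a x y h, hab, hχ b x y h]
    simpa only [map_div, MonoidHom.div_apply] using (div_eq_div_iff_div_eq_div.1 hdiv).symm
  rw [← ψ.ker.card_mul_index, Subgroup.index_ker]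
  exact Nat.mul_le_mul (Nat.card_le_card_of_injective χ hχ_inj) (Subgroup.card_le_card_group _)

end Bimultiplicative

section BilinForm

open Module
open LinearMap (BilinForm)

theorem exists_linearMap_bilinForm_isSymm_imp_eq_zero (K V : Type*) [CommRing K] [Nontrivial K]
    [AddCommGroup V] [Module K V] [Module.Free K V] [Module.Finite K V] :
    ∃ T : (Fin ((finrank K V).choose 2) → K) →ₗ[K] BilinForm K V, ∀ a, (T a).IsSymm → a = 0 := by
  let n := finrank K V
  let U : ((j : Fin n) → Fin j → K) →ₗ[K] Matrix (Fin n) (Fin n) K :=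
    { toFun a := .of fun i j => if h : i < j then a j ⟨i, h⟩ else 0
      map_add' a b := by ext i j; by_cases h : i < j <;> simp [h]
      map_smul' c a := by ext i j; by_cases h : i < j <;> simp [h] }
  have hU (a) (ha : (U a).IsSymm) : a = 0 := by
    ext j i
    have hij : (⟨i, i.2.trans j.2⟩ : Fin n) < j := i.2
    simpa [U, hij, hij.not_gt] using ha.apply j ⟨i, i.2.trans j.2⟩
  have hdim : finrank K (Fin (n.choose 2) → K) = finrank K ((j : Fin n) → Fin j → K) := by
    rw [finrank_fin_fun, finrank_pi_fintype]
    simp only [finrank_fin_fun]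
    rw [Fin.sum_univ_eq_sum_range (fun i => i), Finset.sum_range_id, Nat.choose_two_right]
  let E := LinearEquiv.ofFinrankEq _ _ hdim
  refine ⟨(Matrix.toBilin (finBasis K V)).toLinearMap ∘ₗ U ∘ₗ E.toLinearMap, fun a ha => ?_⟩
  exact E.map_eq_zero_iff.1 (hU _ ((Matrix.isSymm_toBilin_iff_isSymm _).1 ha))

variable {G V K M : Type*} [Group G] [CommRing K] [AddCommGroup V] [Module K V] [CommGroup M]

/-- The bimultiplicative map `(x, y) ↦ e (β (π x) (π y))` on `G` obtained from a bilinear form `β`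
on `V`, as a homomorphism in `β`. It transports bilinear algebra on a quotient `V` of `G` to
cocycles on `G`; the additive groups `V`, `K` and `BilinForm K V` carry `Multiplicative` so that
all maps are monoid homomorphisms. -/
def bilinFormPullback (π : G →* Multiplicative V) (e : Multiplicative K →* M) :
    Multiplicative (BilinForm K V) →* G →* G →* M :=
  .mk' (fun β => .mk'
      (fun x => e.comp ((β.toAdd (π x).toAdd).toAddMonoidHom.toMultiplicative.comp π))
      fun x y => by ext; simp)
    fun β γ => by ext; simp

theorem bilinFormPullback_apply (π : G →* Multiplicative V) (e : Multiplicative K →* M)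
    (β : Multiplicative (BilinForm K V)) (x y : G) :
    bilinFormPullback π e β x y = e (.ofAdd (β.toAdd (π x).toAdd (π y).toAdd)) :=
  rfl

theorem isSymm_of_bilinFormPullback_comm {π : G →* Multiplicative V} (hπ : Surjective π)
    {e : Multiplicative K →* M} (he : Injective e) {β : BilinForm K V}
    (h : ∀ x y, bilinFormPullback π e (.ofAdd β) x y = bilinFormPullback π e (.ofAdd β) y x) :
    β.IsSymm := by
  refine ⟨fun v w => ?_⟩
  obtain ⟨x, hx⟩ := hπ (.ofAdd v)
  obtain ⟨y, hy⟩ := hπ (.ofAdd w)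
  simpa [bilinFormPullback_apply, hx, hy] using he (h x y)

end BilinForm


section PGroup

variable {p : ℕ} [Fact p.Prime] {G : Type*} [Group G] [Finite G]

theorem exists_normal_index_eq_prime_of_ne_top (hG : IsPGroup p G) {H : Subgroup G} (hH : H ≠ ⊤) :
    ∃ N : Subgroup G, N.Normal ∧ N.index = p ∧ H ≤ N := by
  have hp : p.Prime := Fact.out
  obtain ⟨n, hn⟩ := IsPGroup.iff_card.1 hG
  obtain ⟨m, hm⟩ := IsPGroup.iff_card.1 (hG.to_subgroup H)
  have hmn : m < n := by
    rw [← Nat.pow_lt_pow_iff_right hp.one_lt, ← hm, ← hn]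
    exact H.card_le_card_group.lt_of_ne (mt H.eq_top_of_card_eq hH)
  obtain ⟨N, hN, hHN⟩ := Sylow.exists_subgroup_card_pow_prime_le p
    (hn ▸ pow_dvd_pow p n.pred_le) H hm (Nat.le_pred_of_lt hmn)
  have hindex : N.index = p := by
    refine Nat.eq_of_mul_eq_mul_left (Nat.card_pos (α := N)) ?_
    rw [N.card_mul_index, hn, hN, ← pow_succ, Nat.pred_eq_sub_one, Nat.sub_add_cancel (by omega)]
  refine ⟨N, Subgroup.normal_of_index_eq_minFac_card ?_, hindex, hHN⟩
  rw [hindex, hn, hp.pow_minFac (by omega)]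

theorem exists_surjective_zmod_hom_le_ker (hG : IsPGroup p G) {H : Subgroup G} (hH : H ≠ ⊤) :
    ∃ q : G →* Multiplicative (ZMod p), Surjective q ∧ H ≤ q.ker := by
  obtain ⟨N, hN, hindex, hHN⟩ := exists_normal_index_eq_prime_of_ne_top hG hH
  let e : G ⧸ N ≃* Multiplicative (ZMod p) :=
    mulEquivOfPrimeCardEq (p := p) (N.index_eq_card.symm.trans hindex) (by simp)
  refine ⟨e.toMonoidHom.comp (QuotientGroup.mk' N),
    e.surjective.comp (QuotientGroup.mk'_surjective N), fun x hx => ?_⟩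
  simpa [MonoidHom.mem_ker] using hHN hx

theorem exists_surjective_hom_pi_zmod_of_irredundant (hG : IsPGroup p G) {ι : Type*} [Finite ι]
    {g : ι → G} (hg : Subgroup.closure (Set.range g) = ⊤)
    (hg' : ∀ i, Subgroup.closure (g '' {i}ᶜ) ≠ ⊤) :
    ∃ π : G →* Multiplicative (ι → ZMod p), Surjective π := by
  classical
  choose q hq_surj hq_ker using fun i => exists_surjective_zmod_hom_le_ker hG (hg' i)
  have hq_off {i j : ι} (hji : j ≠ i) : q i (g j) = 1 :=
    hq_ker i (Subgroup.subset_closure (Set.mem_image_of_mem g hji))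
  have hq_diag (i : ι) : q i (g i) ≠ 1 := fun h => by
    have hker : (q i).ker = ⊤ := by
      rw [eq_top_iff, ← hg, Subgroup.closure_le]
      rintro _ ⟨j, rfl⟩
      obtain rfl | hji := eq_or_ne j i
      exacts [h, hq_off hji]
    obtain ⟨x, hx⟩ := hq_surj i (.ofAdd 1)
    have hx1 : q i x = 1 := (hker.symm ▸ Subgroup.mem_top x : x ∈ (q i).ker)
    exact one_ne_zero (Multiplicative.ofAdd.injective (hx.symm.trans hx1))
  have hsurj : Surjective (MonoidHom.pi q) := fun x => by
    refine Subgroup.pi_mem_of_mulSingle_mem (H := (MonoidHom.pi q).range) x fun i => ?_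
    obtain ⟨m, hm⟩ := mem_zpowers_of_prime_card (p := p) (by simp) (hq_diag i) (g' := x i)
    refine ⟨g i ^ m, funext fun j => ?_⟩
    obtain rfl | hji := eq_or_ne j i
    · simpa using hm
    · simp [hji, hq_off hji.symm]
  let e := (MulEquiv.piMultiplicative fun _ : ι => ZMod p).symm
  exact ⟨e.toMonoidHom.comp (.pi q), e.surjective.comp hsurj⟩

theorem exists_surjective_hom_pi_zmod (hG : IsPGroup p G) :
    ∃ π : G →* Multiplicative (Fin (Group.rank G) → ZMod p), Surjective π := by
  obtain ⟨S, hS_card, hS⟩ := Group.rank_spec G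
  let g (i : Fin (Group.rank G)) : G := (S.equivFinOfCardEq hS_card).symm i
  have hg_range : Set.range g = S := by
    change Set.range (Subtype.val ∘ (S.equivFinOfCardEq hS_card).symm) = S
    rw [EquivLike.range_comp, Subtype.range_coe]
  refine exists_surjective_hom_pi_zmod_of_irredundant hG (g := g) (by rw [hg_range, hS])
    fun i hi => ?_
  classical
  have hle := Group.rank_le (S := ({i}ᶜ : Finset _).image g) (by simpa using hi)
  have hlt := hle.trans Finset.card_image_le
  rw [Finset.card_compl, Fintype.card_fin, Finset.card_singleton] at hlt
  have := i.2
  omega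

end PGroup

theorem pow_choose_two_le_of_surjective_hom {p : ℕ} [Fact p.Prime] {G : Type} [Group G] [Finite G]
    {V : Type*} [AddCommGroup V] [Module (ZMod p) V] [Module.Finite (ZMod p) V]
    {π : G →* Multiplicative V} (hπ : Surjective π) :
    p ^ (Module.finrank (ZMod p) V).choose 2 ≤
      Nat.card (commutator G) * Nat.card (schurMultiplier G) := by
  let e : Multiplicative (ZMod p) →* ℂˣ := (ZMod.stdAddChar (N := p)).toMonoidHom.toHomUnits
  have he : Injective e := fun a b hab => ZMod.injective_stdAddChar (congrArg Units.val hab)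
  obtain ⟨T, hT⟩ := exists_linearMap_bilinForm_isSymm_imp_eq_zero (ZMod p) V
  let Φ : Multiplicative (Fin ((Module.finrank (ZMod p) V).choose 2) → ZMod p) →* G →* G →* ℂˣ :=
    (bilinFormPullback π e).comp T.toAddMonoidHom.toMultiplicative
  have hΦ (a) (ha : ∀ x y, Φ a x y = Φ a y x) : a = 1 :=
    Multiplicative.toAdd.injective (hT a.toAdd (isSymm_of_bilinFormPullback_comm hπ he ha))
  have := finite_H2_units G ℂ
  calc p ^ (Module.finrank (ZMod p) V).choose 2
      = Nat.card (Multiplicative (Fin ((Module.finrank (ZMod p) V).choose 2) → ZMod p)) := by simp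
    _ ≤ Nat.card (commutator G →* ℂˣ) * Nat.card (schurMultiplier G) :=
        card_le_card_commutator_hom_mul_card_H2 Φ hΦ
    _ ≤ Nat.card (commutator G) * Nat.card (schurMultiplier G) :=
        Nat.mul_le_mul_right _ (card_monoidHom_units_le _ ℂ)

theorem schur_multiplier_lower_bound_class_two_general (p k d : ℕ) (hp : p.Prime)
    (G : Type) [Group G] [Finite G]
    (hpG : IsPGroup p G)
    (hk : Nat.card (commutator G) = p ^ k)
    (hd : Group.rank G = d) :
    (p : ℝ) ^ ((d : ℝ) * ((d : ℝ) - 1) / 2 - (k : ℝ)) ≤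
      (Nat.card (schurMultiplier G) : ℝ) := by
  have : Fact p.Prime := ⟨hp⟩
  obtain ⟨π, hπ⟩ := exists_surjective_hom_pi_zmod hpG
  have hcard := pow_choose_two_le_of_surjective_hom (p := p) hπ
  rw [Module.finrank_fin_fun, hd, hk] at hcard
  have hp0 : (0 : ℝ) < p := mod_cast hp.pos
  rw [← Nat.cast_choose_two, Real.rpow_sub hp0, Real.rpow_natCast, Real.rpow_natCast,
    div_le_iff₀' (pow_pos hp0 k)]
  exact_mod_cast hcard

/-- Corollary 2, lower bound: for a finite `p`-group of nilpotency class 2 with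
`Gᵖ ≤ γ₂(G)`, `|γ₂(G)| = p ^ k` and `d(G) = d`, one has
`p ^ (d * (d - 1) / 2 - k) ≤ |M(G)|`. -/
theorem schur_multiplier_lower_bound_class_two (p k d : ℕ) (hp : p.Prime)
    (G : Type) [Group G] [Finite G] [Group.IsNilpotent G]
    (hpG : IsPGroup p G)
    (hc : Group.nilpotencyClass G = 2)
    (hGp : Subgroup.closure (Set.range fun x : G => x ^ p) ≤ commutator G)
    (hk : Nat.card (commutator G) = p ^ k)
    (hd : Group.rank G = d) :
    (p : ℝ) ^ ((d : ℝ) * ((d : ℝ) - 1) / 2 - (k : ℝ)) ≤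
      (Nat.card (schurMultiplier G) : ℝ) :=
  schur_multiplier_lower_bound_class_two_general p k d hp G hpG hk hd
end
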